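/- arXiv:math/0302349 — 2 statements merged into one kernel-verified Lean document; each statement's English description precedes it below -/
import Mathlib

section
/- Let m ≤ -1 and let Φ(s) = s^m/m for s > 0. Then for a nondecreasing continuous function u₀ : ℝ → [0,1] with lim_{x→-∞} u₀(x) = 0 and lim_{x→∞} u₀(x) = 1, there exists no continuous weak solution u of the Cauchy problem u_t = (Φ(u_x))_x on Q = ℝ × (0,∞) with u(x,0) = u₀(x) in the class of functions u with 0 ≤ u ≤ 1 such that for each t > 0 the profile u(·,t) is nondecreasing with ∂ₓu(·,t) > 0 where 0 < u < 1, lim_{x→-∞} u(x,t) = 0 and lim_{x→∞} u(x,t) = 1. -/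
open Set Filter Topology MeasureTheory

/-- A continuous weak solution of the Cauchy problem `u_t = (Φ(u_x))_x` on
`Q = ℝ × (0,∞)` with initial data `u₀`: `u` is continuous on `ℝ × [0,∞)`,
takes the initial data at `t = 0`, the profile `u(·,t)` is `C¹` in `x` for each `t > 0`,
and the weak formulation holds against every smooth compactly supported test function
supported in `ℝ × (0,∞)`. -/
def IsWeakSolution (Φ : ℝ → ℝ) (u₀ : ℝ → ℝ) (u : ℝ → ℝ → ℝ) : Prop :=
  ContinuousOn (fun p : ℝ × ℝ => u p.1 p.2) ((Set.univ : Set ℝ) ×ˢ Set.Ici 0) ∧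
  (∀ x : ℝ, u x 0 = u₀ x) ∧
  (∀ t : ℝ, 0 < t → ContDiff ℝ 1 fun x => u x t) ∧
  ∀ φ : ℝ → ℝ → ℝ,
    ContDiff ℝ (⊤ : ℕ∞) (fun p : ℝ × ℝ => φ p.1 p.2) →
    HasCompactSupport (fun p : ℝ × ℝ => φ p.1 p.2) →
    tsupport (fun p : ℝ × ℝ => φ p.1 p.2) ⊆ (Set.univ : Set ℝ) ×ˢ Set.Ioi 0 →
    ∫ p : ℝ × ℝ in (Set.univ : Set ℝ) ×ˢ Set.Ioi (0 : ℝ),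
      (u p.1 p.2 * deriv (fun s => φ p.1 s) p.2
        - Φ (deriv (fun y => u y p.2) p.1) * deriv (fun y => φ y p.2) p.1) = 0


/-- smooth step -/
noncomputable def stp (n s : ℝ) (r : ℝ) : ℝ := Real.smoothTransition (n * (r - s))

lemma stp_contDiff (n s : ℝ) : ContDiff ℝ (⊤ : ℕ∞) (stp n s) := by
  unfold stp
  exact Real.smoothTransition.contDiff.comp (contDiff_const.mul (contDiff_id.sub contDiff_const))

lemma stp_mono {n : ℝ} (hn : 0 < n) (s : ℝ) : Monotone (stp n s) := by
  intro a b hab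
  unfold stp
  apply Real.smoothTransition.monotone
  nlinarith

lemma stp_zero {n : ℝ} (hn : 0 < n) {s r : ℝ} (h : r ≤ s) : stp n s r = 0 := by
  unfold stp
  apply Real.smoothTransition.zero_of_nonpos
  nlinarith

lemma stp_one {n : ℝ} (hn : 0 < n) {s r : ℝ} (h : s + 1 / n ≤ r) : stp n s r = 1 := by
  unfold stp
  apply Real.smoothTransition.one_of_one_le
  have : 1 / n ≤ r - s := by linarith
  rw [div_le_iff₀ hn] at this
  linarith

lemma stp_deriv_cont (n s : ℝ) : Continuous (deriv (stp n s)) :=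
  (stp_contDiff n s).continuous_deriv (by simp)

lemma stp_deriv_nonneg {n : ℝ} (hn : 0 < n) (s r : ℝ) : 0 ≤ deriv (stp n s) r :=
  (stp_mono hn s).deriv_nonneg

lemma stp_deriv_zero {n : ℝ} (hn : 0 < n) {s r : ℝ} (h : r ∉ Icc s (s + 1 / n)) :
    deriv (stp n s) r = 0 := by
  rw [mem_Icc, not_and_or, not_le, not_le] at h
  rcases h with h | h
  · have : stp n s =ᶠ[𝓝 r] fun _ => 0 := by
      filter_upwards [Iio_mem_nhds h] with z hz using stp_zero hn (le_of_lt hz)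
    rw [this.deriv_eq]; simp
  · have : stp n s =ᶠ[𝓝 r] fun _ => 1 := by
      filter_upwards [Ioi_mem_nhds h] with z hz using stp_one hn (le_of_lt hz)
    rw [this.deriv_eq]; simp

lemma stp_deriv_supp {n : ℝ} (hn : 0 < n) (s : ℝ) : HasCompactSupport (deriv (stp n s)) :=
  HasCompactSupport.intro (K := Icc s (s + 1 / n)) isCompact_Icc
    (fun _ hx => stp_deriv_zero hn hx)

lemma stp_deriv_integral {n : ℝ} (hn : 0 < n) (s : ℝ) : ∫ r, deriv (stp n s) r = 1 := by
  have hs : s ≤ s + 1 / n := by have : 0 < 1 / n := by positivity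
                                linarith
  rw [← setIntegral_eq_integral_of_forall_compl_eq_zero (s := Icc s (s + 1 / n))
    (fun r hr => stp_deriv_zero hn hr), integral_Icc_eq_integral_Ioc,
    ← intervalIntegral.integral_of_le hs, intervalIntegral.integral_deriv_eq_sub]
  · rw [stp_one hn le_rfl, stp_zero hn le_rfl]; simp
  · intro x _; exact (stp_contDiff n s).differentiable (by simp) x
  · exact (stp_deriv_cont n s).intervalIntegrable _ _

lemma stp_tendsto {A : ℝ → ℝ} (hA : Continuous A) (s : ℝ) :
    Tendsto (fun n : ℕ => ∫ r, A r * deriv (stp (n + 1 : ℝ) s) r) atTop (𝓝 (A s)) := by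
  rw [Metric.tendsto_atTop]
  intro ε hε
  obtain ⟨δ, hδ, hd⟩ := Metric.continuousAt_iff.1 (hA.continuousAt (x := s)) (ε / 2) (by positivity)
  obtain ⟨N, hN⟩ := exists_nat_one_div_lt hδ
  refine ⟨N, fun n hn => ?_⟩
  have hn0 : (0 : ℝ) < n + 1 := by positivity
  have hle : 1 / ((n : ℝ) + 1) < δ :=
    lt_of_le_of_lt (one_div_le_one_div_of_le (by positivity) (by exact_mod_cast Nat.succ_le_succ hn)) hN
  have hi : Integrable (fun r => A r * deriv (stp (n + 1 : ℝ) s) r) :=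
    (hA.mul (stp_deriv_cont _ _)).integrable_of_hasCompactSupport ((stp_deriv_supp hn0 s).mul_left)
  have hi2 : Integrable (fun r => deriv (stp (n + 1 : ℝ) s) r) :=
    (stp_deriv_cont _ _).integrable_of_hasCompactSupport (stp_deriv_supp hn0 s)
  have h1 : (∫ r, A r * deriv (stp (n + 1 : ℝ) s) r) - A s
      = ∫ r, (A r - A s) * deriv (stp (n + 1 : ℝ) s) r := by
    simp_rw [sub_mul]
    rw [integral_sub hi (hi2.const_mul _), integral_const_mul, stp_deriv_integral hn0, mul_one]
  rw [Real.dist_eq, h1]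
  have h2 : ‖∫ r, (A r - A s) * deriv (stp (n + 1 : ℝ) s) r‖
      ≤ ∫ r, (ε / 2) * deriv (stp (n + 1 : ℝ) s) r := by
    apply norm_integral_le_of_norm_le (hi2.const_mul _)
    filter_upwards with r
    by_cases hr : r ∈ Icc s (s + 1 / ((n : ℝ) + 1))
    · rw [norm_mul, Real.norm_of_nonneg (stp_deriv_nonneg hn0 s r)]
      apply mul_le_mul_of_nonneg_right _ (stp_deriv_nonneg hn0 s r)
      have := @hd r (by rw [Real.dist_eq, abs_of_nonneg (by linarith [hr.1])]; linarith [hr.2])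
      rw [Real.dist_eq] at this
      exact this.le
    · rw [stp_deriv_zero hn0 hr]; simp
  rw [integral_const_mul, stp_deriv_integral hn0] at h2
  rw [Real.norm_eq_abs] at h2
  linarith

lemma dbr {a b : ℝ} {A B : ℝ → ℝ} (hA : Continuous A) (hB : AEStronglyMeasurable B volume)
    {M : ℝ} (hM : ∀ t, |B t| ≤ M)
    (h : ∀ f : ℝ → ℝ, ContDiff ℝ (⊤ : ℕ∞) f → HasCompactSupport f → tsupport f ⊆ Ioo a b →
      ∫ r, A r * deriv f r = ∫ r, B r * f r)
    {s t : ℝ} (has : a < s) (hst : s ≤ t) (htb : t < b) :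
    A t - A s = - ∫ r in s..t, B r := by
  set f : ℕ → ℝ → ℝ := fun n r => stp (n + 1 : ℝ) s r - stp (n + 1 : ℝ) t r with hf
  obtain ⟨N, hN⟩ := exists_nat_one_div_lt (sub_pos.2 htb)
  have hsub : ∀ n ≥ N, ∀ r, r ∉ Icc s (t + 1 / (N + 1 : ℝ)) → f n r = 0 := by
    intro n hn r hr
    have hn0 : (0 : ℝ) < n + 1 := by positivity
    have hle : 1 / ((n : ℝ) + 1) ≤ 1 / (N + 1 : ℝ) :=
      one_div_le_one_div_of_le (by positivity) (by exact_mod_cast Nat.succ_le_succ hn)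
    rw [mem_Icc, not_and_or, not_le, not_le] at hr
    rcases hr with hr | hr
    · simp only [hf]; rw [stp_zero hn0 hr.le, stp_zero hn0 (hr.le.trans hst)]; simp
    · simp only [hf]; rw [stp_one hn0 (by linarith), stp_one hn0 (by linarith)]; simp
  have hcs : ∀ n ≥ N, HasCompactSupport (f n) := fun n hn =>
    HasCompactSupport.intro isCompact_Icc (fun r hr => hsub n hn r hr)
  have hd : ∀ n r, deriv (f n) r = deriv (stp (n + 1 : ℝ) s) r - deriv (stp (n + 1 : ℝ) t) r := by
    intro n r
    exact deriv_sub ((stp_contDiff _ _).differentiable (by simp) r)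
      ((stp_contDiff _ _).differentiable (by simp) r)
  have key : ∀ n ≥ N, ∫ r, A r * deriv (f n) r = ∫ r, B r * f n r := by
    intro n hn
    apply h _ ((stp_contDiff _ _).sub (stp_contDiff _ _)) (hcs n hn)
    have : tsupport (f n) ⊆ Icc s (t + 1 / (N + 1 : ℝ)) := by
      apply closure_minimal _ isClosed_Icc
      intro r hr
      by_contra hc
      exact hr (hsub n hn r hc)
    refine this.trans (fun r hr => ⟨lt_of_lt_of_le has hr.1, ?_⟩)
    have := hr.2
    linarith
  have l1 : Tendsto (fun n => ∫ r, A r * deriv (f n) r) atTop (𝓝 (A s - A t)) := by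
    refine ((stp_tendsto hA s).sub (stp_tendsto hA t)).congr (fun n => ?_)
    have hn0 : (0 : ℝ) < n + 1 := by positivity
    have hi : ∀ s, Integrable (fun r => A r * deriv (stp (n + 1 : ℝ) s) r) := fun s =>
      (hA.mul (stp_deriv_cont _ _)).integrable_of_hasCompactSupport ((stp_deriv_supp hn0 s).mul_left)
    rw [← integral_sub (hi s) (hi t)]
    simp_rw [hd, mul_sub]
  have l2 : Tendsto (fun n => ∫ r, B r * f n r) atTop (𝓝 (∫ r, B r * (Ioc s t).indicator 1 r)) := by
    have hM0 : 0 ≤ M := (abs_nonneg _).trans (hM 0)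
    apply tendsto_integral_filter_of_dominated_convergence
      ((Icc s (t + 1 / (N + 1 : ℝ))).indicator (fun _ => M))
    · exact Eventually.of_forall fun n =>
        hB.mul (((stp_contDiff _ _).continuous.sub (stp_contDiff _ _).continuous).aestronglyMeasurable)
    · filter_upwards [eventually_ge_atTop N] with n hn
      filter_upwards with r
      by_cases hr : r ∈ Icc s (t + 1 / (N + 1 : ℝ))
      · rw [indicator_of_mem hr, norm_mul]
        have h1 : ‖B r‖ ≤ M := hM r
        have h2 : ‖f n r‖ ≤ 1 := by
          simp only [hf, stp, Real.norm_eq_abs]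
          rw [abs_le]
          constructor
          · linarith [Real.smoothTransition.nonneg ((n + 1 : ℝ) * (r - s)),
              Real.smoothTransition.le_one ((n + 1 : ℝ) * (r - t))]
          · linarith [Real.smoothTransition.nonneg ((n + 1 : ℝ) * (r - t)),
              Real.smoothTransition.le_one ((n + 1 : ℝ) * (r - s))]
        calc ‖B r‖ * ‖f n r‖ ≤ M * 1 := mul_le_mul h1 h2 (norm_nonneg _) hM0
          _ = M := mul_one _
      · rw [indicator_of_notMem hr, hsub n hn r hr]; simp
    · rw [integrable_indicator_iff measurableSet_Icc]
      exact integrableOn_const (by simp)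
    · filter_upwards with r
      apply Tendsto.const_mul
      have hlim : ∀ s, Tendsto (fun n : ℕ => stp (n + 1 : ℝ) s r) atTop (𝓝 ((Ioi s).indicator 1 r)) := by
        intro s
        by_cases hr : s < r
        · rw [indicator_of_mem (show r ∈ Ioi s from hr)]
          obtain ⟨K, hK⟩ := exists_nat_one_div_lt (sub_pos.2 hr)
          apply tendsto_const_nhds.congr'
          filter_upwards [eventually_ge_atTop K] with n hn
          have hle : 1 / ((n : ℝ) + 1) ≤ 1 / (K + 1 : ℝ) :=
            one_div_le_one_div_of_le (by positivity) (by exact_mod_cast Nat.succ_le_succ hn)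
          rw [stp_one (by positivity) (by linarith)]; rfl
        · rw [indicator_of_notMem (show r ∉ Ioi s from hr)]
          apply tendsto_const_nhds.congr
          intro n
          rw [stp_zero (by positivity) (not_lt.1 hr)]
      have := (hlim s).sub (hlim t)
      convert this using 2
      by_cases h1 : s < r
      · by_cases h2 : t < r
        · simp [h1, h2]
        · simp [h1, h2, not_lt.1 h2]
      · have h2 : ¬ t < r := fun h => h1 (lt_of_le_of_lt hst h)
        simp [h1, h2]
  have l3 := tendsto_nhds_unique (l1.congr' (by
    filter_upwards [eventually_ge_atTop N] with n hn using key n hn)) l2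
  rw [intervalIntegral.integral_of_le hst, ← integral_indicator measurableSet_Ioc]
  have : ∀ r, B r * (Ioc s t).indicator (1 : ℝ → ℝ) r = (Ioc s t).indicator B r := by
    intro r
    by_cases hr : r ∈ Ioc s t <;> simp [hr]
  simp_rw [this] at l3
  linarith


noncomputable def TT (m : ℝ) (u : ℝ → ℝ → ℝ) (x t : ℝ) : ℝ := (deriv (fun y => u y t) x) ^ m / m

structure Sol (m : ℝ) (u : ℝ → ℝ → ℝ) : Prop where
  hm : m ≤ -1
  cont : Continuous (fun p : ℝ × ℝ => u p.1 p.2)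
  mono : ∀ t, 0 < t → Monotone (fun x => u x t)
  c1 : ∀ t, 0 < t → ContDiff ℝ 1 (fun x => u x t)
  bd0 : ∀ x t, 0 ≤ u x t
  bd1 : ∀ x t, u x t ≤ 1
  pos : ∀ t, 0 < t → ∀ x, 0 < u x t → u x t < 1 → 0 < deriv (fun y => u y t) x
  weak : ∀ φ : ℝ → ℝ → ℝ,
    ContDiff ℝ (⊤ : ℕ∞) (fun p : ℝ × ℝ => φ p.1 p.2) →
    HasCompactSupport (fun p : ℝ × ℝ => φ p.1 p.2) →
    tsupport (fun p : ℝ × ℝ => φ p.1 p.2) ⊆ {p | 0 < p.2 ∧ 0 < u p.1 p.2 ∧ u p.1 p.2 < 1} →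
    ∫ p : ℝ × ℝ, (u p.1 p.2 * deriv (fun s => φ p.1 s) p.2
        - TT m u p.1 p.2 * deriv (fun y => φ y p.2) p.1) = 0

structure GR (u : ℝ → ℝ → ℝ) (α β a b c : ℝ) : Prop where
  hαβ : α ≤ β
  hab : a ≤ b
  c0 : 0 < c
  a0 : 0 < a
  u0 : ∀ x ∈ Icc α β, ∀ t ∈ Icc a b, 0 < u x t
  u1 : ∀ x ∈ Icc α β, ∀ t ∈ Icc a b, u x t < 1
  ux : ∀ x ∈ Icc α β, ∀ t ∈ Icc a b, c ≤ deriv (fun y => u y t) x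

noncomputable def cl (a b x : ℝ) : ℝ := max a (min b x)

lemma cl_mem {a b : ℝ} (h : a ≤ b) (x : ℝ) : cl a b x ∈ Icc a b :=
  ⟨le_max_left _ _, max_le h (min_le_left _ _)⟩

lemma cl_eq {a b x : ℝ} (h : x ∈ Icc a b) : cl a b x = x := by
  unfold cl; rw [min_eq_right h.2, max_eq_right h.1]

lemma cl_cont (a b : ℝ) : Continuous (cl a b) := by
  unfold cl; fun_prop

/-- clamped flux -/
noncomputable def TH (m : ℝ) (u : ℝ → ℝ → ℝ) (α β a b : ℝ) (x t : ℝ) : ℝ :=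
  TT m u (cl α β x) (cl a b t)

lemma ux_meas {m : ℝ} {u : ℝ → ℝ → ℝ} (S : Sol m u) :
    Measurable (fun p : ℝ × ℝ => deriv (fun y => u y p.2) p.1) := by
  have h : Continuous (Function.uncurry (fun (t : ℝ) (x : ℝ) => u x t)) :=
    S.cont.comp continuous_swap
  exact (measurable_deriv_with_param h).comp measurable_swap

lemma TT_meas {m : ℝ} {u : ℝ → ℝ → ℝ} (S : Sol m u) :
    Measurable (fun p : ℝ × ℝ => TT m u p.1 p.2) := by
  unfold TT
  exact ((ux_meas S).pow_const m).div_const m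

lemma TH_meas {m : ℝ} {u : ℝ → ℝ → ℝ} (S : Sol m u) (α β a b : ℝ) :
    Measurable (fun p : ℝ × ℝ => TH m u α β a b p.1 p.2) := by
  have : Measurable (fun p : ℝ × ℝ => (cl α β p.1, cl a b p.2)) :=
    ((cl_cont _ _).measurable.comp measurable_fst).prodMk
      ((cl_cont _ _).measurable.comp measurable_snd)
  exact (TT_meas S).comp this

lemma ux_cont {m : ℝ} {u : ℝ → ℝ → ℝ} (S : Sol m u) {t : ℝ} (ht : 0 < t) :
    Continuous (deriv (fun y => u y t)) := (S.c1 t ht).continuous_deriv (by simp)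

lemma u_hasDeriv {m : ℝ} {u : ℝ → ℝ → ℝ} (S : Sol m u) {t : ℝ} (ht : 0 < t) (x : ℝ) :
    HasDerivAt (fun y => u y t) (deriv (fun y => u y t) x) x :=
  ((S.c1 t ht).differentiable (by simp) x).hasDerivAt

lemma TH_cont {m : ℝ} {u : ℝ → ℝ → ℝ} (S : Sol m u) {α β a b c : ℝ} (G : GR u α β a b c) (t : ℝ) :
    Continuous (fun x => TH m u α β a b x t) := by
  unfold TH TT
  have ht := cl_mem G.hab t
  apply Continuous.div_const
  apply Continuous.rpow_const ((ux_cont S (lt_of_lt_of_le G.a0 ht.1)).comp (cl_cont α β))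
  intro x
  left
  exact (lt_of_lt_of_le G.c0 (G.ux _ (cl_mem G.hαβ x) _ ht)).ne'

lemma TH_bd {m : ℝ} {u : ℝ → ℝ → ℝ} (S : Sol m u) {α β a b c : ℝ} (G : GR u α β a b c) (x t : ℝ) :
    |TH m u α β a b x t| ≤ c ^ m / |m| := by
  unfold TH TT
  have h := G.ux _ (cl_mem G.hαβ x) _ (cl_mem G.hab t)
  have h0 := lt_of_lt_of_le G.c0 h
  rw [abs_div, abs_of_nonneg (Real.rpow_nonneg h0.le m)]
  apply div_le_div_of_nonneg_right _ (abs_nonneg _)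
  exact Real.rpow_le_rpow_of_nonpos G.c0 h (by linarith [S.hm])

lemma TH_slice_int {m : ℝ} {u : ℝ → ℝ → ℝ} (S : Sol m u) {α β a b c : ℝ} (G : GR u α β a b c)
    (x s t : ℝ) : IntervalIntegrable (fun τ => TH m u α β a b x τ) volume s t := by
  apply (intervalIntegrable_const (c := c ^ m / |m|)).mono_fun
  · exact ((TH_meas S α β a b).comp (measurable_const.prodMk measurable_id)).aestronglyMeasurable
  · filter_upwards with τ
    rw [Real.norm_eq_abs]
    exact (TH_bd S G x τ).trans (le_abs_self _)

lemma deriv_bd_supp {χ : ℝ → ℝ} (h : ContDiff ℝ (⊤ : ℕ∞) χ) (hc : HasCompactSupport χ) :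
    Continuous (deriv χ) ∧ HasCompactSupport (deriv χ) :=
  ⟨h.continuous_deriv (by simp), hc.deriv⟩

lemma star_t {m : ℝ} {u : ℝ → ℝ → ℝ} (S : Sol m u) {α β a b c : ℝ} (G : GR u α β a b c)
    {χ : ℝ → ℝ} (hχ : ContDiff ℝ (⊤ : ℕ∞) χ) (hc : HasCompactSupport χ)
    (hs : tsupport χ ⊆ Ioo α β) {t1 t2 : ℝ} (h1 : a < t1) (h12 : t1 ≤ t2) (h2 : t2 < b) :
    (∫ x, u x t2 * χ x) - (∫ x, u x t1 * χ x)
      = - ∫ t in t1..t2, ∫ x, TH m u α β a b x t * deriv χ x := by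
  obtain ⟨hd, hdc⟩ := deriv_bd_supp hχ hc
  set M := c ^ m / |m| with hMdef
  have hM0 : 0 ≤ M := (abs_nonneg _).trans (TH_bd S G 0 0)
  have hiχ : Integrable (deriv χ) := hd.integrable_of_hasCompactSupport hdc
  have hiχ0 : Integrable χ := hχ.continuous.integrable_of_hasCompactSupport hc
  have hA : Continuous (fun t => ∫ x, u x t * χ x) := by
    have : ∀ t, (∫ x, u x t * χ x) = ∫ x in tsupport χ, u x t * χ x := by
      intro t
      rw [setIntegral_eq_integral_of_forall_compl_eq_zero]
      intro x hx
      rw [image_eq_zero_of_notMem_tsupport hx, mul_zero]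
    simp_rw [this]
    apply continuous_parametric_integral_of_continuous _ hc
    exact (S.cont.comp continuous_swap).mul (hχ.continuous.comp continuous_snd)
  have hBm : StronglyMeasurable (fun t => ∫ x, TH m u α β a b x t * deriv χ x) := by
    apply StronglyMeasurable.integral_prod_right'
      (f := fun p : ℝ × ℝ => TH m u α β a b p.2 p.1 * deriv χ p.2)
    apply Measurable.stronglyMeasurable
    exact ((TH_meas S α β a b).comp measurable_swap).mul (hd.measurable.comp measurable_snd)
  refine dbr (A := fun t => ∫ x, u x t * χ x) (a := a) (b := b)
    (M := ∫ x, M * |deriv χ x|) hA hBm.aestronglyMeasurable ?_ ?_ h1 h12 h2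
  · intro t
    rw [← Real.norm_eq_abs]
    apply norm_integral_le_of_norm_le (hiχ.abs.const_mul M)
    filter_upwards with x
    rw [norm_mul, Real.norm_eq_abs, Real.norm_eq_abs]
    exact mul_le_mul_of_nonneg_right (TH_bd S G x t) (abs_nonneg _)
  · intro f hf hfc hfs
    obtain ⟨hfd, hfdc⟩ := deriv_bd_supp hf hfc
    have hif : Integrable f := hf.continuous.integrable_of_hasCompactSupport hfc
    have hifd : Integrable (deriv f) := hfd.integrable_of_hasCompactSupport hfdc
    have hsupp : ∀ p : ℝ × ℝ, p ∉ tsupport χ ×ˢ tsupport f → χ p.1 * f p.2 = 0 := by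
      intro p hp
      rw [mem_prod, not_and_or] at hp
      rcases hp with hp | hp
      · rw [image_eq_zero_of_notMem_tsupport hp, zero_mul]
      · rw [image_eq_zero_of_notMem_tsupport hp, mul_zero]
    have hts : tsupport (fun p : ℝ × ℝ => χ p.1 * f p.2) ⊆ tsupport χ ×ˢ tsupport f := by
      apply closure_minimal _ ((isClosed_tsupport _).prod (isClosed_tsupport _))
      intro p hp
      by_contra hcon
      exact hp (hsupp p hcon)
    have hw := S.weak (fun x t => χ x * f t)
      ((hχ.comp contDiff_fst).mul (hf.comp contDiff_snd))
      (HasCompactSupport.intro (hc.prod hfc) hsupp)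
      (by
        refine hts.trans (fun p hp => ?_)
        have hx := Ioo_subset_Icc_self (hs hp.1)
        have ht := Ioo_subset_Icc_self (hfs hp.2)
        exact ⟨lt_of_lt_of_le G.a0 ht.1, G.u0 _ hx _ ht, G.u1 _ hx _ ht⟩)
    have e : ∀ p : ℝ × ℝ, (u p.1 p.2 * deriv (fun s => χ p.1 * f s) p.2
        - TT m u p.1 p.2 * deriv (fun y => χ y * f p.2) p.1)
        = (u p.1 p.2 * (χ p.1 * deriv f p.2))
          - TH m u α β a b p.1 p.2 * (deriv χ p.1 * f p.2) := by
      intro p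
      rw [deriv_const_mul _ (hf.differentiable (by simp) _),
        deriv_mul_const (hχ.differentiable (by simp) _)]
      congr 1
      by_cases hx : p.1 ∈ Icc α β
      · by_cases ht : p.2 ∈ Icc a b
        · unfold TH; rw [cl_eq hx, cl_eq ht]
        · have : f p.2 = 0 := image_eq_zero_of_notMem_tsupport
            (fun h => ht (Ioo_subset_Icc_self (hfs h)))
          rw [this]; simp
      · have : deriv χ p.1 = 0 := by
          apply image_eq_zero_of_notMem_tsupport
          intro h
          exact hx (Ioo_subset_Icc_self (hs (tsupport_deriv_subset h)))
        rw [this]; simp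
    simp_rw [e] at hw
    have i1 : Integrable (fun p : ℝ × ℝ => u p.1 p.2 * (χ p.1 * deriv f p.2)) := by
      apply (hiχ0.mul_prod hifd).bdd_mul (c := 1)
      · exact S.cont.aestronglyMeasurable
      · filter_upwards with p
        rw [Real.norm_eq_abs, abs_le]
        constructor <;> linarith [S.bd0 p.1 p.2, S.bd1 p.1 p.2]
    have i2 : Integrable (fun p : ℝ × ℝ => TH m u α β a b p.1 p.2 * (deriv χ p.1 * f p.2)) := by
      apply (hiχ.mul_prod hif).bdd_mul (c := M)
      · exact (TH_meas S α β a b).aestronglyMeasurable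
      · filter_upwards with p
        rw [Real.norm_eq_abs]; exact TH_bd S G _ _
    rw [integral_sub i1 i2, Measure.volume_eq_prod, integral_prod_symm _ i1,
      integral_prod_symm _ i2, sub_eq_zero] at hw
    have e1 : ∀ t, (∫ x, u x t * χ x) * deriv f t = ∫ x, u x t * (χ x * deriv f t) := by
      intro t; rw [← integral_mul_const]; simp_rw [mul_assoc]
    have e2 : ∀ t, (∫ x, TH m u α β a b x t * deriv χ x) * f t
        = ∫ x, TH m u α β a b x t * (deriv χ x * f t) := by
      intro t; rw [← integral_mul_const]; simp_rw [mul_assoc]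
    simp_rw [e1, e2]
    exact hw

lemma TH_int_cont {m : ℝ} {u : ℝ → ℝ → ℝ} (S : Sol m u) {α β a b c : ℝ} (G : GR u α β a b c)
    (s t : ℝ) : Continuous (fun x => ∫ τ in s..t, TH m u α β a b x τ) := by
  apply intervalIntegral.continuous_of_dominated_interval (bound := fun _ => c ^ m / |m|)
  · intro x
    exact ((TH_meas S α β a b).comp (measurable_const.prodMk measurable_id)).aestronglyMeasurable
  · intro x
    filter_upwards with τ _
    exact TH_bd S G x τ
  · exact intervalIntegrable_const
  · filter_upwards with τ _
    exact TH_cont S G τ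

lemma star {m : ℝ} {u : ℝ → ℝ → ℝ} (S : Sol m u) {α β a b c : ℝ} (G : GR u α β a b c)
    {t1 t2 : ℝ} (h1 : a < t1) (h12 : t1 ≤ t2) (h2 : t2 < b)
    {x y : ℝ} (hx : α < x) (hxy : x ≤ y) (hy : y < β) :
    (∫ τ in t1..t2, TH m u α β a b y τ) - (∫ τ in t1..t2, TH m u α β a b x τ)
      = ∫ z in x..y, (u z t2 - u z t1) := by
  have cu : ∀ t, Continuous (fun x => u x t) := fun t =>
    S.cont.comp (continuous_id.prodMk continuous_const)
  have := dbr (A := fun x => ∫ τ in t1..t2, TH m u α β a b x τ)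
    (B := fun z => -(u z t2 - u z t1)) (a := α) (b := β) (M := 1) (TH_int_cont S G t1 t2)
    (((cu t2).sub (cu t1)).neg.aestronglyMeasurable) ?_ ?_ hx hxy hy
  · rw [this, intervalIntegral.integral_neg, neg_neg]
  · intro z
    rw [abs_le]
    constructor <;> linarith [S.bd0 z t1, S.bd1 z t1, S.bd0 z t2, S.bd1 z t2]
  · intro χ hχ hc hs
    have h := star_t S G hχ hc hs h1 h12 h2
    obtain ⟨hd, hdc⟩ := deriv_bd_supp hχ hc
    have hi : ∀ t, Integrable (fun x => u x t * χ x) := fun t =>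
      ((cu t).mul hχ.continuous).integrable_of_hasCompactSupport hc.mul_left
    have hiχ : Integrable (deriv χ) := hd.integrable_of_hasCompactSupport hdc
    have e1 : ∫ z, -(u z t2 - u z t1) * χ z = -((∫ x, u x t2 * χ x) - (∫ x, u x t1 * χ x)) := by
      rw [← integral_sub (hi t2) (hi t1), ← integral_neg]
      congr 1; ext z; ring
    rw [e1, h, neg_neg, intervalIntegral.integral_of_le h12]
    rw [integral_integral_swap]
    · congr 1; ext x
      rw [intervalIntegral.integral_of_le h12, integral_mul_const]
    · have i0 : Integrable (fun p : ℝ × ℝ => (1 : ℝ) * deriv χ p.2)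
          ((volume.restrict (Ioc t1 t2)).prod volume) :=
        Integrable.mul_prod (integrable_const (1 : ℝ)) hiχ
      simp_rw [one_mul] at i0
      apply i0.bdd_mul (c := c ^ m / |m|)
      · exact ((TH_meas S α β a b).comp measurable_swap).aestronglyMeasurable
      · filter_upwards with p
        rw [Real.norm_eq_abs]; exact TH_bd S G _ _

lemma star_deriv {m : ℝ} {u : ℝ → ℝ → ℝ} (S : Sol m u) {α β a b c : ℝ} (G : GR u α β a b c)
    {t1 t2 : ℝ} (h1 : a < t1) (h12 : t1 ≤ t2) (h2 : t2 < b)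
    {x : ℝ} (hx : α < x) (hy : x < β) :
    HasDerivAt (fun x => ∫ τ in t1..t2, TH m u α β a b x τ) (u x t2 - u x t1) x := by
  have cu : ∀ t, Continuous (fun x => u x t) := fun t =>
    S.cont.comp (continuous_id.prodMk continuous_const)
  obtain ⟨x0, hx0, hx0x⟩ := exists_between hx
  have hD : HasDerivAt (fun y => (∫ z in x0..y, (u z t2 - u z t1))
      + ∫ τ in t1..t2, TH m u α β a b x0 τ) (u x t2 - u x t1) x := by
    apply HasDerivAt.add_const
    exact intervalIntegral.integral_hasDerivAt_right
      (((cu t2).sub (cu t1)).intervalIntegrable _ _)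
      (((cu t2).sub (cu t1)).stronglyMeasurableAtFilter _ _)
      ((cu t2).sub (cu t1)).continuousAt
  apply hD.congr_of_eventuallyEq
  filter_upwards [Ioo_mem_nhds hx0x hy] with y hy
  rw [← star S G h1 h12 h2 hx0 hy.1.le hy.2]
  ring


noncomputable def FB (m : ℝ) (u : ℝ → ℝ → ℝ) (α β a b h : ℝ) (x t : ℝ) : ℝ :=
  (∫ τ in (t - h)..t, TH m u α β a b x τ) / h

lemma FB_meas {m : ℝ} {u : ℝ → ℝ → ℝ} (S : Sol m u) (α β a b : ℝ) {h : ℝ} (hh : 0 < h) :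
    Measurable (fun p : ℝ × ℝ => FB m u α β a b h p.1 p.2) := by
  unfold FB
  apply Measurable.div_const
  have e : ∀ p : ℝ × ℝ, (∫ τ in (p.2 - h)..p.2, TH m u α β a b p.1 τ)
      = ∫ r in Ioc 0 h, TH m u α β a b p.1 (p.2 - h + r) := by
    intro p
    rw [← intervalIntegral.integral_of_le hh.le,
      intervalIntegral.integral_comp_add_left (fun r => TH m u α β a b p.1 r) (p.2 - h)]
    simp
  simp_rw [e]
  apply StronglyMeasurable.measurable
  apply StronglyMeasurable.integral_prod_right'
      (f := fun q : (ℝ × ℝ) × ℝ => TH m u α β a b q.1.1 (q.1.2 - h + q.2))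
  apply Measurable.stronglyMeasurable
  have hq : Measurable fun q : (ℝ × ℝ) × ℝ => (q.1.1, q.1.2 - h + q.2) := by fun_prop
  have := (TH_meas S α β a b).comp hq
  simpa only [Function.comp_def] using this

lemma FB_bd {m : ℝ} {u : ℝ → ℝ → ℝ} (S : Sol m u) {α β a b c : ℝ} (G : GR u α β a b c)
    {h : ℝ} (hh : 0 < h) (x t : ℝ) : |FB m u α β a b h x t| ≤ c ^ m / |m| := by
  unfold FB
  rw [abs_div, abs_of_pos hh, div_le_iff₀ hh]
  have := intervalIntegral.norm_integral_le_of_norm_le_const (a := t - h) (b := t)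
    (f := fun τ => TH m u α β a b x τ) (C := c ^ m / |m|) (fun τ _ => TH_bd S G x τ)
  rw [sub_sub_cancel, abs_of_pos hh] at this
  exact this

lemma FB_tendsto {m : ℝ} {u : ℝ → ℝ → ℝ} (S : Sol m u) {α β a b c : ℝ} (G : GR u α β a b c)
    {h : ℕ → ℝ} (hh : ∀ n, 0 < h n) (hl : Tendsto h atTop (𝓝 0)) (x : ℝ) :
    ∀ᵐ t, Tendsto (fun n => FB m u α β a b (h n) x t) atTop (𝓝 (TH m u α β a b x t)) := by
  have hloc : LocallyIntegrable (fun τ => TH m u α β a b x τ) volume := by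
    apply (locallyIntegrable_const (c ^ m / |m|)).mono
    · exact ((TH_meas S α β a b).comp (measurable_const.prodMk measurable_id)).aestronglyMeasurable
    · filter_upwards with τ
      rw [Real.norm_eq_abs]
      exact (TH_bd S G x τ).trans (le_abs_self _)
  filter_upwards [LocallyIntegrable.ae_hasDerivAt_integral hloc] with t ht
  have h1 := (ht 0).tendsto_slope_zero
  have h2 : Tendsto (fun n => - h n) atTop (𝓝[≠] 0) := by
    apply tendsto_nhdsWithin_iff.2
    refine ⟨by simpa using hl.neg, Eventually.of_forall fun n => ?_⟩
    simp [(hh n).ne']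
  refine (h1.comp h2).congr (fun n => ?_)
  have := intervalIntegral.integral_interval_sub_left (TH_slice_int S G x 0 (t - h n))
    (TH_slice_int S G x 0 t)
  simp only [Function.comp, smul_eq_mul, FB, ← sub_eq_add_neg]
  rw [this, intervalIntegral.integral_symm]
  have := (hh n).ne'
  field_simp

lemma ux_int {m : ℝ} {u : ℝ → ℝ → ℝ} (S : Sol m u) {α' β' t1 t2 : ℝ} (hαβ : α' ≤ β')
    (h1 : 0 < t1) :
    Integrable (fun p : ℝ × ℝ => deriv (fun y => u y p.2) p.1)
      ((volume.restrict (Icc α' β')).prod (volume.restrict (Icc t1 t2))) := by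
  rw [integrable_prod_iff' (ux_meas S).aestronglyMeasurable]
  have hpos : ∀ᵐ t ∂(volume.restrict (Icc t1 t2)), 0 < t := by
    filter_upwards [ae_restrict_mem measurableSet_Icc] with t ht using lt_of_lt_of_le h1 ht.1
  constructor
  · filter_upwards [hpos] with t ht
    exact (ux_cont S ht).continuousOn.integrableOn_compact isCompact_Icc
  · have : Integrable (fun t => u β' t - u α' t) (volume.restrict (Icc t1 t2)) := by
      have : Continuous (fun t => u β' t - u α' t) :=
        (S.cont.comp (continuous_const.prodMk continuous_id)).sub
          (S.cont.comp (continuous_const.prodMk continuous_id))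
      exact this.continuousOn.integrableOn_compact isCompact_Icc
    apply this.congr
    filter_upwards [hpos] with t ht
    have e : ∀ x, ‖deriv (fun y => u y t) x‖ = deriv (fun y => u y t) x := by
      intro x
      rw [Real.norm_of_nonneg (S.mono t ht).deriv_nonneg]
    simp_rw [e]
    rw [integral_Icc_eq_integral_Ioc, ← intervalIntegral.integral_of_le hαβ,
      intervalIntegral.integral_deriv_eq_sub (fun x _ => (u_hasDeriv S ht x).differentiableAt)
      ((ux_cont S ht).intervalIntegrable _ _)]

lemma lemL {m : ℝ} {u : ℝ → ℝ → ℝ} (S : Sol m u) {α β a b c : ℝ} (G : GR u α β a b c)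
    {α' β' t1 t2 : ℝ} (hα : α < α') (hαβ : α' ≤ β') (hβ : β' < β)
    (h12 : t1 ≤ t2) (h2b : t2 < b)
    {h : ℕ → ℝ} (hh : ∀ n, 0 < h n) (hha : ∀ n, h n < t1 - a) (hl : Tendsto h atTop (𝓝 0))
    {g g' : ℕ → ℝ → ℝ → ℝ} {gl : ℝ → ℝ → ℝ} {C : ℝ}
    (hg : ∀ n, ∀ t ∈ Icc t1 t2, ∀ x ∈ Icc α' β', HasDerivAt (fun y => g n y t) (g' n x t) x)
    (hgc : ∀ n, ∀ t ∈ Icc t1 t2, ContinuousOn (fun x => g' n x t) (Icc α' β'))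
    (hgm : ∀ n, Measurable (fun p : ℝ × ℝ => g' n p.1 p.2))
    (hgb : ∀ n, ∀ t ∈ Icc t1 t2, ∀ x ∈ Icc α' β',
      |g' n x t| ≤ C * (1 + deriv (fun y => u y t) x))
    (hgl : ∀ t ∈ Icc t1 t2, ∀ x ∈ Icc α' β', Tendsto (fun n => g' n x t) atTop (𝓝 (gl x t)))
    (g0 : ∀ n, ∀ t ∈ Icc t1 t2, g n α' t = 0) (g1 : ∀ n, ∀ t ∈ Icc t1 t2, g n β' t = 0) :
    Tendsto (fun n => ∫ t in t1..t2, ∫ x in α'..β', g n x t * ((u x t - u x (t - h n)) / h n))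
      atTop (𝓝 (- ∫ p, gl p.1 p.2 * TH m u α β a b p.1 p.2
        ∂((volume.restrict (Icc α' β')).prod (volume.restrict (Icc t1 t2))))) ∧
    ∀ n, IntervalIntegrable
      (fun t => ∫ x in α'..β', g n x t * ((u x t - u x (t - h n)) / h n)) volume t1 t2 := by
  have h1a : a < t1 := by linarith [hh 0, hha 0]
  have h1 : 0 < t1 := G.a0.trans h1a
  have cu : ∀ t, Continuous (fun x => u x t) := fun t =>
    S.cont.comp (continuous_id.prodMk continuous_const)
  set μ := ((volume.restrict (Icc α' β')).prod (volume.restrict (Icc t1 t2))) with hμ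
  have hmem : ∀ᵐ p ∂μ, p.1 ∈ Icc α' β' ∧ p.2 ∈ Icc t1 t2 := by
    rw [hμ, Measure.prod_restrict]
    filter_upwards [ae_restrict_mem (measurableSet_Icc.prod measurableSet_Icc)] with p hp using hp
  set M := c ^ m / |m| with hMdef
  have hM0 : 0 ≤ M := (abs_nonneg _).trans (TH_bd S G 0 0)
  have hbi : Integrable (fun p : ℝ × ℝ => C * (1 + deriv (fun y => u y p.2) p.1) * M) μ :=
    (((integrable_const 1).add (ux_int S hαβ h1)).const_mul C).mul_const M
  have hbound : ∀ n, ∀ᵐ p ∂μ, ‖g' n p.1 p.2 * FB m u α β a b (h n) p.1 p.2‖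
      ≤ C * (1 + deriv (fun y => u y p.2) p.1) * M := by
    intro n
    filter_upwards [hmem] with p hp
    rw [norm_mul]
    have := hgb n _ hp.2 _ hp.1
    exact mul_le_mul this (FB_bd S G (hh n) _ _) (norm_nonneg _) ((abs_nonneg _).trans this)
  have hmeas : ∀ n, AEStronglyMeasurable
      (fun p : ℝ × ℝ => g' n p.1 p.2 * FB m u α β a b (h n) p.1 p.2) μ := fun n =>
    ((hgm n).mul (FB_meas S α β a b (hh n))).aestronglyMeasurable
  have hint : ∀ n, Integrable (fun p : ℝ × ℝ => g' n p.1 p.2 * FB m u α β a b (h n) p.1 p.2) μ :=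
    fun n => hbi.mono' (hmeas n) (hbound n)
  have hae : ∀ᵐ p ∂μ, Tendsto (fun n => FB m u α β a b (h n) p.1 p.2) atTop
      (𝓝 (TH m u α β a b p.1 p.2)) := by
    rw [hμ, Measure.ae_prod_iff_ae_ae]
    · filter_upwards with x
      exact ae_restrict_of_ae (FB_tendsto S G hh hl x)
    · exact measurableSet_tendsto_fun (fun n => FB_meas S α β a b (hh n)) (TH_meas S α β a b)
  have key := tendsto_integral_of_dominated_convergence
    (F := fun n (p : ℝ × ℝ) => g' n p.1 p.2 * FB m u α β a b (h n) p.1 p.2)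
    (f := fun p : ℝ × ℝ => gl p.1 p.2 * TH m u α β a b p.1 p.2) (μ := μ) _ hmeas hbi hbound
    (by
      filter_upwards [hmem, hae] with p hp hq
      exact (hgl _ hp.2 _ hp.1).mul hq)
  have hper : ∀ n, ∀ t ∈ Icc t1 t2,
      - (∫ x in Icc α' β', g' n x t * FB m u α β a b (h n) x t)
      = ∫ x in α'..β', g n x t * ((u x t - u x (t - h n)) / h n) := by
    intro n t ht
    rw [integral_Icc_eq_integral_Ioc, ← intervalIntegral.integral_of_le hαβ]
    have hd : ∀ x ∈ Icc α' β', HasDerivAt (fun y => FB m u α β a b (h n) y t)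
        ((u x t - u x (t - h n)) / h n) x := by
      intro x hx
      apply HasDerivAt.div_const
      exact star_deriv S G (by linarith [hha n, ht.1]) (by linarith [hh n])
        (lt_of_le_of_lt ht.2 h2b) (lt_of_lt_of_le hα hx.1) (lt_of_le_of_lt hx.2 hβ)
    have ibp := intervalIntegral.integral_mul_deriv_eq_deriv_mul (a := α') (b := β')
      (u := fun x => g n x t) (u' := fun x => g' n x t)
      (v := fun y => FB m u α β a b (h n) y t) (v' := fun x => (u x t - u x (t - h n)) / h n)
      (by rw [uIcc_of_le hαβ]; exact hg n t ht) (by rw [uIcc_of_le hαβ]; exact hd)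
      (by
        apply ContinuousOn.intervalIntegrable
        rw [uIcc_of_le hαβ]; exact hgc n t ht)
      ((((cu t).sub (cu (t - h n))).div_const _).intervalIntegrable _ _)
    rw [ibp, g0 n t ht, g1 n t ht]
    simp
  constructor
  · refine key.neg.congr (fun n => ?_)
    rw [hμ, integral_prod_symm _ (hint n), intervalIntegral.integral_of_le h12,
      ← integral_Icc_eq_integral_Ioc, ← integral_neg]
    apply setIntegral_congr_fun measurableSet_Icc
    intro t ht
    exact hper n t ht
  · intro n
    rw [intervalIntegrable_iff_integrableOn_Icc_of_le h12]
    refine (hint n).integral_prod_right.neg.congr ?_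
    filter_upwards [ae_restrict_mem measurableSet_Icc] with t ht
    exact hper n t ht

lemma diffq {J : ℝ → ℝ} (hJ : Continuous J) (t1 t2 : ℝ) {h : ℕ → ℝ} (hh : ∀ n, 0 < h n)
    (hl : Tendsto h atTop (𝓝 0)) :
    Tendsto (fun n => ∫ t in t1..t2, (J t - J (t - h n)) / h n) atTop (𝓝 (J t2 - J t1)) := by
  have hP : ∀ t, HasDerivAt (fun x => ∫ r in (0:ℝ)..x, J r) (J t) t := fun t =>
    intervalIntegral.integral_hasDerivAt_right (hJ.intervalIntegrable _ _)
      (hJ.stronglyMeasurableAtFilter _ _) hJ.continuousAt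
  have h2 : Tendsto (fun n => - h n) atTop (𝓝[≠] 0) := by
    apply tendsto_nhdsWithin_iff.2
    refine ⟨by simpa using hl.neg, Eventually.of_forall fun n => ?_⟩
    simp [(hh n).ne']
  have k1 := ((hP t1).tendsto_slope_zero).comp h2
  have k2 := ((hP t2).tendsto_slope_zero).comp h2
  refine (k2.sub k1).congr (fun n => ?_)
  have hne := (hh n).ne'
  have ii : ∀ p q : ℝ, IntervalIntegrable J volume p q := fun p q => hJ.intervalIntegrable p q
  simp only [Function.comp, smul_eq_mul, ← sub_eq_add_neg]
  rw [intervalIntegral.integral_div, intervalIntegral.integral_sub (ii _ _)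
    ((by fun_prop : Continuous fun t => J (t - h n)).intervalIntegrable _ _),
    intervalIntegral.integral_comp_sub_right (fun t => J t) (h n)]
  have e1 := intervalIntegral.integral_interval_sub_left (ii 0 t2) (ii 0 t1)
  have e2 := intervalIntegral.integral_interval_sub_left (ii 0 (t2 - h n)) (ii 0 (t1 - h n))
  rw [← e1, ← e2]
  field_simp
  ring


lemma flux_mono {m s r : ℝ} (hm : m ≤ -1) (hs : 0 < s) (hr : 0 < r) :
    0 ≤ (s - r) * (s ^ m / m - r ^ m / m) := by
  have key : ∀ s r : ℝ, 0 < s → s ≤ r → s ^ m / m ≤ r ^ m / m := by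
    intro s r hs hsr
    have := Real.rpow_le_rpow_of_nonpos hs hsr (by linarith : m ≤ 0)
    exact (div_le_div_right_of_neg (by linarith)).2 this
  rcases le_total s r with h | h
  · exact mul_nonneg_of_nonpos_of_nonpos (by linarith) (by linarith [key s r hs h])
  · exact mul_nonneg (by linarith) (by linarith [key r s hr h])

lemma lemM {m : ℝ} {u : ℝ → ℝ → ℝ} (S : Sol m u) {α β a b c : ℝ} (G : GR u α β a b c)
    {α' β' t1 t2 : ℝ} (hα : α < α') (hαβ : α' ≤ β') (hβ : β' < β)
    (h12 : t1 ≤ t2) (h2b : t2 < b)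
    {h : ℕ → ℝ} (hh : ∀ n, 0 < h n) (hha : ∀ n, h n < t1 - a) (hl : Tendsto h atTop (𝓝 0))
    {g g' : ℕ → ℝ → ℝ → ℝ} {gi gl : ℝ → ℝ → ℝ} {C : ℝ}
    (hg : ∀ n, ∀ t ∈ Icc t1 t2, ∀ x ∈ Icc α' β', HasDerivAt (fun y => g n y t) (g' n x t) x)
    (hgc : ∀ n, ∀ t ∈ Icc t1 t2, ContinuousOn (fun x => g' n x t) (Icc α' β'))
    (hgm : ∀ n, Measurable (fun p : ℝ × ℝ => g' n p.1 p.2))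
    (hgb : ∀ n, ∀ t ∈ Icc t1 t2, ∀ x ∈ Icc α' β',
      |g' n x t| ≤ C * (1 + deriv (fun y => u y t) x))
    (hgl : ∀ t ∈ Icc t1 t2, ∀ x ∈ Icc α' β', Tendsto (fun n => g' n x t) atTop (𝓝 (gl x t)))
    (g0 : ∀ n, ∀ t ∈ Icc t1 t2, g n α' t = 0) (g1 : ∀ n, ∀ t ∈ Icc t1 t2, g n β' t = 0)
    (hgi : ∀ t ∈ Icc t1 t2, ∀ x ∈ Icc α' β', HasDerivAt (fun y => gi y t) (gl x t) x)
    (hglc : ∀ t ∈ Icc t1 t2, ContinuousOn (fun x => gl x t) (Icc α' β'))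
    (hglm : Measurable (fun p : ℝ × ℝ => gl p.1 p.2))
    (gi0 : ∀ t ∈ Icc t1 t2, gi α' t = 0) (gi1 : ∀ t ∈ Icc t1 t2, gi β' t = 0)
    {px γ N : ℝ → ℝ → ℝ} {CA : ℝ}
    (hpx : ∀ t ∈ Icc t1 t2, ∀ x ∈ Icc α' β', 0 < px x t)
    (hpxm : Measurable (fun p : ℝ × ℝ => px p.1 p.2))
    (hCA : ∀ t ∈ Icc t1 t2, ∀ x ∈ Icc α' β', |px x t ^ m / m| ≤ CA)
    (hγ : ∀ t ∈ Icc t1 t2, ∀ x ∈ Icc α' β', HasDerivAt (fun y => px y t ^ m / m) (γ x t) x)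
    (hγc : ∀ t ∈ Icc t1 t2, ContinuousOn (fun x => γ x t) (Icc α' β'))
    (hN : ∀ t ∈ Icc t1 t2, ∀ x ∈ Icc α' β', 0 ≤ N x t)
    (hglN : ∀ t ∈ Icc t1 t2, ∀ x ∈ Icc α' β',
      gl x t = N x t * (deriv (fun y => u y t) x - px x t))
    {J : ℝ → ℝ} (hJ : Continuous J)
    (hJi : ∀ n, ∀ t ∈ Icc t1 t2, J t - J (t - h n) ≤
      (∫ x in α'..β', g n x t * (u x t - u x (t - h n))) - h n * ∫ x in α'..β', gi x t * γ x t) :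
    J t2 ≤ J t1 := by
  have h1a : a < t1 := by linarith [hh 0, hha 0]
  have h1 : 0 < t1 := G.a0.trans h1a
  obtain ⟨hlim, hii⟩ := lemL S G hα hαβ hβ h12 h2b hh hha hl hg hgc hgm hgb hgl g0 g1
  set μ := ((volume.restrict (Icc α' β')).prod (volume.restrict (Icc t1 t2))) with hμ
  have hmem : ∀ᵐ p ∂μ, p.1 ∈ Icc α' β' ∧ p.2 ∈ Icc t1 t2 := by
    rw [hμ, Measure.prod_restrict]
    filter_upwards [ae_restrict_mem (measurableSet_Icc.prod measurableSet_Icc)] with p hp using hp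
  set M := c ^ m / |m| with hMdef
  have hM0 : 0 ≤ M := (abs_nonneg _).trans (TH_bd S G 0 0)
  have hglb : ∀ t ∈ Icc t1 t2, ∀ x ∈ Icc α' β', |gl x t| ≤ C * (1 + deriv (fun y => u y t) x) := by
    intro t ht x hx
    exact le_of_tendsto (hgl t ht x hx).abs (Eventually.of_forall fun n => hgb n t ht x hx)
  have hbi : ∀ K : ℝ, Integrable (fun p : ℝ × ℝ => C * (1 + deriv (fun y => u y p.2) p.1) * K) μ :=
    fun K => (((integrable_const 1).add (ux_int S hαβ h1)).const_mul C).mul_const K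
  have iT : Integrable (fun p : ℝ × ℝ => gl p.1 p.2 * TH m u α β a b p.1 p.2) μ := by
    apply (hbi M).mono' (hglm.mul (TH_meas S α β a b)).aestronglyMeasurable
    filter_upwards [hmem] with p hp
    simp only [Pi.mul_apply]
    rw [norm_mul]
    have := hglb _ hp.2 _ hp.1
    exact mul_le_mul this (TH_bd S G _ _) (norm_nonneg _) ((abs_nonneg _).trans this)
  have iA : Integrable (fun p : ℝ × ℝ => gl p.1 p.2 * (px p.1 p.2 ^ m / m)) μ := by
    apply (hbi CA).mono' (hglm.mul ((hpxm.pow_const m).div_const m)).aestronglyMeasurable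
    filter_upwards [hmem] with p hp
    simp only [Pi.mul_apply]
    rw [norm_mul]
    have := hglb _ hp.2 _ hp.1
    exact mul_le_mul this (hCA _ hp.2 _ hp.1) (norm_nonneg _) ((abs_nonneg _).trans this)
  have hper : ∀ t ∈ Icc t1 t2, - (∫ x in Icc α' β', gl x t * (px x t ^ m / m))
      = ∫ x in α'..β', gi x t * γ x t := by
    intro t ht
    rw [integral_Icc_eq_integral_Ioc, ← intervalIntegral.integral_of_le hαβ]
    have ibp := intervalIntegral.integral_mul_deriv_eq_deriv_mul (a := α') (b := β')
      (u := fun x => gi x t) (u' := fun x => gl x t)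
      (v := fun x => px x t ^ m / m) (v' := fun x => γ x t)
      (by rw [uIcc_of_le hαβ]; exact hgi t ht) (by rw [uIcc_of_le hαβ]; exact hγ t ht)
      (by
        apply ContinuousOn.intervalIntegrable
        rw [uIcc_of_le hαβ]; exact hglc t ht)
      (by
        apply ContinuousOn.intervalIntegrable
        rw [uIcc_of_le hαβ]; exact hγc t ht)
    rw [ibp, gi0 t ht, gi1 t ht]
    simp
  have iR : IntervalIntegrable (fun t => ∫ x in α'..β', gi x t * γ x t) volume t1 t2 := by
    rw [intervalIntegrable_iff_integrableOn_Icc_of_le h12]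
    refine iA.integral_prod_right.neg.congr ?_
    filter_upwards [ae_restrict_mem measurableSet_Icc] with t ht
    exact hper t ht
  have eR : ∫ t in t1..t2, (∫ x in α'..β', gi x t * γ x t)
      = - ∫ p, gl p.1 p.2 * (px p.1 p.2 ^ m / m) ∂μ := by
    rw [hμ, integral_prod_symm _ iA, intervalIntegral.integral_of_le h12,
      ← integral_Icc_eq_integral_Ioc, ← integral_neg]
    apply setIntegral_congr_fun measurableSet_Icc
    intro t ht
    exact (hper t ht).symm
  have hle := le_of_tendsto_of_tendsto (diffq hJ t1 t2 hh hl)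
    (hlim.sub_const (∫ t in t1..t2, (∫ x in α'..β', gi x t * γ x t)))
    (Eventually.of_forall fun n => by
      simp only
      rw [← intervalIntegral.integral_sub (hii n) iR]
      apply intervalIntegral.integral_mono_on h12 _ ((hii n).sub iR)
      · intro t ht
        have := hJi n t ht
        have hn := hh n
        rw [div_le_iff₀ hn, sub_mul, ← intervalIntegral.integral_mul_const]
        have e : ∀ x, g n x t * ((u x t - u x (t - h n)) / h n) * h n
            = g n x t * (u x t - u x (t - h n)) := by
          intro x; field_simp
        simp_rw [e]
        linarith
      · exact (by fun_prop : Continuous fun t => (J t - J (t - h n)) / h n).intervalIntegrable _ _)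
  have hnn : 0 ≤ ∫ p, (gl p.1 p.2 * TH m u α β a b p.1 p.2
      - gl p.1 p.2 * (px p.1 p.2 ^ m / m)) ∂μ := by
    apply integral_nonneg_of_ae
    filter_upwards [hmem] with p hp
    have hx : p.1 ∈ Icc α β := ⟨hα.le.trans hp.1.1, hp.1.2.trans hβ.le⟩
    have ht : p.2 ∈ Icc a b := ⟨h1a.le.trans hp.2.1, hp.2.2.trans h2b.le⟩
    simp only [TH, TT, cl_eq hx, cl_eq ht, hglN _ hp.2 _ hp.1, Pi.zero_apply]
    have := mul_nonneg (hN _ hp.2 _ hp.1) (flux_mono (m := m) S.hm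
      (lt_of_lt_of_le G.c0 (G.ux _ hx _ ht)) (hpx _ hp.2 _ hp.1))
    linarith
  rw [integral_sub iT iA] at hnn
  rw [eR] at hle
  linarith


lemma hd_sq (w : ℝ) : HasDerivAt (fun w : ℝ => (max w 0) ^ 2) (2 * max w 0) w := by
  rcases lt_trichotomy w 0 with h | h | h
  · have : (fun w : ℝ => (max w 0) ^ 2) =ᶠ[𝓝 w] fun _ => 0 := by
      filter_upwards [Iio_mem_nhds h] with z hz
      rw [max_eq_right (le_of_lt hz)]; simp
    rw [max_eq_right h.le, mul_zero]
    exact (hasDerivAt_const w (0 : ℝ)).congr_of_eventuallyEq this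
  · subst h
    rw [hasDerivAt_iff_isLittleO_nhds_zero]
    simp only [zero_add, max_self, mul_zero, smul_zero, sub_zero]
    have h1 : (fun h : ℝ => (max h 0) ^ 2 - 0 ^ 2) =O[𝓝 0] fun h : ℝ => h ^ 2 := by
      apply Asymptotics.IsBigO.of_bound 1
      filter_upwards with h
      simp only [ne_eq, OfNat.ofNat_ne_zero, not_false_eq_true, zero_pow, sub_zero, norm_pow,
        Real.norm_eq_abs, one_mul, sq_abs]
      rcases le_total h 0 with hh | hh
      · rw [max_eq_right hh]; nlinarith
      · rw [max_eq_left hh]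
    refine h1.trans_isLittleO ?_
    have := Asymptotics.isLittleO_pow_pow (𝕜 := ℝ) (show 1 < 2 by norm_num)
    simpa using this
  · have : (fun w : ℝ => (max w 0) ^ 2) =ᶠ[𝓝 w] fun w => w ^ 2 := by
      filter_upwards [Ioi_mem_nhds h] with z hz
      rw [max_eq_left (le_of_lt hz)]
    rw [max_eq_left h.le]
    refine HasDerivAt.congr_of_eventuallyEq ?_ this
    simpa using hasDerivAt_pow 2 w

lemma cvx3 (a b : ℝ) : (max a 0) ^ 3 - (max b 0) ^ 3 ≤ 3 * (max a 0) ^ 2 * (a - b) := by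
  have hB : 0 ≤ max b 0 := le_max_right _ _
  have hB' : b ≤ max b 0 := le_max_left _ _
  rcases le_total a 0 with h | h
  · rw [max_eq_right h]
    have : 0 ≤ (max b 0) ^ 3 := by positivity
    nlinarith
  · rw [max_eq_left h]
    set B := max b 0
    nlinarith [mul_nonneg (sq_nonneg (a - B)) (by linarith : 0 ≤ 2 * a + B),
      mul_nonneg (sq_nonneg a) (sub_nonneg.2 hB')]

def Good (u : ℝ → ℝ → ℝ) (x t : ℝ) : Prop :=
  ∃ r > 0, ∃ c, GR u (x - r) (x + r) (t - r) (t + r) c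

lemma good_rect {u : ℝ → ℝ → ℝ} {x1 x2 s1 s2 : ℝ} (hx : x1 ≤ x2) (hs : s1 ≤ s2)
    (h : ∀ x ∈ Icc x1 x2, ∀ t ∈ Icc s1 s2, Good u x t) :
    ∃ r > 0, ∃ c, GR u (x1 - r) (x2 + r) (s1 - r) (s2 + r) c := by
  have key : ∃ r > 0, ∃ c > 0, ∀ p ∈ Icc x1 x2 ×ˢ Icc s1 s2, ∀ x t : ℝ, |x - p.1| ≤ r →
      |t - p.2| ≤ r → 0 < t ∧ 0 < u x t ∧ u x t < 1 ∧ c ≤ deriv (fun y => u y t) x := by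
    refine IsCompact.induction_on (p := fun s : Set (ℝ × ℝ) => ∃ r > 0, ∃ c > 0, ∀ p ∈ s,
      ∀ x t : ℝ, |x - p.1| ≤ r → |t - p.2| ≤ r → 0 < t ∧ 0 < u x t ∧ u x t < 1 ∧
      c ≤ deriv (fun y => u y t) x) (isCompact_Icc.prod isCompact_Icc) ?_ ?_ ?_ ?_
    · exact ⟨1, one_pos, 1, one_pos, fun p hp => absurd hp (notMem_empty p)⟩
    · rintro s t hst ⟨r, hr, c, hc, H⟩
      exact ⟨r, hr, c, hc, fun p hp => H p (hst hp)⟩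
    · rintro s t ⟨r, hr, c, hc, H⟩ ⟨r', hr', c', hc', H'⟩
      refine ⟨min r r', lt_min hr hr', min c c', lt_min hc hc', fun p hp x t hx ht => ?_⟩
      rcases hp with hp | hp
      · obtain ⟨h1, h2, h3, h4⟩ := H p hp x t (hx.trans (min_le_left _ _))
          (ht.trans (min_le_left _ _))
        exact ⟨h1, h2, h3, (min_le_left _ _).trans h4⟩
      · obtain ⟨h1, h2, h3, h4⟩ := H' p hp x t (hx.trans (min_le_right _ _))
          (ht.trans (min_le_right _ _))
        exact ⟨h1, h2, h3, (min_le_right _ _).trans h4⟩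
    · rintro p ⟨hp1, hp2⟩
      obtain ⟨r, hr, c, G⟩ := h _ hp1 _ hp2
      refine ⟨_, mem_nhdsWithin_of_mem_nhds (Metric.ball_mem_nhds p (half_pos hr)), r / 2,
        half_pos hr, c, G.c0, ?_⟩
      intro q hq x t hx ht
      rw [Metric.mem_ball, Prod.dist_eq, max_lt_iff, Real.dist_eq, Real.dist_eq] at hq
      have a1 := abs_lt.1 hq.1
      have a2 := abs_lt.1 hq.2
      have b1 := abs_le.1 hx
      have b2 := abs_le.1 ht
      have m1 : x ∈ Icc (p.1 - r) (p.1 + r) := ⟨by linarith, by linarith⟩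
      have m2 : t ∈ Icc (p.2 - r) (p.2 + r) := ⟨by linarith, by linarith⟩
      exact ⟨lt_of_lt_of_le G.a0 m2.1, G.u0 _ m1 _ m2, G.u1 _ m1 _ m2, G.ux _ m1 _ m2⟩
  obtain ⟨r, hr, c, hc, H⟩ := key
  have main : ∀ x ∈ Icc (x1 - r) (x2 + r), ∀ t ∈ Icc (s1 - r) (s2 + r),
      0 < t ∧ 0 < u x t ∧ u x t < 1 ∧ c ≤ deriv (fun y => u y t) x := by
    intro x hx' t ht
    have hcl : ∀ a b y : ℝ, a ≤ b → y ∈ Icc (a - r) (b + r) → |y - cl a b y| ≤ r := by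
      intro a b y hab hy
      unfold cl
      rw [abs_le]
      rcases le_total b y with h1 | h1
      · rw [min_eq_left h1, max_eq_right hab]; constructor <;> linarith [hy.2]
      · rw [min_eq_right h1]
        rcases le_total a y with h2 | h2
        · rw [max_eq_right h2]; constructor <;> linarith
        · rw [max_eq_left h2]; constructor <;> linarith [hy.1]
    exact H (cl x1 x2 x, cl s1 s2 t) ⟨cl_mem hx x, cl_mem hs t⟩ x t (hcl _ _ _ hx hx')
      (hcl _ _ _ hs ht)
  refine ⟨r, hr, c, by linarith, by linarith, hc,
    (main x1 ⟨by linarith, by linarith⟩ (s1 - r) ⟨le_rfl, by linarith⟩).1,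
    fun x hx t ht => (main x hx t ht).2.1, fun x hx t ht => (main x hx t ht).2.2.1,
    fun x hx t ht => (main x hx t ht).2.2.2⟩

lemma hseq {r : ℝ} (hr : 0 < r) : (∀ n : ℕ, 0 < r / ((n : ℝ) + 2)) ∧
    (∀ n : ℕ, r / ((n : ℝ) + 2) < r) ∧
    Tendsto (fun n : ℕ => r / ((n : ℝ) + 2)) atTop (𝓝 0) := by
  refine ⟨fun n => by positivity, fun n => ?_, ?_⟩
  · rw [div_lt_iff₀ (by positivity)]
    have : (0 : ℝ) ≤ n := n.cast_nonneg
    nlinarith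
  · apply Tendsto.div_atTop tendsto_const_nhds
    exact tendsto_atTop_add_const_right _ _ tendsto_natCast_atTop_atTop

lemma int_cont {F : ℝ → ℝ → ℝ} (hF : Continuous (fun p : ℝ × ℝ => F p.1 p.2)) (a b : ℝ) :
    Continuous (fun t => ∫ x in a..b, F x t) :=
  intervalIntegral.continuous_parametric_intervalIntegral_of_continuous'
    (f := fun t x => F x t) (hF.comp continuous_swap) a b

lemma comp1 {m : ℝ} {u : ℝ → ℝ → ℝ} (S : Sol m u) {α' β' s1 s2 : ℝ} (hαβ : α' < β')
    (h12 : s1 ≤ s2) (hG : ∀ x ∈ Icc α' β', ∀ t ∈ Icc s1 s2, Good u x t)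
    {ψ px γ : ℝ → ℝ → ℝ} {κ Cp CA : ℝ}
    (hψc : Continuous (fun p : ℝ × ℝ => ψ p.1 p.2))
    (hψ : ∀ t ∈ Icc s1 s2, ∀ x ∈ Icc α' β', HasDerivAt (fun y => ψ y t) (px x t) x)
    (hpx : ∀ t ∈ Icc s1 s2, ∀ x ∈ Icc α' β', 0 < px x t)
    (hpxc : ∀ t ∈ Icc s1 s2, ContinuousOn (fun x => px x t) (Icc α' β'))
    (hpxb : ∀ t ∈ Icc s1 s2, ∀ x ∈ Icc α' β', px x t ≤ Cp)
    (hpxm : Measurable (fun p : ℝ × ℝ => px p.1 p.2))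
    (hCA : ∀ t ∈ Icc s1 s2, ∀ x ∈ Icc α' β', |px x t ^ m / m| ≤ CA)
    (hγ : ∀ t ∈ Icc s1 s2, ∀ x ∈ Icc α' β', HasDerivAt (fun y => px y t ^ m / m) (γ x t) x)
    (hγc : ∀ t ∈ Icc s1 s2, ContinuousOn (fun x => γ x t) (Icc α' β'))
    (hψt : ∀ t ∈ Icc s1 s2, ∀ x ∈ Icc α' β', ∀ h > 0, h * γ x t ≤ ψ x t - ψ x (t - h))
    (lat0 : ∀ t ∈ Icc s1 s2, u α' t - ψ α' t ≤ κ) (lat1 : ∀ t ∈ Icc s1 s2, u β' t - ψ β' t ≤ κ)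
    (ini : ∀ x ∈ Icc α' β', u x s1 - ψ x s1 ≤ κ) :
    ∀ x ∈ Icc α' β', u x s2 - ψ x s2 ≤ κ := by
  obtain ⟨r, hr, c, G⟩ := good_rect hαβ.le h12 hG
  have hs1 : 0 < s1 := by linarith [G.a0]
  obtain ⟨hh, hha, hl⟩ := hseq hr
  set W : ℝ → ℝ → ℝ := fun x t => u x t - ψ x t - κ with hW
  have hWc : Continuous (fun p : ℝ × ℝ => W p.1 p.2) := (S.cont.sub hψc).sub continuous_const
  have hWx : ∀ t, Continuous (fun x => W x t) := fun t =>
    hWc.comp (continuous_id.prodMk continuous_const)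
  have cu : ∀ t, Continuous (fun x => u x t) := fun t =>
    S.cont.comp (continuous_id.prodMk continuous_const)
  obtain ⟨B, hB⟩ := (isCompact_Icc (a := α') (b := β')).prod (isCompact_Icc (a := s1) (b := s2))
    |>.exists_bound_of_continuousOn hWc.continuousOn
  have hB' : ∀ t ∈ Icc s1 s2, ∀ x ∈ Icc α' β', max (W x t) 0 ≤ |B| := by
    intro t ht x hx
    apply max_le _ (abs_nonneg _)
    exact (le_abs_self _).trans ((hB (x, t) ⟨hx, ht⟩).trans (le_abs_self _))
  set g : ℝ → ℝ → ℝ := fun x t => 3 * (max (W x t) 0) ^ 2 with hg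
  set N : ℝ → ℝ → ℝ := fun x t => 6 * max (W x t) 0 with hN
  set g' : ℝ → ℝ → ℝ := fun x t => N x t * (deriv (fun y => u y t) x - px x t) with hg'
  have hgd : ∀ t ∈ Icc s1 s2, ∀ x ∈ Icc α' β', HasDerivAt (fun y => g y t) (g' x t) x := by
    intro t ht x hx
    have d1 : HasDerivAt (fun y => W y t) (deriv (fun y => u y t) x - px x t) x :=
      ((u_hasDeriv S (lt_of_lt_of_le hs1 ht.1) x).sub (hψ t ht x hx)).sub_const κ
    have := ((hd_sq (W x t)).comp x d1).const_mul 3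
    refine HasDerivAt.congr_deriv (f := fun y => g y t) this ?_
    simp only [hg', hN]; ring
  have hNc : Continuous (fun p : ℝ × ℝ => N p.1 p.2) :=
    continuous_const.mul (hWc.max continuous_const)
  have hgc : Continuous (fun p : ℝ × ℝ => g p.1 p.2) :=
    continuous_const.mul ((hWc.max continuous_const).pow 2)
  have hg'c : ∀ t ∈ Icc s1 s2, ContinuousOn (fun x => g' x t) (Icc α' β') := by
    intro t ht
    apply ContinuousOn.mul
    · exact (hNc.comp (continuous_id.prodMk continuous_const)).continuousOn
    · exact (ux_cont S (lt_of_lt_of_le hs1 ht.1)).continuousOn.sub (hpxc t ht)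
  have hg'm : Measurable (fun p : ℝ × ℝ => g' p.1 p.2) :=
    hNc.measurable.mul ((ux_meas S).sub hpxm)
  have g0 : ∀ t ∈ Icc s1 s2, g α' t = 0 := by
    intro t ht
    have : W α' t ≤ 0 := by have := lat0 t ht; simp only [hW]; linarith
    simp only [hg]; rw [max_eq_right this]; simp
  have g1 : ∀ t ∈ Icc s1 s2, g β' t = 0 := by
    intro t ht
    have : W β' t ≤ 0 := by have := lat1 t ht; simp only [hW]; linarith
    simp only [hg]; rw [max_eq_right this]; simp
  have hjc : Continuous (fun p : ℝ × ℝ => (max (W p.1 p.2) 0) ^ 3) :=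
    (hWc.max continuous_const).pow 3
  have hmain := lemM S G (α' := α') (β' := β') (t1 := s1) (t2 := s2) (by linarith) hαβ.le
    (by linarith) h12 (by linarith) hh (fun n => by linarith [hha n]) hl
    (g := fun _ => g) (g' := fun _ => g') (gi := g) (gl := g') (C := 6 * |B| * (1 + |Cp|))
    (fun _ => hgd) (fun _ => hg'c) (fun _ => hg'm)
    (by
      intro _ t ht x hx
      have hu0 : 0 ≤ deriv (fun y => u y t) x := (S.mono t (lt_of_lt_of_le hs1 ht.1)).deriv_nonneg
      have hp0 := hpx t ht x hx
      have hp1 : px x t ≤ |Cp| := (hpxb t ht x hx).trans (le_abs_self _)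
      simp only [hg', hN]
      rw [abs_mul, abs_of_nonneg (by positivity : 0 ≤ 6 * max (W x t) 0)]
      have e1 : 6 * max (W x t) 0 ≤ 6 * |B| := by linarith [hB' t ht x hx]
      have e2 : |deriv (fun y => u y t) x - px x t|
          ≤ (1 + |Cp|) * (1 + deriv (fun y => u y t) x) := by
        rw [abs_le]
        have := mul_nonneg (abs_nonneg Cp) hu0
        constructor <;> nlinarith
      calc _ ≤ 6 * |B| * ((1 + |Cp|) * (1 + deriv (fun y => u y t) x)) :=
            mul_le_mul e1 e2 (abs_nonneg _) (by positivity)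
        _ = _ := by ring)
    (fun t ht x hx => tendsto_const_nhds) (fun _ => g0) (fun _ => g1) hgd hg'c hg'm g0 g1
    hpx hpxm hCA hγ hγc (N := N) (fun t ht x hx => by simp only [hN]; positivity)
    (fun t ht x hx => rfl)
    (J := fun t => ∫ x in α'..β', (max (W x t) 0) ^ 3) (int_cont hjc α' β')
    (by
      intro n t ht
      set h := r / ((n : ℝ) + 2)
      have hjt : ∀ t, IntervalIntegrable (fun x => (max (W x t) 0) ^ 3) volume α' β' := fun t =>
        (hjc.comp (continuous_id.prodMk continuous_const)).intervalIntegrable _ _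
      have hgt : Continuous (fun x => g x t) := hgc.comp (continuous_id.prodMk continuous_const)
      have i1 : IntervalIntegrable (fun x => g x t * (u x t - u x (t - h))) volume α' β' :=
        (hgt.mul ((cu t).sub (cu (t - h)))).intervalIntegrable _ _
      have i2 : IntervalIntegrable (fun x => h * (g x t * γ x t)) volume α' β' := by
        apply ContinuousOn.intervalIntegrable
        rw [uIcc_of_le hαβ.le]
        exact continuousOn_const.mul (hgt.continuousOn.mul (hγc t ht))
      rw [← intervalIntegral.integral_sub (hjt _) (hjt _), ← intervalIntegral.integral_const_mul,
        ← intervalIntegral.integral_sub i1 i2]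
      apply intervalIntegral.integral_mono_on hαβ.le ((hjt _).sub (hjt _)) (i1.sub i2)
      intro x hx
      have := cvx3 (W x t) (W x (t - h))
      have h2 := hψt t ht x hx h (hh n)
      have h3 : 0 ≤ g x t := by simp only [hg]; positivity
      have h4 := mul_le_mul_of_nonneg_left h2 h3
      have e : W x t - W x (t - h) = (u x t - u x (t - h)) - (ψ x t - ψ x (t - h)) := by
        simp only [hW]; ring
      rw [e] at this
      simp only [hg] at h4 ⊢
      linarith)
  have hz : ∫ x in α'..β', (max (W x s1) 0) ^ 3 = 0 := by
    rw [intervalIntegral.integral_congr (g := fun _ => 0)]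
    · simp
    · intro x hx
      rw [uIcc_of_le hαβ.le] at hx
      have : W x s1 ≤ 0 := by have := ini x hx; simp only [hW]; linarith
      simp only
      rw [max_eq_right this]; simp
  simp only [hz] at hmain
  by_contra hcon
  push Not at hcon
  obtain ⟨x, hx, hxk⟩ := hcon
  have : 0 < ∫ x in α'..β', (max (W x s2) 0) ^ 3 := by
    apply intervalIntegral.integral_pos hαβ
    · exact (hjc.comp (continuous_id.prodMk continuous_const)).continuousOn
    · intro y _; positivity
    · refine ⟨x, hx, ?_⟩
      have : 0 < W x s2 := by simp only [hW]; linarith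
      rw [max_eq_left this.le]; positivity
  linarith


lemma PP_cont {F : ℝ → ℝ → ℝ} (hF : Continuous (fun p : ℝ × ℝ => F p.1 p.2)) (a : ℝ) :
    Continuous (fun p : ℝ × ℝ => ∫ x in a..p.1, F x p.2) := by
  apply intervalIntegral.continuous_parametric_intervalIntegral_of_continuous
    (f := fun (p : ℝ × ℝ) (x : ℝ) => F x p.2) _ continuous_fst
  exact hF.comp (by fun_prop : Continuous fun q : (ℝ × ℝ) × ℝ => (q.2, q.1.2))

lemma KK_cont {F : ℝ → ℝ → ℝ} (hF : Continuous (fun p : ℝ × ℝ => F p.1 p.2)) (b : ℝ) :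
    Continuous (fun p : ℝ × ℝ => ∫ x in p.1..b, F x p.2) := by
  have e : (fun p : ℝ × ℝ => ∫ x in p.1..b, F x p.2) = fun p => -∫ x in b..p.1, F x p.2 :=
    funext fun p => intervalIntegral.integral_symm _ _
  rw [e]
  exact (PP_cont hF b).neg

lemma PP_deriv {f : ℝ → ℝ} (hf : Continuous f) (a x : ℝ) :
    HasDerivAt (fun y => ∫ z in a..y, f z) (f x) x :=
  intervalIntegral.integral_hasDerivAt_right (hf.intervalIntegrable _ _)
      (hf.stronglyMeasurableAtFilter _ _) hf.continuousAt

lemma KK_deriv {f : ℝ → ℝ} (hf : Continuous f) (b x : ℝ) :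
    HasDerivAt (fun y => ∫ z in y..b, f z) (- f x) x := by
  have e : (fun y => ∫ z in y..b, f z) = fun y => -∫ z in b..y, f z :=
    funext fun p => intervalIntegral.integral_symm _ _
  rw [e]
  exact (PP_deriv hf b x).neg

lemma pm_mul (w : ℝ) : max w 0 * max (-w) 0 = 0 := by
  rcases le_total w 0 with h | h
  · rw [max_eq_right h]; simp
  · rw [max_eq_right (by linarith : -w ≤ 0)]; simp

lemma gap_bnd {a b c K P B D σ : ℝ} (a0 : 0 ≤ a) (a1 : a ≤ B) (b0 : 0 ≤ b) (b1 : b ≤ B)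
    (c0 : 0 ≤ c) (c1 : c ≤ B) (K0 : 0 ≤ K) (K1 : K ≤ B) (P0 : 0 ≤ P) (P1 : P ≤ B)
    (hu0 : 0 ≤ D) (hσ : 0 < σ) :
    |(6 * (a * K) + 6 * (b * P)) * (D - σ) - (3 * (a ^ 2 * b ^ 3) + 3 * (b ^ 2 * c ^ 3))|
      ≤ (12 * B ^ 2 * (1 + σ) + 6 * B ^ 5) * (1 + D) := by
  have hB0 : 0 ≤ B := a0.trans a1
  have N1 : 6 * (a * K) + 6 * (b * P) ≤ 12 * B ^ 2 := by
    have e1 : a * K ≤ B * B := mul_le_mul a1 K1 K0 hB0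
    have e2 : b * P ≤ B * B := mul_le_mul b1 P1 P0 hB0
    nlinarith
  have R1 : 3 * (a ^ 2 * b ^ 3) + 3 * (b ^ 2 * c ^ 3) ≤ 6 * B ^ 5 := by
    have e1 : a ^ 2 * b ^ 3 ≤ B ^ 2 * B ^ 3 := by gcongr
    have e2 : b ^ 2 * c ^ 3 ≤ B ^ 2 * B ^ 3 := by gcongr
    have e3 : B ^ 2 * B ^ 3 = B ^ 5 := by ring
    linarith
  have N0 : 0 ≤ 6 * (a * K) + 6 * (b * P) := by positivity
  have R0 : 0 ≤ 3 * (a ^ 2 * b ^ 3) + 3 * (b ^ 2 * c ^ 3) := by positivity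
  generalize 6 * (a * K) + 6 * (b * P) = N at *
  generalize 3 * (a ^ 2 * b ^ 3) + 3 * (b ^ 2 * c ^ 3) = R at *
  have e3 : |D - σ| ≤ (1 + σ) * (1 + D) := by
    rw [abs_le]; constructor <;> nlinarith [mul_nonneg hσ.le hu0]
  calc |N * (D - σ) - R|
      ≤ |N * (D - σ)| + |R| := abs_sub _ _
    _ ≤ 12 * B ^ 2 * ((1 + σ) * (1 + D)) + 6 * B ^ 5 := by
        rw [abs_mul, abs_of_nonneg N0, abs_of_nonneg R0]
        exact add_le_add (mul_le_mul N1 e3 (abs_nonneg _) (by positivity)) R1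
    _ ≤ _ := by
        have : 0 ≤ 6 * B ^ 5 * D := by positivity
        linarith

set_option maxHeartbeats 1000000 in
lemma gap_step {m : ℝ} {u : ℝ → ℝ → ℝ} (S : Sol m u) {xm xp s1 s2 : ℝ} (hx : xm < xp)
    (h12 : s1 ≤ s2) (hG : ∀ x ∈ Icc xm xp, ∀ t ∈ Icc s1 s2, Good u x t)
    {σ d : ℝ} (hσ : 0 < σ) {W : ℝ → ℝ → ℝ} (hW : ∀ x t, W x t = u x t - (σ * x + d))
    (lat0 : ∀ t ∈ Icc s1 s2, W xm t ≤ 0) (lat1 : ∀ t ∈ Icc s1 s2, 0 ≤ W xp t) :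
    (∫ y in xm..xp, (max (- W y s2) 0) ^ 3 * ∫ x in xm..y, (max (W x s2) 0) ^ 3) ≤
    (∫ y in xm..xp, (max (- W y s1) 0) ^ 3 * ∫ x in xm..y, (max (W x s1) 0) ^ 3) := by
  obtain ⟨r, hr, c, G⟩ := good_rect hx.le h12 hG
  have hs1 : 0 < s1 := by linarith [G.a0]
  obtain ⟨hh, hha, hl⟩ := hseq hr
  set h : ℕ → ℝ := fun n => r / ((n : ℝ) + 2) with hdef
  have hWc : Continuous (fun p : ℝ × ℝ => W p.1 p.2) := by
    simp_rw [hW]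
    exact S.cont.sub (by fun_prop)
  have sl : ∀ {F : ℝ → ℝ → ℝ}, Continuous (fun p : ℝ × ℝ => F p.1 p.2) → ∀ t,
      Continuous (fun x => F x t) := fun hF t => hF.comp (continuous_id.prodMk continuous_const)
  have cu : ∀ t, Continuous (fun x => u x t) := fun t => sl S.cont t
  set j : ℝ → ℝ → ℝ := fun x t => (max (W x t) 0) ^ 3 with hj
  set k : ℝ → ℝ → ℝ := fun x t => (max (- W x t) 0) ^ 3 with hk
  have hjc : Continuous (fun p : ℝ × ℝ => j p.1 p.2) := (hWc.max continuous_const).pow 3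
  have hkc : Continuous (fun p : ℝ × ℝ => k p.1 p.2) := (hWc.neg.max continuous_const).pow 3
  set P : ℝ → ℝ → ℝ := fun y t => ∫ x in xm..y, j x t with hP
  set K : ℝ → ℝ → ℝ := fun x t => ∫ y in x..xp, k y t with hK
  have hPc : Continuous (fun p : ℝ × ℝ => P p.1 p.2) := PP_cont hjc xm
  have hKc : Continuous (fun p : ℝ × ℝ => K p.1 p.2) := KK_cont hkc xp
  have hPd : ∀ x t, HasDerivAt (fun y => P y t) (j x t) x := fun x t => PP_deriv (sl hjc t) xm x
  have hKd : ∀ x t, HasDerivAt (fun y => K y t) (- k x t) x := fun x t => KK_deriv (sl hkc t) xp x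
  have hP0 : ∀ t, P xm t = 0 := fun t => intervalIntegral.integral_same
  have hK0 : ∀ t, K xp t = 0 := fun t => intervalIntegral.integral_same
  have hPn : ∀ t, ∀ x ∈ Icc xm xp, 0 ≤ P x t := fun t x hx =>
    intervalIntegral.integral_nonneg hx.1 (fun y _ => by simp only [hj]; positivity)
  have hKn : ∀ t, ∀ x ∈ Icc xm xp, 0 ≤ K x t := fun t x hx =>
    intervalIntegral.integral_nonneg hx.2 (fun y _ => by simp only [hk]; positivity)
  have hWd : ∀ t ∈ Icc s1 s2, ∀ x, HasDerivAt (fun y => W y t) (deriv (fun y => u y t) x - σ) x := by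
    intro t ht x
    simp_rw [hW]
    have := (((hasDerivAt_id x).const_mul σ).add_const d)
    simp only [mul_one] at this
    exact (u_hasDeriv S (lt_of_lt_of_le hs1 ht.1) x).sub this
  have hq1 : ∀ t ∈ Icc s1 s2, ∀ x, HasDerivAt (fun y => (max (W y t) 0) ^ 2)
      (2 * max (W x t) 0 * (deriv (fun y => u y t) x - σ)) x := fun t ht x =>
    (hd_sq (W x t)).comp (h₂ := fun w : ℝ => (max w 0) ^ 2) x (hWd t ht x)
  have hq2 : ∀ t ∈ Icc s1 s2, ∀ x, HasDerivAt (fun y => (max (- W y t) 0) ^ 2)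
      (2 * max (- W x t) 0 * -(deriv (fun y => u y t) x - σ)) x := fun t ht x =>
    (hd_sq (- W x t)).comp (h₂ := fun w : ℝ => (max w 0) ^ 2) x (hWd t ht x).neg
  -- bounds
  have hcpt : IsCompact (Icc xm xp ×ˢ Icc (s1 - r) s2) := isCompact_Icc.prod isCompact_Icc
  obtain ⟨B1, hB1⟩ := hcpt.exists_bound_of_continuousOn hWc.continuousOn
  obtain ⟨B2, hB2⟩ := hcpt.exists_bound_of_continuousOn hPc.continuousOn
  obtain ⟨B3, hB3⟩ := hcpt.exists_bound_of_continuousOn hKc.continuousOn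
  set B := |B1| + |B2| + |B3| with hBdef
  have hB0 : 0 ≤ B := by positivity
  have hWB : ∀ t ∈ Icc (s1 - r) s2, ∀ x ∈ Icc xm xp, max (W x t) 0 ≤ B ∧ max (- W x t) 0 ≤ B := by
    intro t ht x hx
    have := hB1 (x, t) ⟨hx, ht⟩
    rw [Real.norm_eq_abs, abs_le] at this
    have e : B1 ≤ B := by
      have := le_abs_self B1; have := abs_nonneg B2; have := abs_nonneg B3; linarith
    exact ⟨max_le (by linarith) hB0, max_le (by linarith) hB0⟩
  have hPB : ∀ t ∈ Icc (s1 - r) s2, ∀ x ∈ Icc xm xp, P x t ≤ B := by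
    intro t ht x hx
    have := hB2 (x, t) ⟨hx, ht⟩
    rw [Real.norm_eq_abs, abs_le] at this
    have := le_abs_self B2; have := abs_nonneg B1; have := abs_nonneg B3; linarith
  have hKB : ∀ t ∈ Icc (s1 - r) s2, ∀ x ∈ Icc xm xp, K x t ≤ B := by
    intro t ht x hx
    have := hB3 (x, t) ⟨hx, ht⟩
    rw [Real.norm_eq_abs, abs_le] at this
    have := le_abs_self B3; have := abs_nonneg B1; have := abs_nonneg B2; linarith
  set g : ℝ → ℝ → ℝ → ℝ := fun h x t =>
    3 * ((max (W x t) 0) ^ 2 * K x t) - 3 * ((max (- W x t) 0) ^ 2 * P x (t - h)) with hg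
  set N : ℝ → ℝ → ℝ → ℝ := fun h x t =>
    6 * (max (W x t) 0 * K x t) + 6 * (max (- W x t) 0 * P x (t - h)) with hN
  set R : ℝ → ℝ → ℝ → ℝ := fun h x t =>
    3 * ((max (W x t) 0) ^ 2 * k x t) + 3 * ((max (- W x t) 0) ^ 2 * j x (t - h)) with hR
  have hgd : ∀ h, ∀ t ∈ Icc s1 s2, ∀ x ∈ Icc xm xp, HasDerivAt (fun y => g h y t)
      (N h x t * (deriv (fun y => u y t) x - σ) - R h x t) x := by
    intro h t ht x _
    refine HasDerivAt.congr_deriv (f := fun y => g h y t)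
      ((((hq1 t ht x).mul (hKd x t)).const_mul 3).sub
        (((hq2 t ht x).mul (hPd x (t - h))).const_mul 3)) ?_
    simp only [hN, hR]; ring
  have hsh : ∀ {F : ℝ → ℝ → ℝ}, Continuous (fun p : ℝ × ℝ => F p.1 p.2) → ∀ h : ℝ,
      Continuous (fun p : ℝ × ℝ => F p.1 (p.2 - h)) := fun {F} hF h =>
    hF.comp (g := fun p : ℝ × ℝ => F p.1 p.2) (f := fun p : ℝ × ℝ => (p.1, p.2 - h)) (by fun_prop)
  have hNc : ∀ h, Continuous (fun p : ℝ × ℝ => N h p.1 p.2) := by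
    intro h
    have := hsh hPc h
    simp only [hN]
    fun_prop
  have hRc : ∀ h, Continuous (fun p : ℝ × ℝ => R h p.1 p.2) := by
    intro h
    have := hsh hjc h
    simp only [hR]
    fun_prop
  have hgcn : ∀ h, Continuous (fun p : ℝ × ℝ => g h p.1 p.2) := by
    intro h
    have := hsh hPc h
    simp only [hg]
    fun_prop
  have hR0 : ∀ x t, R 0 x t = 0 := by
    intro x t
    simp only [hR, hj, hk, sub_zero]
    have e := pm_mul (W x t)
    have e1 : (max (W x t) 0) ^ 2 * (max (- W x t) 0) ^ 3
      = (max (W x t) 0 * max (- W x t) 0) ^ 2 * max (- W x t) 0 := by ring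
    have e2 : (max (- W x t) 0) ^ 2 * (max (W x t) 0) ^ 3
      = (max (W x t) 0 * max (- W x t) 0) ^ 2 * max (W x t) 0 := by ring
    rw [e1, e2, e]; ring
  have hgl0 : ∀ t ∈ Icc s1 s2, ∀ x ∈ Icc xm xp, HasDerivAt (fun y => g 0 y t)
      (N 0 x t * (deriv (fun y => u y t) x - σ)) x := by
    intro t ht x hx
    have := hgd 0 t ht x hx
    rwa [hR0, sub_zero] at this
  have ga : ∀ h, ∀ t ∈ Icc s1 s2, g h xm t = 0 := by
    intro h t ht
    simp only [hg]
    rw [max_eq_right (lat0 t ht), hP0]; ring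
  have gb : ∀ h, ∀ t ∈ Icc s1 s2, g h xp t = 0 := by
    intro h t ht
    simp only [hg]
    rw [max_eq_right (by linarith [lat1 t ht] : - W xp t ≤ 0), hK0]; ring
  have hcd : ∀ h, ∀ t ∈ Icc s1 s2, Continuous
      (fun x => N h x t * (deriv (fun y => u y t) x - σ) - R h x t) := by
    intro h t ht
    exact ((sl (hNc h) t).mul ((ux_cont S (lt_of_lt_of_le hs1 ht.1)).sub continuous_const)).sub
      (sl (hRc h) t)
  have hmd : ∀ h, Measurable (fun p : ℝ × ℝ =>
      N h p.1 p.2 * (deriv (fun y => u y p.2) p.1 - σ) - R h p.1 p.2) := fun h =>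
    ((hNc h).measurable.mul ((ux_meas S).sub_const σ)).sub (hRc h).measurable
  have hJc : Continuous (fun t => ∫ y in xm..xp, k y t * P y t) :=
    int_cont (F := fun y t => k y t * P y t) (hkc.mul hPc) xm xp
  refine lemM S G (α' := xm) (β' := xp) (t1 := s1) (t2 := s2) (by linarith) hx.le
    (by linarith) h12 (by linarith) hh (fun n => by linarith [hha n]) hl
    (g := fun n => g (h n))
    (g' := fun n x t => N (h n) x t * (deriv (fun y => u y t) x - σ) - R (h n) x t)
    (gi := g 0) (gl := fun x t => N 0 x t * (deriv (fun y => u y t) x - σ))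
    (C := 12 * B ^ 2 * (1 + σ) + 6 * B ^ 5)
    (fun n => hgd (h n)) (fun n t ht => (hcd (h n) t ht).continuousOn) (fun n => hmd (h n)) ?_ ?_
    (fun n => ga (h n)) (fun n => gb (h n)) hgl0 ?_ ?_ (ga 0) (gb 0)
    (px := fun _ _ => σ) (γ := fun _ _ => 0) (N := N 0) (CA := |σ ^ m / m|)
    (fun _ _ _ _ => hσ) measurable_const (fun _ _ _ _ => le_rfl)
    (fun _ _ x _ => hasDerivAt_const x _) (fun _ _ => continuousOn_const)
    ?_ (fun _ _ _ _ => rfl) hJc ?_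
  · intro n t ht x hx
    have hu0 : 0 ≤ deriv (fun y => u y t) x := (S.mono t (lt_of_lt_of_le hs1 ht.1)).deriv_nonneg
    set D := deriv (fun y => u y t) x
    have ht1 : t ∈ Icc (s1 - r) s2 := ⟨by linarith [ht.1], ht.2⟩
    have ht2 : t - h n ∈ Icc (s1 - r) s2 := ⟨by linarith [ht.1, hha n], by linarith [ht.2, hh n]⟩
    obtain ⟨w1, w2⟩ := hWB t ht1 x hx
    obtain ⟨w3, _⟩ := hWB _ ht2 x hx
    have p1 := hPB _ ht2 x hx
    have p2 := hKB t ht1 x hx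
    have p3 := hPn (t - h n) x hx
    have p4 := hKn t x hx
    have w10 : 0 ≤ max (W x t) 0 := le_max_right _ _
    have w20 : 0 ≤ max (- W x t) 0 := le_max_right _ _
    have w30 : 0 ≤ max (W x (t - h n)) 0 := le_max_right _ _
    exact gap_bnd w10 w1 w20 w2 w30 w3 p4 p2 p3 p1 hu0 hσ
  · intro t ht x hx
    have tl : Tendsto (fun n => t - h n) atTop (𝓝 t) := by
      simpa using (tendsto_const_nhds (x := t)).sub hl
    have vert : ∀ {F : ℝ → ℝ → ℝ}, Continuous (fun p : ℝ × ℝ => F p.1 p.2) →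
        Tendsto (fun n => F x (t - h n)) atTop (𝓝 (F x t)) := fun {F} hF =>
      (Continuous.tendsto (f := fun s => F x s)
        (hF.comp (continuous_const.prodMk continuous_id)) t).comp tl
    have l1 : Tendsto (fun n => N (h n) x t) atTop (𝓝 (N 0 x t)) := by
      simp only [hN, sub_zero]
      exact (((vert hPc).const_mul _).const_mul _).const_add _
    have l2 : Tendsto (fun n => R (h n) x t) atTop (𝓝 (R 0 x t)) := by
      simp only [hR, sub_zero]
      exact (((vert hjc).const_mul _).const_mul _).const_add _
    rw [hR0] at l2
    simpa using (l1.mul_const (deriv (fun y => u y t) x - σ)).sub l2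
  · intro t ht
    have := hcd 0 t ht
    simp only [hR0, sub_zero] at this
    exact this.continuousOn
  · have := hmd 0
    simpa only [hR0, sub_zero] using this
  · intro t ht x hx
    have p3 := hPn (t - 0) x hx
    have p4 := hKn t x hx
    simp only [hN]; positivity
  · intro n t ht
    have hn := hh n
    set h0 := h n with hh0
    simp only [mul_zero, intervalIntegral.integral_zero, sub_zero]
    have ci : ∀ {f : ℝ → ℝ}, Continuous f → IntervalIntegrable f volume xm xp := fun hf =>
      hf.intervalIntegrable _ _
    have ck := sl hkc
    have cj := sl hjc
    have cP := sl hPc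
    have cK := sl hKc
    have ibp := intervalIntegral.integral_mul_deriv_eq_deriv_mul (a := xm) (b := xp)
      (u := fun x => P x t - P x (t - h0)) (u' := fun x => j x t - j x (t - h0))
      (v := fun x => K x t) (v' := fun x => - k x t)
      (fun x _ => (hPd x t).sub (hPd x (t - h0))) (fun x _ => hKd x t)
      (ci ((cj t).sub (cj _))) (ci (ck t).neg)
    simp only [hP0, hK0, sub_self, mul_zero, zero_mul, zero_sub, mul_neg,
      intervalIntegral.integral_neg, neg_inj] at ibp
    have i1 : IntervalIntegrable (fun y => (k y t - k y (t - h0)) * P y (t - h0)) volume xm xp :=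
      ci (((ck t).sub (ck _)).mul (cP _))
    have i2 : IntervalIntegrable (fun y => (j y t - j y (t - h0)) * K y t) volume xm xp :=
      ci (((cj t).sub (cj _)).mul (cK _))
    have i3 : IntervalIntegrable (fun y => (P y t - P y (t - h0)) * k y t) volume xm xp :=
      ci (((cP t).sub (cP _)).mul (ck _))
    have i4 : IntervalIntegrable (fun y => k y t * P y t) volume xm xp := ci ((ck t).mul (cP t))
    have i5 : IntervalIntegrable (fun y => k y (t - h0) * P y (t - h0)) volume xm xp :=
      ci ((ck _).mul (cP _))
    have e : (∫ y in xm..xp, k y t * P y t) - (∫ y in xm..xp, k y (t - h0) * P y (t - h0))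
        = ∫ y in xm..xp, ((k y t - k y (t - h0)) * P y (t - h0)
            + (j y t - j y (t - h0)) * K y t) := by
      rw [intervalIntegral.integral_add i1 i2, ← ibp, ← intervalIntegral.integral_add i1 i3,
        ← intervalIntegral.integral_sub i4 i5]
      congr 1; ext y; ring
    rw [e]
    have i6 : IntervalIntegrable (fun y => (k y t - k y (t - h0)) * P y (t - h0)
            + (j y t - j y (t - h0)) * K y t) volume xm xp := i1.add i2
    have i7 : IntervalIntegrable (fun y => g h0 y t * (u y t - u y (t - h0))) volume xm xp :=
      ci ((sl (hgcn h0) t).mul ((cu t).sub (cu _)))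
    apply intervalIntegral.integral_mono_on hx.le i6 i7
    intro x hx
    have c1 := cvx3 (W x t) (W x (t - h0))
    have c2 := cvx3 (- W x t) (- W x (t - h0))
    have p3 := hPn (t - h0) x hx
    have p4 := hKn t x hx
    have q1 := mul_le_mul_of_nonneg_right c1 p4
    have q2 := mul_le_mul_of_nonneg_right c2 p3
    have e1 : W x t - W x (t - h0) = u x t - u x (t - h0) := by rw [hW, hW]; ring
    have e2 : - W x t - - W x (t - h0) = -(u x t - u x (t - h0)) := by rw [hW, hW]; ring
    rw [e1] at q1
    rw [e2] at q2
    simp only [hg, hj, hk] at q1 q2 ⊢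
    linarith


lemma gap {m : ℝ} {u : ℝ → ℝ → ℝ} (S : Sol m u) {xm xp a b : ℝ} (hx : xm < xp)
    (h12 : a ≤ b) (hG : ∀ x ∈ Icc xm xp, ∀ t ∈ Ioc a b, Good u x t)
    {σ d : ℝ} (hσ : 0 < σ)
    (lat0 : ∀ t ∈ Icc a b, u xm t ≤ σ * xm + d) (lat1 : ∀ t ∈ Icc a b, σ * xp + d ≤ u xp t)
    (hmon : ∀ x ∈ Icc xm xp, ∀ y ∈ Icc xm xp, x ≤ y → σ * (y - x) ≤ u y a - u x a)
    {x y : ℝ} (hxm : xm ≤ x) (hxy : x < y) (hyp : y ≤ xp) (hpos : σ * x + d < u x b) :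
    σ * y + d ≤ u y b := by
  obtain ⟨W, hW⟩ : ∃ W : ℝ → ℝ → ℝ, ∀ x t, W x t = u x t - (σ * x + d) := ⟨_, fun _ _ => rfl⟩
  have hWc : Continuous (fun p : ℝ × ℝ => W p.1 p.2) := by
    simp_rw [hW]
    exact S.cont.sub (by fun_prop)
  have sl : ∀ {F : ℝ → ℝ → ℝ}, Continuous (fun p : ℝ × ℝ => F p.1 p.2) → ∀ t,
      Continuous (fun x => F x t) := fun hF t => hF.comp (continuous_id.prodMk continuous_const)
  have hjc : Continuous (fun p : ℝ × ℝ => (max (W p.1 p.2) 0) ^ 3) :=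
    (hWc.max continuous_const).pow 3
  have hkc : Continuous (fun p : ℝ × ℝ => (max (- W p.1 p.2) 0) ^ 3) :=
    (hWc.neg.max continuous_const).pow 3
  have hPc := PP_cont (F := fun x t => (max (W x t) 0) ^ 3) hjc xm
  have hIc : Continuous (fun p : ℝ × ℝ => (max (- W p.1 p.2) 0) ^ 3 *
      ∫ x in xm..p.1, (max (W x p.2) 0) ^ 3) := hkc.mul hPc
  have hJc : Continuous (fun t => ∫ y in xm..xp, (max (- W y t) 0) ^ 3 *
      ∫ x in xm..y, (max (W x t) 0) ^ 3) :=
    int_cont (F := fun y t => (max (- W y t) 0) ^ 3 * ∫ x in xm..y, (max (W x t) 0) ^ 3) hIc xm xp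
  have step : (∫ y in xm..xp, (max (- W y b) 0) ^ 3 * ∫ x in xm..y, (max (W x b) 0) ^ 3) ≤
      ∫ y in xm..xp, (max (- W y a) 0) ^ 3 * ∫ x in xm..y, (max (W x a) 0) ^ 3 := by
    rcases h12.eq_or_lt with h | h
    · rw [h]
    have ht : Tendsto (fun t => ∫ y in xm..xp, (max (- W y t) 0) ^ 3 *
      ∫ x in xm..y, (max (W x t) 0) ^ 3) (𝓝[>] a) (𝓝 (∫ y in xm..xp, (max (- W y a) 0) ^ 3 *
      ∫ x in xm..y, (max (W x a) 0) ^ 3)) := (hJc.tendsto a).mono_left nhdsWithin_le_nhds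
    refine ge_of_tendsto ht ?_
    filter_upwards [Ioo_mem_nhdsGT h] with s hs
    refine gap_step S hx hs.2.le (fun x hx t ht => hG x hx t ⟨hs.1.trans_le ht.1, ht.2⟩) hσ hW ?_ ?_
    · intro t ht
      have := lat0 t ⟨hs.1.le.trans ht.1, ht.2⟩
      rw [hW]; linarith
    · intro t ht
      have := lat1 t ⟨hs.1.le.trans ht.1, ht.2⟩
      rw [hW]; linarith
  have J0 : (∫ y in xm..xp, (max (- W y a) 0) ^ 3 * ∫ x in xm..y, (max (W x a) 0) ^ 3) = 0 := by
    refine (intervalIntegral.integral_congr (g := fun _ => (0 : ℝ)) ?_).trans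
      intervalIntegral.integral_zero
    intro y hy
    rw [uIcc_of_le hx.le] at hy
    simp only
    rcases le_or_gt 0 (W y a) with h | h
    · rw [max_eq_right (by linarith : - W y a ≤ 0)]; simp
    · have : (∫ x in xm..y, (max (W x a) 0) ^ 3) = 0 := by
        refine (intervalIntegral.integral_congr (g := fun _ => (0 : ℝ)) ?_).trans
          intervalIntegral.integral_zero
        intro x hx
        rw [uIcc_of_le hy.1] at hx
        simp only
        have := hmon x ⟨hx.1, hx.2.trans hy.2⟩ y hy hx.2
        rw [hW] at h
        rw [max_eq_right (by rw [hW]; linarith)]; simp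
      rw [this, mul_zero]
  rw [J0] at step
  by_contra hneg
  push Not at hneg
  have hWx : 0 < W x b := by rw [hW]; linarith
  have hWy : W y b < 0 := by rw [hW]; linarith
  have Pn : ∀ z ∈ Icc xm xp, 0 ≤ ∫ x in xm..z, (max (W x b) 0) ^ 3 := fun z hz =>
    intervalIntegral.integral_nonneg hz.1 (fun y _ => by positivity)
  have Py : 0 < ∫ x in xm..y, (max (W x b) 0) ^ 3 := by
    apply intervalIntegral.integral_pos (by linarith)
      (sl (F := fun x t => (max (W x t) 0) ^ 3) hjc b).continuousOn
    · intro z _; positivity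
    · exact ⟨x, ⟨hxm, hxy.le⟩, by rw [max_eq_left hWx.le]; positivity⟩
  have : 0 < ∫ y in xm..xp, (max (- W y b) 0) ^ 3 * ∫ x in xm..y, (max (W x b) 0) ^ 3 := by
    apply intervalIntegral.integral_pos hx
      (sl (F := fun y t => (max (- W y t) 0) ^ 3 * ∫ x in xm..y, (max (W x t) 0) ^ 3)
        hIc b).continuousOn
    · intro z hz
      exact mul_nonneg (by positivity) (Pn z ⟨hz.1.le, hz.2⟩)
    · refine ⟨y, ⟨by linarith, hyp⟩, ?_⟩
      rw [max_eq_left (by linarith : 0 ≤ - W y b)]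
      have : 0 < - W y b := by linarith
      positivity
  linarith


lemma local_good {m : ℝ} {u : ℝ → ℝ → ℝ} (S : Sol m u) {x1 t1 ρ τ0 L : ℝ} (hρ : 0 < ρ)
    (hτ0 : 0 < τ0) (hL : 0 < L)
    (hQ : ∀ x ∈ Icc (x1 - ρ) (x1 + ρ), ∀ t ∈ Icc (t1 - τ0) (t1 + τ0),
      0 < t ∧ 0 < u x t ∧ u x t < 1)
    (halt : ∀ t ∈ Icc (t1 - τ0) (t1 + τ0), (∀ x ∈ Icc (x1 - ρ) (x1 + ρ), Good u x t) ∨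
      (∀ x ∈ Icc (x1 - ρ) (x1 + ρ), ∀ y ∈ Icc (x1 - ρ) (x1 + ρ), x ≤ y →
        L * (y - x) ≤ u y t - u x t))
    (hp : ∀ x ∈ Icc (x1 - ρ) (x1 + ρ), ∀ y ∈ Icc (x1 - ρ) (x1 + ρ), x ≤ y →
        L * (y - x) ≤ u y t1 - u x t1) : Good u x1 t1 := by
  have vc : ∀ x, Continuous (fun t => u x t) := fun x =>
    S.cont.comp (continuous_const.prodMk continuous_id)
  -- choose τ
  obtain ⟨τ, hτ, hττ, hosc⟩ : ∃ τ > 0, τ ≤ τ0 ∧ ∀ x ∈ Icc (x1 - ρ) (x1 + ρ),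
      ∀ t ∈ Icc (t1 - τ) (t1 + τ), |u x t - u x t1| ≤ L * ρ / 16 := by
    have hK : IsCompact (Icc (x1 - ρ) (x1 + ρ) ×ˢ Icc (t1 - τ0) (t1 + τ0)) :=
      isCompact_Icc.prod isCompact_Icc
    have huc := hK.uniformContinuousOn_of_continuous S.cont.continuousOn
    rw [Metric.uniformContinuousOn_iff] at huc
    obtain ⟨δ, hδ, h⟩ := huc (L * ρ / 16) (by positivity)
    refine ⟨min τ0 (δ / 2), by positivity, min_le_left _ _, ?_⟩
    intro x hx t ht
    have h1 := min_le_left τ0 (δ / 2)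
    have h2 := min_le_right τ0 (δ / 2)
    have := h (x, t) ⟨hx, by simp only; constructor <;> linarith [ht.1, ht.2]⟩ (x, t1)
      ⟨hx, by simp only; constructor <;> linarith⟩ ?_
    · rw [Real.dist_eq] at this; exact this.le
    · rw [Prod.dist_eq, dist_self, max_eq_right dist_nonneg, Real.dist_eq, abs_lt]
      constructor <;> linarith [ht.1, ht.2]
  have hta : 0 < t1 - τ :=
    (hQ x1 ⟨by linarith, by linarith⟩ (t1 - τ) ⟨by linarith, by linarith⟩).1
  -- slope at the initial time
  obtain ⟨c0, hc0, hsl⟩ : ∃ c0 > 0, ∀ x ∈ Icc (x1 - ρ) (x1 + ρ), ∀ y ∈ Icc (x1 - ρ) (x1 + ρ),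
      x ≤ y → c0 * (y - x) ≤ u y (t1 - τ) - u x (t1 - τ) := by
    obtain ⟨z, hz, hmin⟩ := (isCompact_Icc (a := x1 - ρ) (b := x1 + ρ)).exists_isMinOn
      ⟨x1, by constructor <;> linarith⟩ (ux_cont S hta).continuousOn
    have hq := hQ z hz (t1 - τ) ⟨by linarith, by linarith⟩
    refine ⟨deriv (fun y => u y (t1 - τ)) z, S.pos _ hta z hq.2.1 hq.2.2, ?_⟩
    intro x hx y hy hxy
    refine Convex.mul_sub_le_image_sub_of_le_deriv (D := Icc (x1 - ρ) (x1 + ρ)) (convex_Icc _ _)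
      (f := fun y => u y (t1 - τ)) ?_ ?_ ?_ x hx y hy hxy
    · exact fun w _ => (u_hasDeriv S hta w).continuousAt.continuousWithinAt
    · exact fun w _ => (u_hasDeriv S hta w).differentiableAt.differentiableWithinAt
    · intro w hw
      exact hmin (interior_subset hw)
  set σ := min (L / 2) c0 with hσd
  have hσ : 0 < σ := by positivity
  have hσL : σ ≤ L / 2 := min_le_left _ _
  have hσc : σ ≤ c0 := min_le_right _ _
  have key : ∀ ts ∈ Icc (t1 - τ) (t1 + τ), ∀ xs ∈ Icc (x1 - ρ / 2) (x1 + ρ / 2),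
      ∀ y, xs < y → y ≤ x1 + ρ → σ * (y - xs) ≤ u y ts - u xs ts := by
    intro ts hts xs hxs y hy hyp
    by_contra hcon
    push Not at hcon
    have hxsI : xs ∈ Icc (x1 - ρ) (x1 + ρ) := ⟨by linarith [hxs.1], by linarith [hxs.2]⟩
    set ε := min ((σ * (y - xs) - (u y ts - u xs ts)) / 2) (L * ρ / 8) with hε
    have hε0 : 0 < ε := lt_min (by linarith) (by positivity)
    have hε1 : ε ≤ (σ * (y - xs) - (u y ts - u xs ts)) / 2 := min_le_left _ _
    have hε2 : ε ≤ L * ρ / 8 := min_le_right _ _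
    set C : Set ℝ := Icc (t1 - τ) ts ∩ {t | ∀ x ∈ Icc (x1 - ρ) (x1 + ρ),
      ∀ y ∈ Icc (x1 - ρ) (x1 + ρ), x ≤ y → σ * (y - x) ≤ u y t - u x t} with hC
    have hCc : IsCompact C := by
      apply isCompact_Icc.inter_right
      simp only [ofPred_forall]
      refine isClosed_iInter fun x => isClosed_iInter fun _ => isClosed_iInter fun y =>
        isClosed_iInter fun _ => isClosed_iInter fun _ => ?_
      exact isClosed_le continuous_const ((vc y).sub (vc x))
    have hCn : (t1 - τ) ∈ C := ⟨⟨le_rfl, hts.1⟩, fun x hx y hy hxy =>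
      (mul_le_mul_of_nonneg_right hσc (by linarith)).trans (hsl x hx y hy hxy)⟩
    have ha := hCc.sSup_mem ⟨_, hCn⟩
    set a := sSup C with had
    have hub : ∀ t ∈ C, t ≤ a := fun t ht => le_csSup hCc.bddAbove ht
    have o0 := hosc xs hxsI ts hts
    rw [abs_le] at o0
    have := gap S (xm := x1 - ρ) (xp := x1 + ρ) (a := a) (b := ts) (by linarith) ha.1.2 ?_ hσ
      (d := u xs ts - σ * xs - ε) ?_ ?_ ha.2 hxsI.1 hy hyp (by linarith)
    · linarith
    · intro x hx t ht
      rcases halt t ⟨by linarith [ht.1, ha.1.1], by linarith [ht.2, hts.2]⟩ with h | h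
      · exact h x hx
      · exfalso
        have : t ∈ C := ⟨⟨by linarith [ht.1, ha.1.1], ht.2⟩, fun x hx y hy hxy =>
          (mul_le_mul_of_nonneg_right (by linarith : σ ≤ L) (by linarith)).trans (h x hx y hy hxy)⟩
        linarith [hub t this, ht.1]
    · intro t ht
      have o1 := hosc (x1 - ρ) ⟨le_rfl, by linarith⟩ t
        ⟨by linarith [ht.1, ha.1.1], by linarith [ht.2, hts.2]⟩
      rw [abs_le] at o1
      have o2 := hp (x1 - ρ) ⟨le_rfl, by linarith⟩ xs hxsI hxsI.1
      have o3 : (L - σ) * (xs - (x1 - ρ)) ≥ (L / 2) * (ρ / 2) :=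
        mul_le_mul (by linarith) (by linarith [hxs.1]) (by positivity) (by linarith)
      linarith
    · intro t ht
      have o1 := hosc (x1 + ρ) ⟨by linarith, le_rfl⟩ t
        ⟨by linarith [ht.1, ha.1.1], by linarith [ht.2, hts.2]⟩
      rw [abs_le] at o1
      have o2 := hp xs hxsI (x1 + ρ) ⟨by linarith, le_rfl⟩ hxsI.2
      have o3 : (L - σ) * ((x1 + ρ) - xs) ≥ (L / 2) * (ρ / 2) :=
        mul_le_mul (by linarith) (by linarith [hxs.2]) (by positivity) (by linarith)
      linarith
  have r1 := min_le_left (ρ / 2) τ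
  have r2 := min_le_right (ρ / 2) τ
  have r0 : 0 < min (ρ / 2) τ := by positivity
  refine ⟨min (ρ / 2) τ, r0, σ, ?_⟩
  have hin : ∀ x ∈ Icc (x1 - min (ρ / 2) τ) (x1 + min (ρ / 2) τ),
    ∀ t ∈ Icc (t1 - min (ρ / 2) τ) (t1 + min (ρ / 2) τ),
      x ∈ Icc (x1 - ρ / 2) (x1 + ρ / 2) ∧ t ∈ Icc (t1 - τ) (t1 + τ) := fun x hx t ht =>
    ⟨⟨by linarith [hx.1], by linarith [hx.2]⟩, ⟨by linarith [ht.1], by linarith [ht.2]⟩⟩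
  have hin2 : ∀ x ∈ Icc (x1 - min (ρ / 2) τ) (x1 + min (ρ / 2) τ),
    ∀ t ∈ Icc (t1 - min (ρ / 2) τ) (t1 + min (ρ / 2) τ),
      0 < t ∧ 0 < u x t ∧ u x t < 1 := fun x hx t ht =>
    hQ x ⟨by linarith [hx.1], by linarith [hx.2]⟩ t ⟨by linarith [ht.1], by linarith [ht.2]⟩
  refine ⟨by linarith, by linarith, hσ, by linarith, fun x hx t ht => (hin2 x hx t ht).2.1,
    fun x hx t ht => (hin2 x hx t ht).2.2, ?_⟩
  intro x hx t ht
  obtain ⟨h1, h2⟩ := hin x hx t ht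
  have ht0 := (hin2 x hx t ht).1
  have hd := (u_hasDeriv S ht0 x).hasDerivWithinAt (s := Ioi x)
  rw [hasDerivWithinAt_iff_tendsto_slope' (by simp)] at hd
  refine ge_of_tendsto hd ?_
  filter_upwards [Ioo_mem_nhdsGT (by linarith [h1.2] : x < x1 + ρ)] with y hy
  have := key t h2 x h1 y hy.1 hy.2.le
  rw [slope_def_field, le_div_iff₀ (by linarith [hy.1])]
  exact this


lemma good_open (u : ℝ → ℝ → ℝ) : IsOpen {p : ℝ × ℝ | Good u p.1 p.2} := by
  rw [Metric.isOpen_iff]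
  rintro ⟨x, t⟩ ⟨r, hr, c, G⟩
  refine ⟨r / 2, by positivity, ?_⟩
  rintro ⟨y, s⟩ hy
  rw [Metric.mem_ball, Prod.dist_eq, max_lt_iff, Real.dist_eq, Real.dist_eq, abs_lt, abs_lt] at hy
  obtain ⟨⟨h1, h2⟩, h3, h4⟩ := hy
  simp only at h1 h2 h3 h4 G
  have hx : ∀ z ∈ Icc (y - r / 2) (y + r / 2), z ∈ Icc (x - r) (x + r) := fun z hz =>
    ⟨by linarith [hz.1], by linarith [hz.2]⟩
  have ht : ∀ z ∈ Icc (s - r / 2) (s + r / 2), z ∈ Icc (t - r) (t + r) := fun z hz =>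
    ⟨by linarith [hz.1], by linarith [hz.2]⟩
  exact ⟨r / 2, by positivity, c, by simp only; linarith, by simp only; linarith, G.c0,
    by simp only; linarith [G.a0], fun z hz w hw => G.u0 z (hx z hz) w (ht w hw),
    fun z hz w hw => G.u1 z (hx z hz) w (ht w hw), fun z hz w hw => G.ux z (hx z hz) w (ht w hw)⟩

lemma all_good {m : ℝ} {u : ℝ → ℝ → ℝ} (S : Sol m u) {x0 t0 : ℝ} (ht0 : 0 < t0)
    (h0 : 0 < u x0 t0) (h1 : u x0 t0 < 1) : Good u x0 t0 := by
  by_contra hbad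
  set Q : Set (ℝ × ℝ) := {p | 0 < p.2 ∧ 0 < u p.1 p.2 ∧ u p.1 p.2 < 1} with hQd
  have hQ : IsOpen Q := (isOpen_lt continuous_const continuous_snd).inter
    ((isOpen_lt continuous_const S.cont).inter (isOpen_lt S.cont continuous_const))
  set B : Set (ℝ × ℝ) := Q ∩ {p : ℝ × ℝ | Good u p.1 p.2}ᶜ with hB
  have hBl : IsLocallyClosed B :=
    hQ.isLocallyClosed.inter (good_open u).isClosed_compl.isLocallyClosed
  have : LocallyCompactSpace B := hBl.locallyCompactSpace
  have : Nonempty B := ⟨⟨(x0, t0), ⟨ht0, h0, h1⟩, hbad⟩⟩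
  set E : ℕ → Set B := fun n => {p | ∀ a ∈ Icc (-(1 / ((n : ℝ) + 1))) (1 / ((n : ℝ) + 1)),
    ∀ b ∈ Icc (-(1 / ((n : ℝ) + 1))) (1 / ((n : ℝ) + 1)), a ≤ b →
      (1 / ((n : ℝ) + 1)) * (b - a) ≤ u (p.1.1 + b) p.1.2 - u (p.1.1 + a) p.1.2} with hE
  have hEc : ∀ n, IsClosed (E n) := by
    intro n
    simp only [hE, ofPred_forall]
    refine isClosed_iInter fun a => isClosed_iInter fun _ => isClosed_iInter fun b =>
        isClosed_iInter fun _ => isClosed_iInter fun _ => ?_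
    have e : ∀ b : ℝ, Continuous (fun p : B => u (p.1.1 + b) p.1.2) := fun b =>
      S.cont.comp (by fun_prop : Continuous fun p : B => (p.1.1 + b, p.1.2))
    exact isClosed_le continuous_const ((e b).sub (e a))
  have hU : ⋃ n, E n = univ := by
    rw [eq_univ_iff_forall]
    rintro ⟨⟨x, t⟩, ⟨ht, hu0, hu1⟩, hb⟩
    simp only at ht hu0 hu1
    have hc := S.pos t ht x hu0 hu1
    set c := deriv (fun y => u y t) x with hcd
    have hev := (ux_cont S ht).continuousAt (x := x) |>.eventually
      (lt_mem_nhds (show c / 2 < c by linarith))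
    rw [Metric.eventually_nhds_iff] at hev
    obtain ⟨η, hη, hev⟩ := hev
    obtain ⟨n, hn⟩ := exists_nat_one_div_lt (show 0 < min η (c / 2) by positivity)
    rw [mem_iUnion]
    refine ⟨n, ?_⟩
    have n1 := hn.trans_le (min_le_left _ _)
    have n2 := hn.trans_le (min_le_right _ _)
    intro a ha b hb hab
    simp only
    have := Convex.mul_sub_le_image_sub_of_le_deriv (D := Icc (x + a) (x + b)) (convex_Icc _ _)
      (f := fun y => u y t) (C := 1 / ((n : ℝ) + 1))
      (fun w _ => (u_hasDeriv S ht w).continuousAt.continuousWithinAt)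
      (fun w _ => (u_hasDeriv S ht w).differentiableAt.differentiableWithinAt) ?_
      (x + a) ⟨le_rfl, by linarith⟩ (x + b) ⟨by linarith, le_rfl⟩ (by linarith)
    · convert this using 2; ring
    · intro w hw
      have hw := interior_subset hw
      have : dist w x < η := by
        rw [Real.dist_eq, abs_lt]
        constructor <;> linarith [hw.1, hw.2, ha.1, hb.2]
      linarith [hev this]
  obtain ⟨n, ⟨p, hp⟩⟩ := nonempty_interior_of_iUnion_of_closed hEc hU
  set δ : ℝ := 1 / ((n : ℝ) + 1) with hδ
  have hδ0 : 0 < δ := by positivity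
  have hpE : p ∈ E n := interior_subset hp
  have hnb : interior (E n) ∈ 𝓝 p := isOpen_interior.mem_nhds hp
  rw [nhds_subtype, mem_comap] at hnb
  obtain ⟨V, hV, hVE⟩ := hnb
  have hVQ : V ∩ Q ∈ 𝓝 (p : ℝ × ℝ) := inter_mem hV (hQ.mem_nhds p.2.1)
  rw [Metric.mem_nhds_iff] at hVQ
  obtain ⟨ε, hε, hball⟩ := hVQ
  obtain ⟨⟨x1, t1⟩, hpB⟩ := p
  have hbox : ∀ x ∈ Icc (x1 - min (ε / 2) (δ / 2)) (x1 + min (ε / 2) (δ / 2)),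
      ∀ t ∈ Icc (t1 - ε / 2) (t1 + ε / 2), (x, t) ∈ V ∩ Q := by
    intro x hx t ht
    apply hball
    have := min_le_left (ε / 2) (δ / 2)
    rw [Metric.mem_ball, Prod.dist_eq, max_lt_iff, Real.dist_eq, Real.dist_eq, abs_lt, abs_lt]
    simp only
    refine ⟨⟨by linarith [hx.1], by linarith [hx.2]⟩, by linarith [ht.1], by linarith [ht.2]⟩
  have r2 := min_le_right (ε / 2) (δ / 2)
  have slp : ∀ x ∈ Icc (x1 - min (ε / 2) (δ / 2)) (x1 + min (ε / 2) (δ / 2)), ∀ t,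
      ∀ hb : (x, t) ∈ B, (⟨(x, t), hb⟩ : B) ∈ E n →
      ∀ y ∈ Icc (x1 - min (ε / 2) (δ / 2)) (x1 + min (ε / 2) (δ / 2)),
      ∀ z ∈ Icc (x1 - min (ε / 2) (δ / 2)) (x1 + min (ε / 2) (δ / 2)), y ≤ z →
        δ * (z - y) ≤ u z t - u y t := by
    intro x hx t hb hE y hy z hz hyz
    have := hE (y - x) ⟨by linarith [hx.1, hx.2, hy.1, hy.2], by linarith [hx.1, hx.2, hy.1, hy.2]⟩
      (z - x) ⟨by linarith [hx.1, hx.2, hz.1, hz.2], by linarith [hx.1, hx.2, hz.1, hz.2]⟩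
      (by linarith)
    simp only [add_sub_cancel] at this
    linarith
  have rpos : 0 < min (ε / 2) (δ / 2) := by positivity
  refine hpB.2 (local_good S (ρ := min (ε / 2) (δ / 2)) (τ0 := ε / 2) (L := δ) rpos
    (by positivity) hδ0 (fun x hx t ht => (hbox x hx t ht).2) ?_
    (slp x1 ⟨by linarith, by linarith⟩ t1 hpB hpE))
  intro t ht
  by_cases hall : ∀ x ∈ Icc (x1 - min (ε / 2) (δ / 2)) (x1 + min (ε / 2) (δ / 2)), Good u x t
  · exact Or.inl hall
  · right
    push Not at hall
    obtain ⟨x, hx, hxb⟩ := hall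
    have hb : (x, t) ∈ B := ⟨(hbox x hx t ht).2, hxb⟩
    exact slp x hx t hb (interior_subset (hVE (show ((⟨(x, t), hb⟩ : B) : ℝ × ℝ) ∈ V from
      (hbox x hx t ht).1)))


lemma sqrt_conc {Z h : ℝ} (hZ : 0 < Z) (hh : 0 < h) :
    √(Z + h) - √Z ≤ h * (1 / (2 * √Z)) := by
  have h1 : 0 < √Z := Real.sqrt_pos.2 hZ
  have e : √(Z + h) ≤ √Z + h * (1 / (2 * √Z)) := by
    apply Real.sqrt_le_iff.2
    refine ⟨by positivity, ?_⟩
    have e1 : √Z ^ 2 = Z := Real.sq_sqrt hZ.le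
    have e2 : √Z * (h * (1 / (2 * √Z))) = h / 2 := by field_simp
    have e3 := sq_nonneg (h * (1 / (2 * √Z)))
    nlinarith
  linarith

lemma bar_strict {m N Z : ℝ} (hm : m ≤ -1) (hN : 1 ≤ N) (hZ : 1 / 4 ≤ Z) :
    (1 / (2 * N * √Z)) ^ (m - 1) * (-(1 / (4 * N ^ 2 * (Z * √Z)))) + 1 / (2 * √Z) < 0 := by
  have hs : 1 / 2 ≤ √Z := by
    apply Real.le_sqrt_of_sq_le; norm_num; linarith
  have hs0 : 0 < √Z := by linarith
  have hN0 : 0 < N := by linarith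
  have hZ0 : 0 < Z := by linarith
  have hsq : √Z ^ 2 = Z := Real.sq_sqrt hZ0.le
  set c := 1 / (2 * N * √Z) with hc
  have hc0 : 0 < c := by positivity
  have hc1 : c ≤ 1 := by
    rw [hc, div_le_one (by positivity)]; nlinarith
  have e1 : 1 ≤ c ^ (m + 1) := Real.one_le_rpow_of_pos_of_le_one_of_nonpos hc0 hc1 (by linarith)
  have e2 : c ^ (m - 1) = c ^ (m + 1) * (4 * N ^ 2 * Z) := by
    have : m - 1 = (m + 1) + (-2) := by ring
    rw [this, Real.rpow_add hc0]
    congr 1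
    have : (-2 : ℝ) = -((2 : ℕ) : ℝ) := by norm_num
    rw [this, Real.rpow_neg hc0.le, Real.rpow_natCast, hc, ← hsq]
    field_simp
    norm_num
    ring
  rw [e2]
  have e3 : c ^ (m + 1) * (4 * N ^ 2 * Z) * (-(1 / (4 * N ^ 2 * (Z * √Z))))
      = - (c ^ (m + 1) * (1 / √Z)) := by field_simp
  rw [e3]
  have e4 : 1 / (2 * √Z) = (1 / 2) * (1 / √Z) := by field_simp
  rw [e4]
  have : 0 < 1 / √Z := by positivity
  nlinarith

lemma Z_deriv {A N x t : ℝ} (hN : 0 < N) (hZ : 0 < 13 / 4 - t + (x + A) / N) :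
    HasDerivAt (fun y => √(13 / 4 - t + (y + A) / N))
      (1 / (2 * N * √(13 / 4 - t + (x + A) / N))) x := by
  have h1 : HasDerivAt (fun y => 13 / 4 - t + (y + A) / N) (1 / N) x :=
    (((hasDerivAt_id x).add_const A).div_const N).const_add _
  refine HasDerivAt.congr_deriv (f := fun y => √(13 / 4 - t + (y + A) / N)) (h1.sqrt hZ.ne') ?_
  have : 0 < √(13 / 4 - t + (x + A) / N) := Real.sqrt_pos.2 hZ
  field_simp

lemma Z_deriv2 {A N x t : ℝ} (hN : 0 < N) (hZ : 0 < 13 / 4 - t + (x + A) / N) :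
    HasDerivAt (fun y => 1 / (2 * N * √(13 / 4 - t + (y + A) / N)))
      (-(1 / (4 * N ^ 2 * ((13 / 4 - t + (x + A) / N) * √(13 / 4 - t + (x + A) / N))))) x := by
  have h := (((Z_deriv hN hZ).const_mul (2 * N)).inv
    (by have := Real.sqrt_pos.2 hZ; positivity))
  simp only [one_div] at h ⊢
  refine HasDerivAt.congr_deriv (f := fun y => (2 * N * √(13 / 4 - t + (y + A) / N))⁻¹) h ?_
  have h1 : 0 < √(13 / 4 - t + (x + A) / N) := Real.sqrt_pos.2 hZ
  have h2 := Real.sq_sqrt hZ.le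
  set Z := 13 / 4 - t + (x + A) / N
  rw [← h2]
  simp only [Real.sqrt_sq h1.le]
  field_simp
  norm_num


set_option maxHeartbeats 1000000 in
lemma barrier {m : ℝ} {u : ℝ → ℝ → ℝ} (S : Sol m u) {A N : ℝ} (hN : 1 ≤ N)
    (hA : ∀ t ∈ Icc (1 : ℝ) 3, u (-A) t ≤ 1 / 2) {x : ℝ} (hx : x ∈ Icc (-A) (N - A)) :
    u x 3 ≤ √(1 / 4 + (x + A) / N) := by
  have hN0 : 0 < N := by linarith
  set Z : ℝ → ℝ → ℝ := fun x t => 13 / 4 - t + (x + A) / N with hZd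
  have hZc : Continuous (fun p : ℝ × ℝ => Z p.1 p.2) := by simp only [hZd]; fun_prop
  have hbc : Continuous (fun p : ℝ × ℝ => √(Z p.1 p.2)) := Real.continuous_sqrt.comp hZc
  have hZq : ∀ x ∈ Icc (-A) (N - A), ∀ t ∈ Icc (1 : ℝ) 3, 1 / 4 ≤ Z x t := by
    intro x hx t ht
    have : 0 ≤ (x + A) / N := div_nonneg (by linarith [hx.1]) hN0.le
    simp only [hZd]; linarith [ht.2]
  by_contra hcon
  push Not at hcon
  have hK : IsCompact (Icc (-A) (N - A) ×ˢ Icc (1 : ℝ) 3) := isCompact_Icc.prod isCompact_Icc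
  have hmem : (x, (3 : ℝ)) ∈ Icc (-A) (N - A) ×ˢ Icc (1 : ℝ) 3 := ⟨hx, by norm_num, le_rfl⟩
  obtain ⟨⟨xs, ts⟩, hp, hmax⟩ := hK.exists_isMaxOn ⟨_, hmem⟩ (S.cont.sub hbc).continuousOn
  have hM : ∀ y ∈ Icc (-A) (N - A), ∀ t ∈ Icc (1 : ℝ) 3,
      u y t - √(Z y t) ≤ u xs ts - √(Z xs ts) := fun y hy t ht => hmax (show (y, t) ∈ _ from ⟨hy, ht⟩)
  obtain ⟨hxs, hts⟩ := hp
  simp only at hxs hts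
  set M := u xs ts - √(Z xs ts) with hMd
  have hM0 : 0 < M := by
    refine lt_of_lt_of_le ?_ (hM x hx 3 ⟨by norm_num, le_rfl⟩)
    have : Z x 3 = 1 / 4 + (x + A) / N := by simp only [hZd]; ring
    rw [this]; linarith
  have hxsA : -A < xs := by
    rcases hxs.1.eq_or_lt with h | h
    · exfalso
      have h1 := hA ts hts
      have h2 : 1 / 2 ≤ √(Z xs ts) := by
        apply Real.le_sqrt_of_sq_le
        have := hZq xs hxs ts hts
        linarith
      rw [h] at h1
      linarith
    · exact h
  have hxsN : xs < N - A := by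
    rcases hxs.2.eq_or_lt with h | h
    · exfalso
      have h2 : 1 ≤ √(Z xs ts) := by
        apply Real.le_sqrt_of_sq_le
        have : (xs + A) / N = 1 := by rw [h, sub_add_cancel, div_self hN0.ne']
        simp only [hZd]; linarith [hts.2]
      linarith [S.bd1 xs ts]
    · exact h
  have hts1 : 1 < ts := by
    rcases hts.1.eq_or_lt with h | h
    · exfalso
      have h2 : 1 ≤ √(Z xs ts) := by
        apply Real.le_sqrt_of_sq_le
        have : 0 ≤ (xs + A) / N := div_nonneg (by linarith) hN0.le
        simp only [hZd]; linarith
      linarith [S.bd1 xs ts]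
    · exact h
  have hZs : 1 / 4 ≤ Z xs ts := hZq xs hxs ts hts
  have hZ0 : 0 < Z xs ts := by linarith
  have hb0 : 0 < √(Z xs ts) := Real.sqrt_pos.2 hZ0
  have hts0 : 0 < ts := by linarith
  have hu0 : 0 < u xs ts := by linarith
  have hu1 : u xs ts < 1 := by
    by_contra h
    have h1 : u xs ts = 1 := le_antisymm (S.bd1 _ _) (not_lt.1 h)
    have d1 : deriv (fun y => u y ts) xs = 0 := by
      apply IsLocalMax.deriv_eq_zero
      refine Eventually.of_forall fun y => ?_
      simp only [h1]; exact S.bd1 _ _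
    have d2 := IsLocalMax.hasDerivAt_eq_zero (f := fun y => u y ts - √(Z y ts)) (a := xs) ?_
      ((u_hasDeriv S hts0 xs).sub (Z_deriv hN0 hZ0))
    · rw [d1] at d2
      have : 0 < 1 / (2 * N * √(Z xs ts)) := by positivity
      simp only [hZd] at this
      linarith
    · filter_upwards [Icc_mem_nhds hxsA hxsN] with y hy
      exact hM y hy ts hts
  -- the penalised barrier
  set px : ℝ → ℝ → ℝ → ℝ := fun η x t => 1 / (2 * N * √(Z x t)) + 2 * η * (x - xs) with hpx
  set pxx : ℝ → ℝ → ℝ → ℝ := fun η x t => -(1 / (4 * N ^ 2 * (Z x t * √(Z x t)))) + 2 * η with hpxx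
  set c := 1 / (2 * N * √(Z xs ts)) with hc
  have hc0 : 0 < c := by positivity
  have hpxs : px 0 xs ts = c := by simp only [hpx]; ring
  set o : ℝ × ℝ × ℝ := (0, xs, ts) with ho
  have Zct : ContinuousAt (fun q : ℝ × ℝ × ℝ => Z q.2.1 q.2.2) o :=
    (hZc.comp continuous_snd).continuousAt
  have bct : ContinuousAt (fun q : ℝ × ℝ × ℝ => √(Z q.2.1 q.2.2)) o :=
    (hbc.comp continuous_snd).continuousAt
  have pct : ContinuousAt (fun q : ℝ × ℝ × ℝ => px q.1 q.2.1 q.2.2) o := by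
    simp only [hpx]
    refine (continuousAt_const.div (continuousAt_const.mul bct) ?_).add (by fun_prop)
    exact (show 0 < 2 * N * √(Z xs ts) by positivity).ne'
  have ppct : ContinuousAt (fun q : ℝ × ℝ × ℝ => pxx q.1 q.2.1 q.2.2) o := by
    simp only [hpxx]
    refine (continuousAt_const.div (continuousAt_const.mul (Zct.mul bct)) ?_).neg.add (by fun_prop)
    exact (show 0 < 4 * N ^ 2 * (Z xs ts * √(Z xs ts)) by positivity).ne'
  have hpo : px o.1 o.2.1 o.2.2 = c := hpxs
  have rct : ∀ e : ℝ, ContinuousAt (fun q : ℝ × ℝ × ℝ => px q.1 q.2.1 q.2.2 ^ e) o := fun e =>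
    pct.rpow_const (Or.inl (by rw [hpo]; exact hc0.ne'))
  have act : ContinuousAt (fun q : ℝ × ℝ × ℝ => |px q.1 q.2.1 q.2.2 ^ m / m|) o :=
    ((rct m).div_const m).abs
  have fct : ContinuousAt (fun q : ℝ × ℝ × ℝ => px q.1 q.2.1 q.2.2 ^ (m - 1) * pxx q.1 q.2.1 q.2.2
      + 1 / (2 * √(Z q.2.1 q.2.2)) + q.1) o := by
    refine (((rct (m - 1)).mul ppct).add
      (continuousAt_const.div (continuousAt_const.mul bct) ?_)).add continuousAt_fst
    exact (show 0 < 2 * √(Z xs ts) by positivity).ne'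
  have fneg : px o.1 o.2.1 o.2.2 ^ (m - 1) * pxx o.1 o.2.1 o.2.2
      + 1 / (2 * √(Z o.2.1 o.2.2)) + o.1 < 0 := by
    rw [hpo]
    simp only [ho, hpxx, mul_zero, add_zero]
    exact bar_strict S.hm hN hZs
  have uct : ContinuousAt (fun q : ℝ × ℝ × ℝ => u q.2.1 q.2.2) o :=
    (S.cont.comp continuous_snd).continuousAt
  have ev := (((((pct.eventually (lt_mem_nhds (show 0 < px o.1 o.2.1 o.2.2 by rw [hpo]; exact hc0))).and
    (pct.eventually (gt_mem_nhds (show px o.1 o.2.1 o.2.2 < c + 1 by rw [hpo]; linarith)))).and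
    ((act.eventually (gt_mem_nhds (lt_add_one _))).and (fct.eventually (gt_mem_nhds fneg)))).and
    ((uct.eventually (lt_mem_nhds (show 0 < u o.2.1 o.2.2 from hu0))).and
      (uct.eventually (gt_mem_nhds (show u o.2.1 o.2.2 < 1 from hu1))))).and
    (((continuous_fst.comp continuous_snd).continuousAt (x := o)).eventually
      (Ioo_mem_nhds hxsA hxsN))).and
    (((continuous_snd.comp continuous_snd).continuousAt (x := o)).eventually (lt_mem_nhds hts1))
  rw [Metric.eventually_nhds_iff] at ev
  obtain ⟨ε, hε, ev⟩ := ev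
  set r := min (ε / 2) (1 / 2) with hr
  have hr0 : 0 < r := by positivity
  have hrε : r < ε := by have := min_le_left (ε / 2) (1 / 2); linarith
  have hr1 : r ≤ 1 / 2 := min_le_right _ _
  have box : ∀ t ∈ Icc (ts - r) ts, ∀ x ∈ Icc (xs - r) (xs + r), dist (r, x, t) o < ε := by
    intro t ht x hx
    rw [ho, Prod.dist_eq, Prod.dist_eq, max_lt_iff, max_lt_iff, Real.dist_eq, Real.dist_eq,
      Real.dist_eq, abs_lt, abs_lt, abs_lt]
    simp only
    refine ⟨⟨by linarith, by linarith⟩, ⟨by linarith [hx.1], by linarith [hx.2]⟩,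
      by linarith [ht.1], by linarith [ht.2]⟩
  have inK : ∀ t ∈ Icc (ts - r) ts, ∀ x ∈ Icc (xs - r) (xs + r),
      x ∈ Icc (-A) (N - A) ∧ t ∈ Icc (1 : ℝ) 3 := by
    intro t ht x hx
    have h := ev (box t ht x hx)
    have h1 := h.1.2
    have h2 := h.2
    simp only [Function.comp_apply] at h1 h2
    exact ⟨⟨h1.1.le, h1.2.le⟩, h2.le, ht.2.trans hts.2⟩
  have Zp : ∀ t ∈ Icc (ts - r) ts, ∀ x ∈ Icc (xs - r) (xs + r), 0 < Z x t := fun t ht x hx => by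
    have := hZq x (inK t ht x hx).1 t (inK t ht x hx).2; linarith
  set ψ : ℝ → ℝ → ℝ := fun x t => √(Z x t) + r * (x - xs) ^ 2 + r * (ts - t) with hψ
  have dpx : ∀ t ∈ Icc (ts - r) ts, ∀ x ∈ Icc (xs - r) (xs + r),
      HasDerivAt (fun y => px r y t) (pxx r x t) x := by
    intro t ht x hx
    refine HasDerivAt.congr_deriv (f := fun y => px r y t) ((Z_deriv2 hN0 (Zp t ht x hx)).add
      (((hasDerivAt_id x).sub_const xs).const_mul (2 * r))) ?_
    simp only [hpxx, hZd]; ring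
  have c1 : ∀ t ∈ Icc (ts - r) ts, ContinuousOn (fun x => px r x t) (Icc (xs - r) (xs + r)) :=
    fun t ht x hx => (dpx t ht x hx).continuousAt.continuousWithinAt
  have sl : ∀ t, Continuous (fun x => Z x t) := fun t =>
    hZc.comp (continuous_id.prodMk continuous_const)
  have c2 : ∀ t ∈ Icc (ts - r) ts, ContinuousOn (fun x => pxx r x t) (Icc (xs - r) (xs + r)) := by
    intro t ht
    simp only [hpxx]
    refine (continuousOn_const.div (continuousOn_const.mul ((sl t).mul (sl t).sqrt).continuousOn)
      ?_).neg.add continuousOn_const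
    intro x hx
    have h1 := Zp t ht x hx
    have h2 := Real.sqrt_pos.2 h1
    exact (show 0 < 4 * N ^ 2 * (Z x t * √(Z x t)) by positivity).ne'
  have fin := comp1 S (α' := xs - r) (β' := xs + r) (s1 := ts - r) (s2 := ts) (by linarith)
    (by linarith) ?_ (ψ := ψ) (px := px r) (γ := fun x t => px r x t ^ (m - 1) * pxx r x t)
    (κ := M - r * r ^ 2) (Cp := c + 1) (CA := |px o.1 o.2.1 o.2.2 ^ m / m| + 1)
    ?_ ?_ ?_ c1 ?_ ?_ ?_ ?_ ?_ ?_ ?_ ?_ ?_ xs ⟨by linarith, by linarith⟩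
  · simp only [hψ] at fin
    have : 0 < r * r ^ 2 := by positivity
    nlinarith
  · intro x hx t ht
    have h := ev (box t ht x hx)
    have h1 := h.1.1.2
    simp only at h1
    have := (inK t ht x hx).2.1
    exact all_good S (by linarith) h1.1 h1.2
  · simp only [hψ]
    fun_prop
  · intro t ht x hx
    refine HasDerivAt.congr_deriv (f := fun y => ψ y t) (((Z_deriv hN0 (Zp t ht x hx)).add
      ((((hasDerivAt_id x).sub_const xs).pow 2).const_mul r)).add_const (r * (ts - t))) ?_
    simp only [hpx, hZd, id]; push_cast; ring
  · intro t ht x hx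
    exact (ev (box t ht x hx)).1.1.1.1.1
  · intro t ht x hx
    exact (ev (box t ht x hx)).1.1.1.1.2.le
  · simp only [hpx]
    have := hbc.measurable
    fun_prop
  · intro t ht x hx
    exact (ev (box t ht x hx)).1.1.1.2.1.le
  · intro t ht x hx
    have hp0 : 0 < px r x t := (ev (box t ht x hx)).1.1.1.1.1
    refine HasDerivAt.congr_deriv (f := fun y => px r y t ^ m / m)
      (((dpx t ht x hx).rpow_const (p := m) (Or.inl hp0.ne')).div_const m) ?_
    have : m ≠ 0 := by have := S.hm; linarith
    field_simp
  · intro t ht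
    refine ContinuousOn.mul ((c1 t ht).rpow_const ?_) (c2 t ht)
    intro x hx
    have hp0 : 0 < px r x t := (ev (box t ht x hx)).1.1.1.1.1
    exact Or.inl hp0.ne'
  · intro t ht x hx h hh
    have f1 : px r x t ^ (m - 1) * pxx r x t + 1 / (2 * √(Z x t)) + r < 0 :=
      (ev (box t ht x hx)).1.1.1.2.2
    have f2 := sqrt_conc (Zp t ht x hx) hh
    have f3 : Z x (t - h) = Z x t + h := by simp only [hZd]; ring
    have f4 := mul_lt_mul_of_pos_left f1 hh
    simp only [hψ, f3]
    linarith
  · intro t ht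
    have h1 := inK t ht (xs - r) ⟨le_rfl, by linarith⟩
    have h2 := hM _ h1.1 _ h1.2
    have h3 : 0 ≤ r * (ts - t) := mul_nonneg hr0.le (by linarith [ht.2])
    simp only [hψ]
    have : r * (xs - r - xs) ^ 2 = r * r ^ 2 := by ring
    linarith
  · intro t ht
    have h1 := inK t ht (xs + r) ⟨by linarith, le_rfl⟩
    have h2 := hM _ h1.1 _ h1.2
    have h3 : 0 ≤ r * (ts - t) := mul_nonneg hr0.le (by linarith [ht.2])
    simp only [hψ]
    have : r * (xs + r - xs) ^ 2 = r * r ^ 2 := by ring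
    linarith
  · intro x hx
    have h1 := inK (ts - r) ⟨le_rfl, by linarith⟩ x hx
    have h2 := hM _ h1.1 _ h1.2
    simp only [hψ]
    have h3 : 0 ≤ r * (x - xs) ^ 2 := by positivity
    have h4 : r * (ts - (ts - r)) = r * r := by ring
    have h5 : r * r ^ 2 ≤ r * r := by
      apply mul_le_mul_of_nonneg_left _ hr0.le
      nlinarith
    linarith


lemma no_sol {m : ℝ} {u : ℝ → ℝ → ℝ} (S : Sol m u)
    (hbot : ∀ t, 0 < t → Tendsto (fun x => u x t) atBot (𝓝 0))
    (htop : ∀ t, 0 < t → Tendsto (fun x => u x t) atTop (𝓝 1)) : False := by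
  have hA : ∃ a, ∀ t ∈ Icc (1 : ℝ) 3 ∩ Ioi 0, u a t ≤ 1 / 2 := by
    refine (isCompact_Icc (a := (1 : ℝ)) (b := 3)).induction_on
      (p := fun s => ∃ a, ∀ t ∈ s ∩ Ioi 0, u a t ≤ 1 / 2) ?_ ?_ ?_ ?_
    · exact ⟨0, fun t ht => absurd ht.1 (notMem_empty t)⟩
    · rintro s s' hs ⟨a, ha⟩
      exact ⟨a, fun t ht => ha t ⟨hs ht.1, ht.2⟩⟩
    · rintro s s' ⟨a, ha⟩ ⟨a', ha'⟩
      refine ⟨min a a', ?_⟩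
      rintro t ⟨h | h, h0⟩
      · exact (S.mono t h0 (min_le_left a a')).trans (ha t ⟨h, h0⟩)
      · exact (S.mono t h0 (min_le_right a a')).trans (ha' t ⟨h, h0⟩)
    · intro t ht
      obtain ⟨a, ha⟩ := ((hbot t (by linarith [ht.1])).eventually
        (gt_mem_nhds (show (0 : ℝ) < 1 / 2 by norm_num))).exists
      have hc : Continuous (fun s => u a s) := S.cont.comp (continuous_const.prodMk continuous_id)
      refine ⟨{s | u a s < 1 / 2}, mem_nhdsWithin_of_mem_nhds
        ((isOpen_lt hc continuous_const).mem_nhds ha), a, fun s hs => ?_⟩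
      exact le_of_lt hs.1
  obtain ⟨a, ha⟩ := hA
  obtain ⟨x, hx1, hx2⟩ := (((htop 3 (by norm_num)).eventually
    (lt_mem_nhds (show (3 / 4 : ℝ) < 1 by norm_num))).and (eventually_ge_atTop a)).exists
  have hN : (1 : ℝ) ≤ 1 + 4 * (x - a) := by linarith
  have := barrier S (A := -a) (N := 1 + 4 * (x - a)) hN
    (fun t ht => by rw [neg_neg]; exact ha t ⟨ht, by have := ht.1; simp only [mem_Ioi]; linarith⟩)
    (x := x) ⟨by linarith, by linarith⟩
  have h2 : (x + -a) / (1 + 4 * (x - a)) ≤ 5 / 16 := by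
    rw [div_le_iff₀ (by linarith)]; linarith
  have h3 : √(1 / 4 + (x + -a) / (1 + 4 * (x - a))) ≤ 3 / 4 := by
    apply Real.sqrt_le_iff.2
    constructor
    · norm_num
    · linarith
  linarith

lemma slice_zero {φ : ℝ → ℝ → ℝ} {p : ℝ × ℝ} (h : p ∉ tsupport (fun p : ℝ × ℝ => φ p.1 p.2)) :
    deriv (fun s => φ p.1 s) p.2 = 0 ∧ deriv (fun y => φ y p.2) p.1 = 0 := by
  have h0 := notMem_tsupport_iff_eventuallyEq.1 h
  constructor
  · have : (fun s => φ p.1 s) =ᶠ[𝓝 p.2] fun _ => 0 := by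
      have hc : Tendsto (fun s : ℝ => (p.1, s)) (𝓝 p.2) (𝓝 p) :=
        (Continuous.prodMk_right p.1).tendsto p.2
      exact hc.eventually h0
    rw [this.deriv_eq, deriv_const]
  · have : (fun s => φ s p.2) =ᶠ[𝓝 p.1] fun _ => 0 := by
      have hc : Tendsto (fun s : ℝ => (s, p.2)) (𝓝 p.1) (𝓝 p) :=
        (Continuous.prodMk_left p.2).tendsto p.1
      exact hc.eventually h0
    rw [this.deriv_eq, deriv_const]

/-- Theorem 5.1, nonexistence part, of Barenblatt–Vázquez.
For `m ≤ -1` and `Φ(s) = s^m/m` (for `s > 0`), the Cauchy problem with nondecreasing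
continuous bounded data `u₀` joining the levels `0` and `1` has no continuous weak
solution in the class of functions `0 ≤ u ≤ 1` whose profiles `u(·,t)` are
nondecreasing, with positive gradient where `0 < u < 1`, and join `0` at `-∞`
to `1` at `+∞`. -/
theorem typeI_nonexistence
    (m : ℝ) (hm : m ≤ -1) (Φ : ℝ → ℝ)
    (hΦ : ∀ s : ℝ, 0 < s → Φ s = s ^ m / m)
    (u₀ : ℝ → ℝ) (hu₀cont : Continuous u₀) (hu₀mono : Monotone u₀)
    (hu₀01 : ∀ x, 0 ≤ u₀ x ∧ u₀ x ≤ 1)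
    (hu₀bot : Tendsto u₀ atBot (𝓝 0)) (hu₀top : Tendsto u₀ atTop (𝓝 1)) :
    ¬ ∃ u : ℝ → ℝ → ℝ,
      (∀ x t : ℝ, 0 ≤ t → 0 ≤ u x t ∧ u x t ≤ 1) ∧
      (∀ t : ℝ, 0 < t →
        Monotone (fun x => u x t) ∧
        (∀ x : ℝ, 0 < u x t → u x t < 1 → 0 < deriv (fun y => u y t) x) ∧
        Tendsto (fun x => u x t) atBot (𝓝 0) ∧
        Tendsto (fun x => u x t) atTop (𝓝 1)) ∧
      IsWeakSolution Φ u₀ u := by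
  rintro ⟨u, hbd, hpr, hcont, -, hc1, hweak⟩
  have hve : ∀ t : ℝ, 0 < t → ∀ x, u x (max t 0) = u x t := fun t ht x => by rw [max_eq_left ht.le]
  have hfe : ∀ t : ℝ, 0 < t → (fun x => u x (max t 0)) = fun x => u x t := fun t ht =>
    funext (hve t ht)
  have S : Sol m (fun x t => u x (max t 0)) := by
    refine ⟨hm, ?_, ?_, ?_, fun x t => (hbd x _ (le_max_right _ _)).1,
      fun x t => (hbd x _ (le_max_right _ _)).2, ?_, ?_⟩
    · exact hcont.comp_continuous (f := fun p : ℝ × ℝ => (p.1, max p.2 0)) (by fun_prop)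
        (fun p => ⟨mem_univ _, le_max_right p.2 0⟩)
    · intro t ht
      simp only [hve t ht]; exact (hpr t ht).1
    · intro t ht
      simp only [hve t ht]; exact hc1 t ht
    · intro t ht x
      simp only [hve t ht]; exact (hpr t ht).2.1 x
    · intro φ hφ hφc hφs
      have hsub : tsupport (fun p : ℝ × ℝ => φ p.1 p.2) ⊆ (Set.univ : Set ℝ) ×ˢ Set.Ioi 0 :=
        fun p hp => ⟨mem_univ _, (hφs hp).1⟩
      refine Eq.trans ?_ (hweak φ hφ hφc hsub)
      rw [← setIntegral_eq_integral_of_forall_compl_eq_zero (s := (Set.univ : Set ℝ) ×ˢ Set.Ioi 0)]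
      · apply setIntegral_congr_fun (MeasurableSet.univ.prod measurableSet_Ioi)
        intro p hp
        have hp2 : 0 < p.2 := hp.2
        by_cases hps : p ∈ tsupport (fun p : ℝ × ℝ => φ p.1 p.2)
        · have h := hφs hps
          simp only [mem_ofPred_eq, hve p.2 hp2] at h
          simp only [TT, hve p.2 hp2]
          rw [hΦ _ ((hpr p.2 hp2).2.1 p.1 h.2.1 h.2.2)]
        · obtain ⟨h1, h2⟩ := slice_zero hps
          simp only [h1, h2, mul_zero]
      · intro p hp
        obtain ⟨h1, h2⟩ := slice_zero (fun h => hp (hsub h))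
        simp only [h1, h2, mul_zero, sub_zero]
  exact no_sol S (fun t ht => by simp only [hve t ht]; exact (hpr t ht).2.2.1)
    (fun t ht => by simp only [hve t ht]; exact (hpr t ht).2.2.2)
end

section
/- Let m > -1 and let v be a nonnegative classical (smooth, positive where the equation is evaluated) solution of v_t = ∂ₓ²(v^m/m) on ℝ × (0,∞) (interpreted as v_t = ∂ₓ²(log v) when m = 0), with conserved unit mass: ∫_ℝ v(x,t) dx = 1 for all t > 0. Then the uniform norm decays at the exact rate t^{-1/(m+1)}: there exist constants 0 < c₁ ≤ c₂ < ∞ and t* > 0 such that c₁ t^{-1/(m+1)} ≤ sup_{x∈ℝ} v(x,t) ≤ c₂ t^{-1/(m+1)} for all t ≥ t*. -/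
open Set Filter Topology MeasureTheory


structure FSol (m : ℝ) (Φ : ℝ → ℝ) (v vx vt : ℝ → ℝ → ℝ) : Prop where
  pos : ∀ x t : ℝ, 0 < t → 0 < v x t
  dPhi : ∀ s : ℝ, 0 < s → HasDerivAt Φ (s ^ (m - 1)) s
  cv : ContinuousOn (fun p : ℝ × ℝ => v p.1 p.2) (univ ×ˢ Ioi 0)
  cx : ContinuousOn (fun p : ℝ × ℝ => vx p.1 p.2) (univ ×ˢ Ioi 0)
  ct : ContinuousOn (fun p : ℝ × ℝ => vt p.1 p.2) (univ ×ˢ Ioi 0)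
  dx : ∀ x t : ℝ, 0 < t → HasDerivAt (fun y => v y t) (vx x t) x
  dt : ∀ x t : ℝ, 0 < t → HasDerivAt (fun s => v x s) (vt x t) t
  dq : ∀ x t : ℝ, 0 < t → HasDerivAt (fun y => v y t ^ (m - 1) * vx y t) (vt x t) x
  int : ∀ t : ℝ, 0 < t → Integrable (fun x => v x t)
  mass : ∀ t : ℝ, 0 < t → ∫ x : ℝ, v x t = 1

theorem fs_second_test {f f' : ℝ → ℝ} {a c : ℝ} (hmax : IsLocalMax f a)
    (hd : ∀ᶠ x in 𝓝 a, HasDerivAt f (f' x) x) (hc : HasDerivAt f' c a) :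
    f' a = 0 ∧ c ≤ 0 := by
  have h1 : f' a = 0 := hmax.hasDerivAt_eq_zero hd.self_of_nhds
  refine ⟨h1, ?_⟩
  by_contra hcon
  push Not at hcon
  have e1 : deriv f =ᶠ[𝓝 a] f' := hd.mono fun x hx => hx.deriv
  have e2 : deriv (deriv f) a = c := by rw [e1.deriv_eq]; exact hc.deriv
  have hmin : IsLocalMin f a := isLocalMin_of_deriv_deriv_pos (by rw [e2]; exact hcon)
    (by rw [hd.self_of_nhds.deriv, h1]) hd.self_of_nhds.continuousAt
  have hconst : f =ᶠ[𝓝 a] fun _ => f a := by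
    filter_upwards [hmax, hmin] with x h1 h2 using le_antisymm h1 h2
  have h3 : deriv f =ᶠ[𝓝 a] fun _ => 0 := by
    have := hconst.deriv
    simpa using this
  have h4 : deriv (deriv f) a = 0 := by rw [h3.deriv_eq]; simp
  linarith

theorem fs_right {f : ℝ → ℝ} {a c : ℝ} (hd : HasDerivAt f c a)
    (h : ∀ᶠ x in 𝓝[>] a, f x ≤ f a) : c ≤ 0 := by
  have h1 : Tendsto (slope f a) (𝓝[>] a) (𝓝 c) :=
    (hasDerivAt_iff_tendsto_slope.1 hd).mono_left (nhdsWithin_mono _ fun x hx => ne_of_gt hx)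
  refine le_of_tendsto h1 ?_
  filter_upwards [h, self_mem_nhdsWithin] with x hx hxa
  rw [slope_def_field]
  exact div_nonpos_of_nonpos_of_nonneg (by linarith) (by have : a < x := hxa; linarith)

theorem fs_left {f : ℝ → ℝ} {a c : ℝ} (hd : HasDerivAt f c a)
    (h : ∀ᶠ x in 𝓝[<] a, f x ≤ f a) : 0 ≤ c := by
  have h1 : Tendsto (slope f a) (𝓝[<] a) (𝓝 c) :=
    (hasDerivAt_iff_tendsto_slope.1 hd).mono_left (nhdsWithin_mono _ fun x hx => ne_of_lt hx)
  refine ge_of_tendsto h1 ?_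
  filter_upwards [h, self_mem_nhdsWithin] with x hx hxa
  rw [slope_def_field]
  exact div_nonneg_of_nonpos (by linarith) (by have : x < a := hxa; linarith)

theorem fs_sec_t {F : ℝ → ℝ → ℝ} (hF : ContinuousOn (fun p : ℝ × ℝ => F p.1 p.2) (univ ×ˢ Ioi 0))
    (x : ℝ) : ContinuousOn (fun t => F x t) (Ioi 0) :=
  hF.comp (f := fun t : ℝ => (x, t)) (by fun_prop) (fun t ht => ⟨mem_univ _, ht⟩)

theorem fs_sec_x {F : ℝ → ℝ → ℝ} (hF : ContinuousOn (fun p : ℝ × ℝ => F p.1 p.2) (univ ×ˢ Ioi 0))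
    {t : ℝ} (ht : 0 < t) : Continuous (fun x => F x t) :=
  hF.comp_continuous (f := fun x : ℝ => (x, t)) (by fun_prop) (fun x => ⟨mem_univ _, ht⟩)

theorem fs_uIcc {s t : ℝ} (hs : 0 < s) (ht : 0 < t) : uIcc s t ⊆ Ioi 0 := fun x hx =>
  lt_of_lt_of_le (lt_min hs ht) hx.1

theorem fs_ii_t {F : ℝ → ℝ → ℝ} (hF : ContinuousOn (fun p : ℝ × ℝ => F p.1 p.2) (univ ×ˢ Ioi 0))
    (x : ℝ) {s t : ℝ} (hs : 0 < s) (ht : 0 < t) :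
    IntervalIntegrable (fun τ => F x τ) volume s t :=
  ((fs_sec_t hF x).mono (fs_uIcc hs ht)).intervalIntegrable

theorem fs_swap {F : ℝ → ℝ → ℝ} (hF : ContinuousOn (fun p : ℝ × ℝ => F p.1 p.2) (univ ×ˢ Ioi 0))
    {s t : ℝ} (hs : 0 < s) (ht : 0 < t) (a b : ℝ) :
    ∫ x in a..b, ∫ τ in s..t, F x τ = ∫ τ in s..t, ∫ x in a..b, F x τ := by
  apply intervalIntegral_intervalIntegral_swap
  have h : IntegrableOn (Function.uncurry F) (uIcc a b ×ˢ uIcc s t) (volume.prod volume) := by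
    apply ContinuousOn.integrableOn_compact (isCompact_uIcc.prod isCompact_uIcc)
    exact hF.mono (prod_mono (subset_univ _) (fs_uIcc hs ht))
  exact h.mono_set (prod_mono uIoc_subset_uIcc uIoc_subset_uIcc)

namespace FSol
variable {m : ℝ} {Φ : ℝ → ℝ} {v vx vt : ℝ → ℝ → ℝ}

theorem cq (S : FSol m Φ v vx vt) :
    ContinuousOn (fun p : ℝ × ℝ => v p.1 p.2 ^ (m - 1) * vx p.1 p.2) (univ ×ˢ Ioi 0) :=
  (S.cv.rpow_const fun p hp => Or.inl (S.pos _ _ hp.2).ne').mul S.cx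

theorem cPhi (S : FSol m Φ v vx vt) :
    ContinuousOn (fun p : ℝ × ℝ => Φ (v p.1 p.2)) (univ ×ˢ Ioi 0) := by
  intro p hp
  exact ContinuousAt.comp_continuousWithinAt (g := Φ) (f := fun p : ℝ × ℝ => v p.1 p.2)
    (S.dPhi _ (S.pos p.1 p.2 hp.2)).continuousAt (S.cv p hp)

theorem dPhiv (S : FSol m Φ v vx vt) (x : ℝ) {t : ℝ} (ht : 0 < t) :
    HasDerivAt (fun y => Φ (v y t)) (v x t ^ (m - 1) * vx x t) x :=
  (S.dPhi _ (S.pos x t ht)).comp x (S.dx x t ht)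

theorem Phi_mono (S : FSol m Φ v vx vt) : MonotoneOn Φ (Ioi 0) := by
  apply monotoneOn_of_deriv_nonneg (convex_Ioi 0)
  · exact fun s hs => (S.dPhi s hs).continuousAt.continuousWithinAt
  · rw [interior_Ioi]; exact fun s hs => (S.dPhi s hs).differentiableAt.differentiableWithinAt
  · rw [interior_Ioi]; intro s hs; rw [(S.dPhi s hs).deriv]; exact Real.rpow_nonneg (le_of_lt hs) _

theorem ii (S : FSol m Φ v vx vt) {t : ℝ} (ht : 0 < t) (a b : ℝ) :
    IntervalIntegrable (fun x => v x t) volume a b := (S.int t ht).intervalIntegrable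

theorem w_diff (S : FSol m Φ v vx vt) {s t : ℝ} (hs : 0 < s) (ht : 0 < t) (a b : ℝ) :
    (∫ x in a..b, v x t) - (∫ x in a..b, v x s) =
      ∫ τ in s..t, (v b τ ^ (m - 1) * vx b τ - v a τ ^ (m - 1) * vx a τ) := by
  rw [← intervalIntegral.integral_sub (S.ii ht a b) (S.ii hs a b)]
  have h1 : ∀ x, v x t - v x s = ∫ τ in s..t, vt x τ := fun x => by
    rw [intervalIntegral.integral_eq_sub_of_hasDerivAt]
    · exact fun τ hτ => S.dt x τ (fs_uIcc hs ht hτ)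
    · exact fs_ii_t S.ct x hs ht
  simp_rw [h1]
  rw [fs_swap S.ct hs ht]
  apply intervalIntegral.integral_congr
  intro τ hτ
  have hτ0 : 0 < τ := fs_uIcc hs ht hτ
  simp only
  rw [intervalIntegral.integral_eq_sub_of_hasDerivAt (f := fun y => v y τ ^ (m - 1) * vx y τ)]
  · exact fun x _ => S.dq x τ hτ0
  · exact (fs_sec_x S.ct hτ0).intervalIntegrable _ _

theorem fs_ftc {f : ℝ → ℝ} (hf : ContinuousOn f (Ioi 0)) {s t : ℝ} (hs : 0 < s) (ht : 0 < t) :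
    HasDerivAt (fun t => ∫ τ in s..t, f τ) (f t) t := by
  apply intervalIntegral.integral_hasDerivAt_right
  · exact (hf.mono (fs_uIcc hs ht)).intervalIntegrable
  · exact hf.stronglyMeasurableAtFilter isOpen_Ioi _ ht
  · exact hf.continuousAt (Ioi_mem_nhds ht)

theorem w_dt (S : FSol m Φ v vx vt) {t : ℝ} (ht : 0 < t) (a b : ℝ) :
    HasDerivAt (fun s => ∫ x in a..b, v x s)
      (v b t ^ (m - 1) * vx b t - v a t ^ (m - 1) * vx a t) t := by
  have h := fs_ftc ((fs_sec_t (F := fun x t => v x t ^ (m - 1) * vx x t) S.cq b).sub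
    (fs_sec_t (F := fun x t => v x t ^ (m - 1) * vx x t) S.cq a)) ht ht
  refine (h.add_const (∫ x in a..b, v x t)).congr_of_eventuallyEq ?_
  filter_upwards [Ioi_mem_nhds ht] with s hs
  have := S.w_diff ht hs a b
  simp only [Pi.sub_apply] 
  linarith

theorem w_dy (S : FSol m Φ v vx vt) {t : ℝ} (ht : 0 < t) (a b : ℝ) :
    HasDerivAt (fun y => ∫ x in a..y, v x t) (v b t) b :=
  (fs_sec_x S.cv ht).integral_hasStrictDerivAt a b |>.hasDerivAt

theorem w_dx (S : FSol m Φ v vx vt) {t : ℝ} (ht : 0 < t) (a b : ℝ) :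
    HasDerivAt (fun y => ∫ x in y..b, v x t) (-v a t) a := by
  have := (S.w_dy ht b a).neg
  refine this.congr_of_eventuallyEq (Eventually.of_forall fun y => ?_)
  simp only [Pi.neg_apply]
  rw [intervalIntegral.integral_symm]

theorem w_le_tail (S : FSol m Φ v vx vt) {t : ℝ} (ht : 0 < t) {a b c d : ℝ} (hab : a ≤ b)
    (hbc : b ≤ c) (hcd : c ≤ d) : ∫ x in b..c, v x t ≤ ∫ x in a..d, v x t := by
  apply intervalIntegral.integral_mono_interval hab hbc hcd
  · exact Eventually.of_forall fun x => (S.pos x t ht).le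
  · exact S.ii ht a d

theorem w_le_one (S : FSol m Φ v vx vt) {t : ℝ} (ht : 0 < t) {a b : ℝ} (hab : a ≤ b) :
    ∫ x in a..b, v x t ≤ 1 := by
  rw [← S.mass t ht, intervalIntegral.integral_of_le hab]
  exact setIntegral_le_integral (S.int t ht) (Eventually.of_forall fun x => (S.pos x t ht).le)

theorem tight (S : FSol m Φ v vx vt) {s t : ℝ} (hs : 0 < s) {ε : ℝ} (hε : 0 < ε) :
    ∃ R : ℝ, 0 < R ∧ ∀ τ ∈ Icc s t, 1 - ε < ∫ x in (-R)..R, v x τ := by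
  have hp : ∀ τ ∈ Icc s t, 0 < τ := fun τ hτ => lt_of_lt_of_le hs hτ.1
  have h := Monotone.tendstoUniformlyOn_of_forall_tendsto (ι := ℕ) (s := Icc s t)
    (F := fun n τ => ∫ x in (-(n:ℝ))..(n:ℝ), v x τ) (f := fun _ => (1:ℝ)) isCompact_Icc
    (fun n τ hτ => (S.w_dt (hp τ hτ) _ _).continuousAt.continuousWithinAt)
    (fun τ hτ a b hab => by
      have : (a:ℝ) ≤ b := by exact_mod_cast hab
      exact S.w_le_tail (hp τ hτ) (by linarith) (by have : (0:ℝ) ≤ a := by positivity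
                                                    linarith) this)
    continuousOn_const
    (fun τ hτ => by
      rw [← S.mass τ (hp τ hτ)]
      exact intervalIntegral_tendsto_integral (S.int τ (hp τ hτ))
        (tendsto_neg_atTop_atBot.comp tendsto_natCast_atTop_atTop) tendsto_natCast_atTop_atTop)
  rw [Metric.tendstoUniformlyOn_iff] at h
  obtain ⟨n, hn, hn1⟩ := ((h ε hε).and (eventually_ge_atTop 1)).exists
  refine ⟨n, by exact_mod_cast hn1, fun τ hτ => ?_⟩
  have := hn τ hτ
  rw [Real.dist_eq] at this
  have := (abs_lt.1 this).2
  linarith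

/-- joint continuity -/
theorem w_cont (S : FSol m Φ v vx vt) {t1 : ℝ} (ht : 0 < t1) :
    Continuous (fun p : ℝ × ℝ × ℝ => ∫ x in p.1..p.2.1, v x (max p.2.2 t1)) := by
  have hc : Continuous (fun q : ℝ × ℝ => v q.1 (max q.2 t1)) :=
    S.cv.comp_continuous (f := fun q : ℝ × ℝ => (q.1, max q.2 t1)) (by fun_prop)
      (fun q => ⟨mem_univ _, lt_of_lt_of_le ht (le_max_right _ _)⟩)
  have hf : Continuous (Function.uncurry fun (p : ℝ × ℝ × ℝ) (x : ℝ) => v x (max p.2.2 t1)) :=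
    hc.comp (g := fun q : ℝ × ℝ => v q.1 (max q.2 t1))
      (f := fun r : (ℝ × ℝ × ℝ) × ℝ => (r.2, r.1.2.2)) (by fun_prop)
  have h1 := intervalIntegral.continuous_parametric_intervalIntegral_of_continuous
    (μ := volume) (a₀ := 0) hf (s := fun p => p.2.1) (by fun_prop)
  have h2 := intervalIntegral.continuous_parametric_intervalIntegral_of_continuous
    (μ := volume) (a₀ := 0) hf (s := fun p => p.1) (by fun_prop)
  convert h1.sub h2 using 2 with p
  have h0 : 0 < max p.2.2 t1 := lt_of_lt_of_le ht (le_max_right _ _)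
  exact (intervalIntegral.integral_interval_sub_left (S.ii h0 _ _) (S.ii h0 _ _)).symm

end FSol
namespace FSol
variable {m : ℝ} {Φ : ℝ → ℝ} {v vx vt : ℝ → ℝ → ℝ}

theorem w_split (S : FSol m Φ v vx vt) {t : ℝ} (ht : 0 < t) (a b c : ℝ) :
    (∫ x in a..b, v x t) + (∫ x in b..c, v x t) = ∫ x in a..c, v x t :=
  intervalIntegral.integral_add_adjacent_intervals (S.ii ht _ _) (S.ii ht _ _)

theorem tail_r (S : FSol m Φ v vx vt) {t R ε x y : ℝ} (ht : 0 < t) (hR : 0 < R)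
    (h : 1 - ε < ∫ x in (-R)..R, v x t) (hx : R ≤ x) (hxy : x ≤ y) :
    ∫ ξ in x..y, v ξ t < ε := by
  have h1 := S.w_split ht (-R) x y
  have h2 := S.w_le_one ht (a := -R) (b := y) (by linarith)
  have h3 := S.w_le_tail ht (a := -R) (b := -R) (c := R) (d := x) le_rfl (by linarith) hx
  linarith

theorem tail_l (S : FSol m Φ v vx vt) {t R ε x y : ℝ} (ht : 0 < t) (hR : 0 < R)
    (h : 1 - ε < ∫ x in (-R)..R, v x t) (hy : y ≤ -R) (hxy : x ≤ y) :
    ∫ ξ in x..y, v ξ t < ε := by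
  have h1 := S.w_split ht x y R
  have h2 := S.w_le_one ht (a := x) (b := R) (by linarith)
  have h3 := S.w_le_tail ht (a := y) (b := -R) (c := R) (d := R) hy (by linarith) le_rfl
  linarith

theorem upper_aux (S : FSol m Φ v vx vt) {A A' : ℝ → ℝ} {t0 T : ℝ} (ht0 : 0 < t0) (hT : t0 < T)
    (hA : ∀ t ∈ Ioc t0 T, 0 < A t) (hA' : ∀ t ∈ Ioc t0 T, HasDerivAt A (A' t) t)
    (hAT : ∀ t ∈ Ioc t0 T, A T ≤ A t)
    (hbig : ∀ M : ℝ, ∃ t1 ∈ Ioo t0 T, M ≤ A t1)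
    (hstrict : ∀ t ∈ Ioc t0 T, ∀ z : ℝ, 0 ≤ z → A t * z ≤ 1 / 2 →
      -(4 * (A t * (3 - 2 * (A t * z))) ^ (m - 1) * A t ^ 2) < A' t * z * (3 - 2 * (A t * z)))
    {ε : ℝ} (hε : 0 < ε) (x0 y0 : ℝ) (hxy0 : x0 ≤ y0) (hy0 : A T * (y0 - x0) ≤ 1 / 2) :
    ∫ x in x0..y0, v x T ≤ 3 * (A T * (y0 - x0)) - (A T * (y0 - x0)) ^ 2 + ε := by
  by_contra hcon
  push Not at hcon
  have hATpos : 0 < A T := hA T ⟨hT, le_rfl⟩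
  obtain ⟨R0, hR0, htight0⟩ := S.tight (s := t0) (t := T) ht0 hε
  obtain ⟨R, hR, hRx, htight⟩ : ∃ R : ℝ, 0 < R ∧ |x0| ≤ R ∧
      ∀ τ ∈ Icc t0 T, 1 - ε < ∫ x in (-R)..R, v x τ := by
    refine ⟨max R0 |x0|, lt_of_lt_of_le hR0 (le_max_left _ _), le_max_right _ _, fun τ hτ => ?_⟩
    refine lt_of_lt_of_le (htight0 τ hτ) (S.w_le_tail (lt_of_lt_of_le ht0 hτ.1) ?_ (by linarith) (le_max_left _ _))
    have := le_max_left R0 |x0|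
    linarith
  set L : ℝ := 1 / (2 * A T) with hL
  have hLpos : 0 < L := by positivity
  set N : ℝ := R + L with hN
  obtain ⟨M, hM⟩ : ∃ M, ∀ x ∈ Icc (-N) (N + L), ∀ t ∈ Icc t0 T, v x t ≤ M := by
    have hK : IsCompact (Icc (-N) (N + L) ×ˢ Icc t0 T) := isCompact_Icc.prod isCompact_Icc
    obtain ⟨M, hM⟩ := (hK.bddAbove_image (f := fun p : ℝ × ℝ => v p.1 p.2) (S.cv.mono fun p hp => ⟨mem_univ _, lt_of_lt_of_le ht0 hp.2.1⟩))
    exact ⟨M, fun x hx t ht => hM ⟨(x, t), ⟨hx, ht⟩, rfl⟩⟩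
  obtain ⟨t1, ht1, hMt1⟩ := hbig (M / 2)
  have htp : ∀ t ∈ Icc t1 T, t ∈ Ioc t0 T := fun t ht => ⟨lt_of_lt_of_le ht1.1 ht.1, ht.2⟩
  have hzL : ∀ t ∈ Icc t1 T, ∀ z, 0 ≤ z → A t * z ≤ 1 / 2 → z ≤ L := by
    intro t ht z hz h
    rw [hL, le_div_iff₀ (by positivity)]
    have := mul_le_mul_of_nonneg_right (hAT t (htp t ht)) hz
    linarith
  set K : Set (ℝ × ℝ × ℝ) := Icc (-N) N ×ˢ Icc (0:ℝ) (1/2) ×ˢ Icc t1 T with hKdef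
  have hKc : IsCompact K := isCompact_Icc.prod (isCompact_Icc.prod isCompact_Icc)
  set f : ℝ × ℝ × ℝ → ℝ := fun p => (∫ x in p.1..(p.1 + p.2.1 / A p.2.2), v x p.2.2) - (3 * p.2.1 - p.2.1 ^ 2) with hf
  have hfc : ContinuousOn f K := by
    have hAc : ContinuousOn (fun p : ℝ × ℝ × ℝ => A p.2.2) K := by
      intro p hp
      exact ContinuousAt.comp_continuousWithinAt (g := A) (f := fun p : ℝ × ℝ × ℝ => p.2.2)
        (hA' _ (htp _ hp.2.2)).continuousAt (by fun_prop)
    have h1 : ContinuousOn (fun p : ℝ × ℝ × ℝ => (p.1, p.1 + p.2.1 / A p.2.2, p.2.2)) K := by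
      refine ContinuousOn.prodMk (by fun_prop) (ContinuousOn.prodMk (ContinuousOn.add (by fun_prop) ?_) (by fun_prop))
      exact ContinuousOn.div (by fun_prop) hAc fun p hp => (hA _ (htp _ hp.2.2)).ne'
    have h2 := (S.w_cont (lt_trans ht0 ht1.1)).comp_continuousOn h1
    refine ContinuousOn.sub (h2.congr ?_) (by fun_prop)
    intro p hp
    simp only [Function.comp]
    rw [max_eq_left hp.2.2.1]
  have hx0N : x0 ∈ Icc (-N) N := by
    rw [abs_le] at hRx
    constructor <;> linarith [hRx.1, hRx.2]
  have hmem0 : (x0, A T * (y0 - x0), T) ∈ K :=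
    ⟨hx0N, ⟨mul_nonneg hATpos.le (by linarith), hy0⟩, ⟨ht1.2.le, le_rfl⟩⟩
  obtain ⟨⟨x, η, t⟩, hpK, hpmax⟩ := hKc.exists_isMaxOn ⟨_, hmem0⟩ hfc
  obtain ⟨hx, hη, ht⟩ : x ∈ Icc (-N) N ∧ η ∈ Icc (0:ℝ) (1/2) ∧ t ∈ Icc t1 T := hpK
  have hAt : 0 < A t := hA t (htp t ht)
  have htpos : 0 < t := lt_trans ht0 (htp t ht).1
  obtain ⟨z, hz⟩ : ∃ z, z = η / A t := ⟨_, rfl⟩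
  have hηz : η = A t * z := by rw [hz]; field_simp
  have hgt : ε < f (x, η, t) := by
    refine lt_of_lt_of_le ?_ (hpmax hmem0)
    simp only [hf]
    rw [mul_div_cancel_left₀ _ hATpos.ne']
    have : x0 + (y0 - x0) = y0 := by ring
    rw [this]; linarith
  have hmax : ∀ x' y' t', x' ∈ Icc (-N) N → t' ∈ Icc t1 T → 0 ≤ A t' * (y' - x') →
      A t' * (y' - x') ≤ 1 / 2 → (∫ ξ in x'..y', v ξ t') -
        (3 * (A t' * (y' - x')) - (A t' * (y' - x')) ^ 2) ≤
        (∫ ξ in x..(x + z), v ξ t) - (3 * (A t * z) - (A t * z) ^ 2) := by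
    intro x' y' t' hx' ht' h0 h1
    have := hpmax (show (x', A t' * (y' - x'), t') ∈ K from ⟨hx', ⟨h0, h1⟩, ht'⟩)
    simp only [hf, mem_setOf_eq] at this
    rw [mul_div_cancel_left₀ _ (hA t' (htp t' ht')).ne', ← hz, hηz] at this
    have e : x' + (y' - x') = y' := by ring
    rwa [e] at this
  have hgt' : ε < (∫ ξ in x..(x + z), v ξ t) - (3 * (A t * z) - (A t * z) ^ 2) := by
    simp only [hf, ← hz] at hgt; rwa [hηz] at hgt
  rw [hηz] at hη
  have hz0 : 0 ≤ z := by
    by_contra h; push Not at h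
    have := mul_neg_of_pos_of_neg hAt h
    linarith [hη.1]
  have hzL' := hzL t ht z hz0 hη.2
  have hP : 0 ≤ 3 * (A t * z) - (A t * z) ^ 2 := by nlinarith [hη.1, hη.2]
  have htt : t ∈ Icc t0 T := ⟨(htp t ht).1.le, ht.2⟩
  -- interior
  have hzpos : 0 < z := by
    rcases hz0.eq_or_lt with h | h
    · rw [← h] at hgt'; simp at hgt'; linarith
    · exact h
  have hlt : A t * z < 1 / 2 := by
    refine lt_of_le_of_ne hη.2 fun h => ?_
    rw [h] at hgt'
    have := S.w_le_one htpos (a := x) (b := x + z) (by linarith)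
    linarith
  have hx1 : -N < x := by
    refine lt_of_le_of_ne hx.1 fun h => ?_
    have := S.tail_l htpos hR (htight t htt) (x := x) (y := x + z) (by linarith) (by linarith)
    linarith
  have hx2 : x < N := by
    refine lt_of_le_of_ne hx.2 fun h => ?_
    have := S.tail_r htpos hR (htight t htt) (x := x) (y := x + z) (by linarith) (by linarith)
    linarith
  have htt1 : t1 < t := by
    refine lt_of_le_of_ne ht.1 fun h => ?_
    have hb : ∫ ξ in x..(x + z), v ξ t ≤ M * z := by
      have := intervalIntegral.integral_mono_on (a := x) (b := x + z) (by linarith) (S.ii htpos _ _)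
        (intervalIntegrable_const (c := M)) (fun ξ hξ => hM ξ ⟨by linarith [hξ.1], by linarith [hξ.2]⟩ t htt)
      simpa [mul_comm] using this
    rw [h] at hMt1
    have h3 : M * z ≤ 2 * A t * z := mul_le_mul_of_nonneg_right (by linarith) hz0
    nlinarith [hη.1]
  have hAz : 0 < A t * z := mul_pos hAt hzpos
  -- y derivative
  have hy := fs_second_test (f := fun y => (∫ ξ in x..y, v ξ t) -
        (3 * (A t * (y - x)) - (A t * (y - x)) ^ 2))
      (f' := fun y => v y t - (3 * A t - 2 * (A t * (y - x)) * A t)) (a := x + z)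
      (c := vx (x + z) t + 2 * A t ^ 2)
      (by
        have hc : Tendsto (fun y : ℝ => A t * (y - x)) (𝓝 (x + z)) (𝓝 (A t * z)) := by
          have : Continuous (fun y : ℝ => A t * (y - x)) := by fun_prop
          simpa using this.tendsto (x + z)
        filter_upwards [hc.eventually (Ioo_mem_nhds hAz hlt)] with y hy
        have := hmax x y t hx ht hy.1.le hy.2.le
        simpa using this)
      (Eventually.of_forall fun y => by
        have h1 := S.w_dy htpos x y
        have h2 : HasDerivAt (fun y => A t * (y - x)) (A t) y := by
          simpa using ((hasDerivAt_id y).sub_const x).const_mul (A t)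
        refine HasDerivAt.congr_deriv (h1.sub ((h2.const_mul 3).sub (h2.pow 2))) ?_
        simp only [pow_one, Nat.cast_ofNat, Nat.reduceSub])
      (by
        have h1 := S.dx (x + z) t htpos
        have h2 : HasDerivAt (fun y => A t * (y - x)) (A t) (x + z) := by
          simpa using ((hasDerivAt_id (x + z)).sub_const x).const_mul (A t)
        refine HasDerivAt.congr_deriv (h1.sub (((h2.const_mul 2).mul_const (A t)).const_sub (3 * A t))) ?_
        ring)
  have hxx := fs_second_test (f := fun x' => (∫ ξ in x'..(x + z), v ξ t) -
        (3 * (A t * (x + z - x')) - (A t * (x + z - x')) ^ 2))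
      (f' := fun x' => - v x' t + (3 * A t - 2 * (A t * (x + z - x')) * A t)) (a := x)
      (c := - vx x t + 2 * A t ^ 2)
      (by
        have hc : Tendsto (fun x' : ℝ => A t * (x + z - x')) (𝓝 x) (𝓝 (A t * z)) := by
          have : Continuous (fun x' : ℝ => A t * (x + z - x')) := by fun_prop
          simpa using this.tendsto x
        filter_upwards [hc.eventually (Ioo_mem_nhds hAz hlt), Ioo_mem_nhds hx1 hx2] with x' hy hx'
        have := hmax x' (x + z) t ⟨hx'.1.le, hx'.2.le⟩ ht hy.1.le hy.2.le
        simpa using this)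
      (Eventually.of_forall fun x' => by
        have h1 := S.w_dx htpos x' (x + z)
        have h2 : HasDerivAt (fun y => A t * (x + z - y)) (-A t) x' := by
          simpa using ((hasDerivAt_id x').const_sub (x + z)).const_mul (A t)
        refine HasDerivAt.congr_deriv (h1.sub ((h2.const_mul 3).sub (h2.pow 2))) ?_
        simp only [pow_one, Nat.cast_ofNat, Nat.reduceSub]; ring)
      (by
        have h1 := S.dx x t htpos
        have h2 : HasDerivAt (fun y => A t * (x + z - y)) (-A t) x := by
          simpa using ((hasDerivAt_id x).const_sub (x + z)).const_mul (A t)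
        refine HasDerivAt.congr_deriv (h1.neg.add (((h2.const_mul 2).mul_const (A t)).const_sub (3 * A t))) ?_
        ring)
  have hA't := hA' t (htp t ht)
  have htime := fs_left (f := fun s => (∫ ξ in x..(x + z), v ξ s) -
        (3 * (A s * z) - (A s * z) ^ 2)) (a := t)
      (c := (v (x + z) t ^ (m - 1) * vx (x + z) t - v x t ^ (m - 1) * vx x t) -
        (3 * (A' t * z) - 2 * (A t * z) * (A' t * z)))
      (by
        have h1 := S.w_dt htpos x (x + z)
        have h2 := hA't.mul_const z
        refine HasDerivAt.congr_deriv (h1.sub ((h2.const_mul 3).sub (h2.pow 2))) ?_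
        simp only [pow_one, Nat.cast_ofNat, Nat.reduceSub])
      (by
        have hc : Tendsto (fun s : ℝ => A s * z) (𝓝[<] t) (𝓝 (A t * z)) :=
          (hA't.continuousAt.tendsto.mul_const z).mono_left nhdsWithin_le_nhds
        filter_upwards [hc.eventually (Ioo_mem_nhds hAz hlt), Ioo_mem_nhdsLT htt1] with s hy hs
        have := hmax x (x + z) s hx ⟨hs.1.le, hs.2.le.trans ht.2⟩ (by simpa using hy.1.le)
          (by simpa using hy.2.le)
        simpa using this)
  obtain ⟨hy1, hy2⟩ := hy
  obtain ⟨hx3, hx4⟩ := hxx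
  simp only [add_sub_cancel_left] at hy1 hx3
  have e1 : v (x + z) t = A t * (3 - 2 * (A t * z)) := by linarith
  have e2 : v x t = A t * (3 - 2 * (A t * z)) := by linarith
  rw [e1, e2] at htime
  have hs := hstrict t (htp t ht) z hz0 hη.2
  have hD : 0 < (A t * (3 - 2 * (A t * z))) ^ (m - 1) :=
    Real.rpow_pos_of_pos (mul_pos hAt (by linarith)) _
  nlinarith [mul_le_mul_of_nonneg_left hy2 hD.le, mul_le_mul_of_nonneg_left hx4 hD.le]

end FSol
namespace FSol
variable {m : ℝ} {Φ : ℝ → ℝ} {v vx vt : ℝ → ℝ → ℝ}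

theorem upper (S : FSol m Φ v vx vt) (hm : -1 < m) :
    ∃ K : ℝ, 0 < K ∧ ∀ T : ℝ, 0 < T → ∀ x, v x T ≤ K * T ^ (-(1 / (m + 1))) := by
  have hm1 : 0 < m + 1 := by linarith
  obtain ⟨γ, hγ⟩ : ∃ γ, γ = 1 / (m + 1) := ⟨_, rfl⟩
  have hγ0 : 0 < γ := by rw [hγ]; positivity
  have hγm : γ * (m + 1) = 1 := by rw [hγ]; field_simp
  obtain ⟨c0, hc0⟩ : ∃ c0 : ℝ, c0 = min ((2:ℝ) ^ (m - 2)) ((3:ℝ) ^ (m - 2)) := ⟨_, rfl⟩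
  have hc0p : 0 < c0 := by rw [hc0]; positivity
  have hc : ∀ s : ℝ, 2 ≤ s → s ≤ 3 → c0 ≤ s ^ (m - 2) := by
    intro s h2 h3
    rw [hc0]
    rcases le_total 0 (m - 2) with h | h
    · exact (min_le_left _ _).trans (Real.rpow_le_rpow (by norm_num) h2 h)
    · exact (min_le_right _ _).trans (Real.rpow_le_rpow_of_nonpos (by linarith) h3 h)
  obtain ⟨a, ha⟩ : ∃ a : ℝ, a = (γ / c0) ^ γ := ⟨_, rfl⟩
  have ha0 : 0 < a := by rw [ha]; positivity
  have ham : a ^ (m + 1) = γ / c0 := by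
    rw [ha, ← Real.rpow_mul (by positivity), hγm, Real.rpow_one]
  refine ⟨3 * a / (2:ℝ) ^ (-γ), by positivity, fun T hT x => ?_⟩
  rw [← hγ]
  obtain ⟨t0, ht0⟩ : ∃ t0, t0 = T / 2 := ⟨_, rfl⟩
  set A : ℝ → ℝ := fun t => a * (t - t0) ^ (-γ) with hA
  have hAT : 3 * a / (2:ℝ) ^ (-γ) * T ^ (-γ) = 3 * A T := by
    simp only [hA]
    have : T - t0 = T / 2 := by rw [ht0]; ring
    rw [this, Real.div_rpow hT.le (by norm_num)]
    ring
  rw [hAT]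
  have hAp : ∀ t ∈ Ioc t0 T, 0 < A t := fun t ht =>
    mul_pos ha0 (Real.rpow_pos_of_pos (by linarith [ht.1]) _)
  have key : ∀ ε > 0, ∀ y0, x ≤ y0 → A T * (y0 - x) ≤ 1 / 2 →
      ∫ ξ in x..y0, v ξ T ≤ 3 * (A T * (y0 - x)) - (A T * (y0 - x)) ^ 2 + ε := by
    intro ε hε y0 hy hy2
    refine S.upper_aux (A := A) (A' := fun t => a * (-γ * (t - t0) ^ (-γ - 1))) (t0 := t0) (T := T)
      (by linarith) (by linarith) hAp ?_ ?_ ?_ ?_ hε x y0 hy hy2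
    · intro t ht
      have h1 : HasDerivAt (fun t => t - t0) 1 t := (hasDerivAt_id t).sub_const t0
      have h2 := (h1.rpow_const (p := -γ) (Or.inl (by linarith [ht.1]))).const_mul a
      refine h2.congr_deriv (by ring)
    · intro t ht
      exact mul_le_mul_of_nonneg_left (Real.rpow_le_rpow_of_nonpos (by linarith [ht.1]) (by linarith [ht.2]) (by linarith)) ha0.le
    · intro M
      have h1 : Tendsto A (𝓝[>] t0) atTop := by
        have h2 : Tendsto (fun t => t - t0) (𝓝[>] t0) (𝓝[>] 0) := by
          apply tendsto_nhdsWithin_of_tendsto_nhds_of_eventually_within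
          · have : Continuous (fun t => t - t0) := by fun_prop
            have := this.tendsto t0
            rw [sub_self] at this
            exact this.mono_left nhdsWithin_le_nhds
          · filter_upwards [self_mem_nhdsWithin] with t ht
            have : t0 < t := ht
            simpa using this
        exact ((tendsto_rpow_neg_nhdsGT_zero (by linarith)).comp h2).const_mul_atTop ha0
      obtain ⟨t1, h3, h4⟩ := ((h1.eventually_ge_atTop M).and (Ioo_mem_nhdsGT (show t0 < T by linarith))).exists
      exact ⟨t1, h4, h3⟩
    · intro t ht z hz hz2
      have hAt := hAp t ht
      have hs : 0 < t - t0 := by linarith [ht.1]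
      have hAz : 0 ≤ A t * z := mul_nonneg hAt.le hz
      obtain ⟨P, hP⟩ : ∃ P, P = 3 - 2 * (A t * z) := ⟨_, rfl⟩
      rw [← hP]
      have hP0 : 0 < P := by linarith
      have e1 : a * (-γ * (t - t0) ^ (-γ - 1)) * z = - (γ * (A t * z) / (t - t0)) := by
        rw [Real.rpow_sub hs, Real.rpow_one]; simp only [hA]; ring
      rw [e1]
      have e2 : (A t * P) ^ (m - 1) * A t ^ 2 = a ^ (m + 1) / (t - t0) * (P * P ^ (m - 2)) := by
        rw [Real.mul_rpow hAt.le hP0.le]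
        have h1 : P ^ (m - 1) = P * P ^ (m - 2) := by
          have : m - 1 = 1 + (m - 2) := by ring
          rw [this, Real.rpow_add hP0, Real.rpow_one]
        have h2 : A t ^ (m - 1) * A t ^ 2 = A t ^ (m + 1) := by
          have : m + 1 = (m - 1) + (2 : ℕ) := by push_cast; ring
          rw [this, Real.rpow_add_natCast hAt.ne']
        have h3 : A t ^ (m + 1) = a ^ (m + 1) / (t - t0) := by
          simp only [hA]
          rw [Real.mul_rpow ha0.le (Real.rpow_nonneg hs.le _), ← Real.rpow_mul hs.le]
          have : -γ * (m + 1) = -1 := by linarith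
          rw [this, Real.rpow_neg_one, div_eq_mul_inv]
        rw [h1, ← h3, ← h2]; ring
      have e3 : c0 ≤ P ^ (m - 2) := hc P (by linarith) (by linarith)
      have e4 : γ / (t - t0) * P ≤ a ^ (m + 1) / (t - t0) * (P * P ^ (m - 2)) := by
        rw [ham]
        have : γ / (t - t0) * P = γ / c0 / (t - t0) * (P * c0) := by field_simp
        rw [this]
        gcongr
      have e5 : 0 < γ / (t - t0) * P := by positivity
      have e6 : γ * (A t * z) / (t - t0) * P = (A t * z) * (γ / (t - t0) * P) := by ring
      nlinarith
  have key2 : ∀ y0, x ≤ y0 → A T * (y0 - x) ≤ 1 / 2 → ∫ ξ in x..y0, v ξ T ≤ 3 * (A T * (y0 - x)) := by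
    intro y0 h1 h2
    refine le_of_forall_pos_le_add fun ε hε => ?_
    have := key ε hε y0 h1 h2
    nlinarith [sq_nonneg (A T * (y0 - x))]
  have hATp := hAp T ⟨by linarith, le_rfl⟩
  have hd : HasDerivAt (fun y => (∫ ξ in x..y, v ξ T) - 3 * (A T * (y - x))) (v x T - 3 * A T) x := by
    have h2 : HasDerivAt (fun y => A T * (y - x)) (A T) x := by
      simpa using ((hasDerivAt_id x).sub_const x).const_mul (A T)
    exact (S.w_dy hT x x).sub (h2.const_mul 3)
  have := fs_right hd (by
    filter_upwards [Ioo_mem_nhdsGT (show x < x + 1 / (2 * A T) by have : 0 < 1 / (2 * A T) := by positivity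
                                                                  linarith)] with y hy
    have h3 : A T * (y - x) ≤ 1 / 2 := by
      have : y - x ≤ 1 / (2 * A T) := by linarith [hy.2]
      calc A T * (y - x) ≤ A T * (1 / (2 * A T)) := by gcongr
        _ = 1 / 2 := by field_simp
    have := key2 y hy.1.le h3
    simp; linarith)
  linarith

/-- right tail mass -/
noncomputable def Hh (v : ℝ → ℝ → ℝ) (x t : ℝ) : ℝ := ∫ ξ in Ioi x, v ξ t

theorem H_sub (S : FSol m Φ v vx vt) {t : ℝ} (ht : 0 < t) (x y : ℝ) :
    Hh v x t = (∫ ξ in x..y, v ξ t) + Hh v y t :=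
  (intervalIntegral.integral_interval_add_Ioi (S.int t ht).integrableOn (S.int t ht).integrableOn).symm

theorem H_top (S : FSol m Φ v vx vt) {t : ℝ} (ht : 0 < t) :
    Tendsto (fun x => Hh v x t) atTop (𝓝 0) := by
  have h := intervalIntegral_tendsto_integral_Ioi 0 (S.int t ht).integrableOn tendsto_id
  have h2 := h.const_sub (Hh v 0 t)
  have e : Hh v 0 t - ∫ x in Ioi 0, v x t = 0 := sub_self _
  rw [e] at h2
  refine h2.congr fun x => ?_
  have := S.H_sub ht 0 x
  simp only [id]; linarith

theorem H_bot (S : FSol m Φ v vx vt) {t : ℝ} (ht : 0 < t) :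
    Tendsto (fun x => Hh v x t) atBot (𝓝 1) := by
  have h := intervalIntegral_tendsto_integral_Iic 0 (S.int t ht).integrableOn tendsto_id
  have h2 := h.add_const (Hh v 0 t)
  have e : (∫ x in Iic 0, v x t) + Hh v 0 t = 1 := by
    rw [← S.mass t ht]
    exact intervalIntegral.integral_Iic_add_Ioi (S.int t ht).integrableOn (S.int t ht).integrableOn
  rw [e] at h2
  refine h2.congr fun x => ?_
  have := S.H_sub ht x 0
  simp only [id]; linarith

theorem H_le_one (S : FSol m Φ v vx vt) {t : ℝ} (ht : 0 < t) (x : ℝ) : Hh v x t ≤ 1 := by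
  rw [← S.mass t ht]
  exact setIntegral_le_integral (S.int t ht) (Eventually.of_forall fun x => (S.pos x t ht).le)

theorem H_flux (S : FSol m Φ v vx vt) (hm : -1 < m) {s t : ℝ} (hs : 0 < s) (hst : s ≤ t) (x : ℝ) :
    Hh v x t - Hh v x s = - ∫ τ in s..t, v x τ ^ (m - 1) * vx x τ := by
  have ht : 0 < t := lt_of_lt_of_le hs hst
  have cq' : ContinuousOn (fun p : ℝ × ℝ => (fun x t => v x t ^ (m - 1) * vx x t) p.1 p.2) (univ ×ˢ Ioi 0) := S.cq
  have cP' : ContinuousOn (fun p : ℝ × ℝ => (fun x t => Φ (v x t)) p.1 p.2) (univ ×ˢ Ioi 0) := S.cPhi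
  have iq : ∀ x, IntervalIntegrable (fun τ => v x τ ^ (m - 1) * vx x τ) volume s t := fun x => fs_ii_t (F := fun x t => v x t ^ (m - 1) * vx x t) cq' x hs ht
  have iP : ∀ x, IntervalIntegrable (fun τ => Φ (v x τ)) volume s t := fun x => fs_ii_t (F := fun x t => Φ (v x t)) cP' x hs ht
  set G : ℝ → ℝ := fun x => ∫ τ in s..t, v x τ ^ (m - 1) * vx x τ with hG
  obtain ⟨F, hF⟩ : ∃ F, F = Hh v x t - Hh v x s + G x := ⟨_, rfl⟩
  have hconst : ∀ y, G y = F - (Hh v y t - Hh v y s) := by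
    intro y
    have h1 := S.w_diff hs ht x y
    rw [intervalIntegral.integral_sub (iq y) (iq x)] at h1
    have h2 := S.H_sub ht x y
    have h3 := S.H_sub hs x y
    simp only [hG] at hF ⊢
    linarith
  have htop : Tendsto G atTop (𝓝 F) := by
    have := ((S.H_top ht).sub (S.H_top hs)).const_sub F
    rw [sub_self, sub_zero] at this
    exact this.congr fun y => (hconst y).symm
  have hbot : Tendsto G atBot (𝓝 F) := by
    have := ((S.H_bot ht).sub (S.H_bot hs)).const_sub F
    rw [sub_self, sub_zero] at this
    exact this.congr fun y => (hconst y).symm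
  set g : ℝ → ℝ := fun x => ∫ τ in s..t, Φ (v x τ) with hg
  have hint : ∀ a b, ∫ y in a..b, G y = g b - g a := by
    intro a b
    simp only [hG, hg]
    rw [fs_swap cq' hs ht, ← intervalIntegral.integral_sub (iP b) (iP a)]
    apply intervalIntegral.integral_congr
    intro τ hτ
    have hτ0 : 0 < τ := fs_uIcc hs ht hτ
    simp only
    rw [intervalIntegral.integral_eq_sub_of_hasDerivAt (f := fun y => Φ (v y τ))]
    · exact fun y _ => S.dPhiv y hτ0
    · exact (fs_sec_x (F := fun x t => v x t ^ (m - 1) * vx x t) cq' hτ0).intervalIntegrable _ _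
  have hGi : ∀ a b, IntervalIntegrable G volume a b := by
    intro a b
    have hH : ∀ τ, 0 < τ → Continuous (fun y => Hh v y τ) := by
      intro τ hτ
      have : (fun y => Hh v y τ) = fun y => (∫ ξ in y..0, v ξ τ) + Hh v 0 τ := by
        ext y; exact S.H_sub hτ y 0
      rw [this]
      exact (continuous_iff_continuousAt.2 fun y => (S.w_dx hτ y 0).continuousAt).add continuous_const
    have : G = fun y => F - (Hh v y t - Hh v y s) := funext hconst
    rw [this]
    exact (continuous_const.sub ((hH t ht).sub (hH s hs))).intervalIntegrable _ _
  obtain ⟨B, hB⟩ : ∃ B, ∀ y, g y ≤ B := by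
    obtain ⟨K, hK, hup⟩ := S.upper hm
    have hm1 : 0 < m + 1 := by linarith
    refine ⟨(t - s) * Φ (K * s ^ (-(1 / (m + 1)))), fun y => ?_⟩
    have := intervalIntegral.integral_mono_on hst (iP y) (intervalIntegrable_const (c := Φ (K * s ^ (-(1 / (m + 1)))))) (fun τ hτ => by
      have hτ0 : 0 < τ := lt_of_lt_of_le hs hτ.1
      apply S.Phi_mono (S.pos y τ hτ0) (mul_pos hK (Real.rpow_pos_of_pos hs _))
      refine (hup τ hτ0 y).trans ?_
      exact mul_le_mul_of_nonneg_left (Real.rpow_le_rpow_of_nonpos hs hτ.1 (by simp only [one_div, Left.neg_nonpos_iff]; positivity)) hK.le)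
    simpa using this
  have hF0 : F = 0 := by
    rcases lt_trichotomy F 0 with h | h | h
    · exfalso
      obtain ⟨b, hb⟩ := eventually_atBot.1 (hbot.eventually (Iio_mem_nhds (show F < F / 2 by linarith)))
      obtain ⟨r, hr0, hr⟩ : ∃ r, 0 ≤ r ∧ (B - g b) < r * (- F / 2) := by
        refine ⟨max 0 ((B - g b) / (-F / 2) + 1), le_max_left _ _, ?_⟩
        rw [← div_lt_iff₀ (by linarith)]
        exact lt_of_lt_of_le (by linarith) (le_max_right _ _)
      have h1 := intervalIntegral.integral_mono_on (a := b - r) (b := b) (by linarith) (hGi _ _) (intervalIntegrable_const (c := F / 2)) (fun y hy => (hb y hy.2).le)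
      rw [hint] at h1
      have h2 := hB (b - r)
      simp at h1
      linarith
    · exact h
    · exfalso
      obtain ⟨b, hb⟩ := eventually_atTop.1 (htop.eventually (Ioi_mem_nhds (show F / 2 < F by linarith)))
      obtain ⟨r, hr0, hr⟩ : ∃ r, 0 ≤ r ∧ (B - g b) < r * (F / 2) := by
        refine ⟨max 0 ((B - g b) / (F / 2) + 1), le_max_left _ _, ?_⟩
        rw [← div_lt_iff₀ (by linarith)]
        exact lt_of_lt_of_le (by linarith) (le_max_right _ _)
      have h1 := intervalIntegral.integral_mono_on (a := b) (b := b + r) (by linarith) (intervalIntegrable_const (c := F / 2)) (hGi _ _) (fun y hy => (hb y hy.1).le)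
      rw [hint] at h1
      have h2 := hB (b + r)
      simp at h1
      linarith
  have := hconst x
  simp only [hG] at this
  linarith

theorem H_dt (S : FSol m Φ v vx vt) (hm : -1 < m) {t : ℝ} (ht : 0 < t) (x : ℝ) :
    HasDerivAt (fun s => Hh v x s) (-(v x t ^ (m - 1) * vx x t)) t := by
  have h2 : 0 < t / 2 := by linarith
  have h := fs_ftc (fs_sec_t (F := fun x t => v x t ^ (m - 1) * vx x t) S.cq x) h2 ht
  refine (h.neg.const_add (Hh v x (t / 2))).congr_of_eventuallyEq ?_
  filter_upwards [Ioi_mem_nhds (show t / 2 < t by linarith)] with s hs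
  have := S.H_flux hm h2 (le_of_lt hs) x
  simp only [Pi.neg_apply]
  linarith

theorem H_dx (S : FSol m Φ v vx vt) {t : ℝ} (ht : 0 < t) (x : ℝ) :
    HasDerivAt (fun y => Hh v y t) (-v x t) x := by
  have := (S.w_dx ht x 0).add_const (Hh v 0 t)
  exact this.congr_of_eventuallyEq (Eventually.of_forall fun y => S.H_sub ht y 0)

end FSol
namespace FSol
variable {m : ℝ} {Φ : ℝ → ℝ} {v vx vt : ℝ → ℝ → ℝ}

theorem H_cont (S : FSol m Φ v vx vt) (hm : -1 < m) {t1 : ℝ} (ht1 : 0 < t1) :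
    ContinuousOn (fun p : ℝ × ℝ => Hh v p.1 p.2) (univ ×ˢ Ici t1) := by
  have h1 : ContinuousOn (fun p : ℝ × ℝ => Hh v 0 p.2) (univ ×ˢ Ici t1) := by
    intro p hp
    exact ContinuousAt.comp_continuousWithinAt (g := fun s => Hh v 0 s) (f := fun p : ℝ × ℝ => p.2)
      (S.H_dt hm (lt_of_lt_of_le ht1 hp.2) 0).continuousAt (by fun_prop)
  have h2 : Continuous (fun p : ℝ × ℝ => ∫ x in p.1..0, v x (max p.2 t1)) :=
    (S.w_cont ht1).comp (f := fun p : ℝ × ℝ => (p.1, (0:ℝ), p.2)) (by fun_prop)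
  refine (h2.continuousOn.add h1).congr fun p hp => ?_
  have h3 : t1 ≤ p.2 := hp.2
  simp only [Pi.add_apply, max_eq_left h3]
  exact S.H_sub (lt_of_lt_of_le ht1 h3) p.1 0

theorem lower_barrier (S : FSol m Φ v vx vt) (hm : -1 < m) {p B R : ℝ} (hp : p = (m + 1) / 2)
    (hB1 : 1 ≤ B) (hB : 2 * (p ^ (m + 1) * (p + 1) / p) < B ^ 2)
    (hR : ∀ x, R ≤ x → Hh v x 1 ≤ 1 / 8) {T z0 : ℝ} (hT : 1 ≤ T) (hz0 : 0 < z0) :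
    Hh v (R + z0) T ≤ 1 / 8 + B * T ^ (1 / 2 : ℝ) * z0 ^ (-p) := by
  have hp0 : 0 < p := by rw [hp]; linarith
  by_contra hcon
  push Not at hcon
  have hB0 : 0 < B := by linarith
  -- Y ≥ 1 means Z < 0
  have hY1 : ∀ t z, 1 ≤ t → 0 < z → z ≤ 1 → 1 ≤ B * t ^ (1 / 2 : ℝ) * z ^ (-p) := by
    intro t z ht hz hz1
    have h1 : 1 ≤ t ^ (1 / 2 : ℝ) := Real.one_le_rpow ht (by norm_num)
    have h2 : 1 ≤ z ^ (-p) := Real.one_le_rpow_of_pos_of_le_one_of_nonpos hz hz1 (by linarith)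
    nlinarith [mul_le_mul hB1 h1 (by norm_num) hB0.le]
  have hz01 : 1 < z0 := by
    by_contra h; push Not at h
    have := hY1 T z0 hT hz0 h
    have := S.H_le_one (show 0 < T by linarith) (R + z0)
    linarith
  obtain ⟨R', hR', htight⟩ := S.tight (s := 1) (t := T) one_pos (show (0:ℝ) < 1 / 8 by norm_num)
  obtain ⟨N, hN1, hN2⟩ : ∃ N, z0 ≤ N ∧ R' ≤ R + N :=
    ⟨max z0 (R' - R), le_max_left _ _, by linarith [le_max_right z0 (R' - R)]⟩
  set K : Set (ℝ × ℝ) := Icc 1 N ×ˢ Icc 1 T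
  set f : ℝ × ℝ → ℝ := fun q => Hh v (R + q.1) q.2 - B * q.2 ^ (1 / 2 : ℝ) * q.1 ^ (-p) with hf
  have hfc : ContinuousOn f K := by
    apply ContinuousOn.sub
    · exact (S.H_cont hm one_pos).comp (f := fun q : ℝ × ℝ => (R + q.1, q.2)) (by fun_prop)
        (fun q hq => ⟨mem_univ _, hq.2.1⟩)
    · apply ContinuousOn.mul
      · apply ContinuousOn.mul continuousOn_const
        exact ContinuousOn.rpow_const (by fun_prop) (fun q hq => Or.inr (by norm_num))
      · exact ContinuousOn.rpow_const (by fun_prop) (fun q hq => Or.inl (by have := hq.1.1; linarith))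
  have hmem0 : (z0, T) ∈ K := ⟨⟨hz01.le, hN1⟩, ⟨hT, le_rfl⟩⟩
  obtain ⟨⟨z, t⟩, hqK, hmax⟩ := (isCompact_Icc.prod isCompact_Icc).exists_isMaxOn ⟨_, hmem0⟩ hfc
  obtain ⟨hz, ht⟩ : z ∈ Icc 1 N ∧ t ∈ Icc 1 T := hqK
  have hgt : 1 / 8 < Hh v (R + z) t - B * t ^ (1 / 2 : ℝ) * z ^ (-p) := by
    have := hmax hmem0
    simp only [hf, mem_ofPred_eq] at this
    linarith
  have hmax' : ∀ z' t', z' ∈ Icc 1 N → t' ∈ Icc 1 T →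
      Hh v (R + z') t' - B * t' ^ (1 / 2 : ℝ) * z' ^ (-p) ≤
        Hh v (R + z) t - B * t ^ (1 / 2 : ℝ) * z ^ (-p) :=
    fun z' t' h1 h2 => hmax (show (z', t') ∈ K from ⟨h1, h2⟩)
  have htpos : 0 < t := by linarith [ht.1]
  have hzpos : 0 < z := by linarith [hz.1]
  obtain ⟨Y, hY⟩ : ∃ Y, Y = B * t ^ (1 / 2 : ℝ) * z ^ (-p) := ⟨_, rfl⟩
  have hY0 : 0 < Y := by rw [hY]; positivity
  have hYlt : Y < 1 := by
    have := S.H_le_one htpos (R + z)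
    rw [← hY] at hgt; linarith
  have hz1 : 1 < z := by
    by_contra h; push Not at h
    have := hY1 t z ht.1 hzpos h
    linarith
  have hzN : z < N := by
    refine lt_of_le_of_ne hz.2 fun h => ?_
    have : Hh v (R + z) t ≤ 1 / 8 := by
      have hlim : Tendsto (fun y => ∫ ξ in (R + z)..y, v ξ t) atTop (𝓝 (Hh v (R + z) t)) := by
        have h5 := (S.H_top htpos).const_sub (Hh v (R + z) t)
        rw [sub_zero] at h5
        refine h5.congr fun y => ?_
        have := S.H_sub htpos (R + z) y
        linarith
      refine le_of_tendsto hlim ?_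
      · filter_upwards [eventually_ge_atTop (R + z)] with y hy
        exact (S.tail_r htpos hR' (htight t ht) (by rw [h]; exact hN2) hy).le
    linarith [hY ▸ hY0]
  have ht1 : 1 < t := by
    refine lt_of_le_of_ne ht.1 fun h => ?_
    have h1 := hR (R + z) (by linarith)
    rw [← hY, ← h] at hgt
    linarith
  have hsp := fs_second_test (f := fun z' => Hh v (R + z') t - B * t ^ (1 / 2 : ℝ) * z' ^ (-p))
    (f' := fun z' => - v (R + z') t - B * t ^ (1 / 2 : ℝ) * (-p * z' ^ (-p - 1))) (a := z)
    (c := - vx (R + z) t - B * t ^ (1 / 2 : ℝ) * (-p * ((-p - 1) * z ^ (-p - 1 - 1))))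
    (by
      filter_upwards [Ioo_mem_nhds hz1 hzN] with z' hz'
      exact hmax' z' t ⟨hz'.1.le, hz'.2.le⟩ ht)
    (by
      filter_upwards [Ioi_mem_nhds hzpos] with z' hz'
      have h1 := (S.H_dx htpos (R + z')).comp_const_add R z'
      have h2 := Real.hasDerivAt_rpow_const (x := z') (p := -p) (Or.inl (ne_of_gt hz'))
      exact h1.sub (h2.const_mul _))
    (by
      have h1 := (S.dx (R + z) t htpos).comp_const_add R z
      have h2 := Real.hasDerivAt_rpow_const (x := z) (p := -p - 1) (Or.inl hzpos.ne')
      exact h1.neg.sub ((h2.const_mul (-p)).const_mul _))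
  have htime := fs_left (f := fun s => Hh v (R + z) s - B * s ^ (1 / 2 : ℝ) * z ^ (-p)) (a := t)
    (c := -(v (R + z) t ^ (m - 1) * vx (R + z) t) - B * ((1 / 2 : ℝ) * t ^ ((1 / 2 : ℝ) - 1)) * z ^ (-p))
    (by
      have h1 := S.H_dt hm htpos (R + z)
      have h2 := Real.hasDerivAt_rpow_const (x := t) (p := (1 / 2 : ℝ)) (Or.inl htpos.ne')
      exact h1.sub ((h2.const_mul B).mul_const _))
    (by
      filter_upwards [Ioo_mem_nhdsLT ht1] with s hs
      exact hmax' z s hz ⟨hs.1.le, hs.2.le.trans ht.2⟩)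
  obtain ⟨h1, h2⟩ := hsp
  have ez1 : z ^ (-p - 1) = z ^ (-p) / z := Real.rpow_sub_one hzpos.ne' _
  have ez2 : z ^ (-p - 1 - 1) = z ^ (-p) / z / z := by rw [Real.rpow_sub_one hzpos.ne', ez1]
  have et : t ^ ((1 / 2 : ℝ) - 1) = t ^ (1 / 2 : ℝ) / t := Real.rpow_sub_one htpos.ne' _
  simp only [ez1] at h1
  rw [ez2] at h2
  rw [et] at htime
  have e1 : v (R + z) t = p * Y / z := by
    rw [hY]; field_simp; field_simp at h1; linarith
  have e2 : - (p * (p + 1) * Y / z ^ 2) ≤ vx (R + z) t := by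
    have : B * t ^ (1 / 2 : ℝ) * (-p * ((-p - 1) * (z ^ (-p) / z / z))) = p * (p + 1) * Y / z ^ 2 := by
      rw [hY]; field_simp; ring
    linarith
  have e3 : Y / (2 * t) ≤ - (v (R + z) t ^ (m - 1) * vx (R + z) t) := by
    have : B * ((1 / 2 : ℝ) * (t ^ (1 / 2 : ℝ) / t)) * z ^ (-p) = Y / (2 * t) := by
      rw [hY]; field_simp
    linarith
  have hv0 := S.pos (R + z) t htpos
  have e4 : Y / (2 * t) ≤ v (R + z) t ^ (m - 1) * (p * (p + 1) * Y / z ^ 2) := by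
    have := mul_le_mul_of_nonneg_left e2 (Real.rpow_nonneg hv0.le (m - 1))
    linarith
  have e5 : v (R + z) t ^ (m - 1) * v (R + z) t ^ 2 = v (R + z) t ^ (m + 1) := by
    have : m + 1 = (m - 1) + (2 : ℕ) := by push_cast; ring
    rw [this, Real.rpow_add_natCast hv0.ne']
  have e6 : v (R + z) t ^ (m + 1) = p ^ (m + 1) * Y ^ (m + 1) / z ^ (m + 1) := by
    rw [e1, Real.div_rpow (by positivity) hzpos.le, Real.mul_rpow hp0.le hY0.le]
  have e7 : Y ^ 2 * z ^ (m + 1) = B ^ 2 * t := by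
    have a1 : (t ^ (1 / 2 : ℝ)) ^ 2 = t := by
      rw [← Real.rpow_natCast, ← Real.rpow_mul htpos.le]; norm_num
    have a2 : (z ^ (-p)) ^ 2 * z ^ (m + 1) = 1 := by
      rw [← Real.rpow_natCast, ← Real.rpow_mul hzpos.le, ← Real.rpow_add hzpos]
      have : -p * (2 : ℕ) + (m + 1) = 0 := by rw [hp]; push_cast; ring
      rw [this, Real.rpow_zero]
    rw [hY]
    calc (B * t ^ (1 / 2 : ℝ) * z ^ (-p)) ^ 2 * z ^ (m + 1)
        = B ^ 2 * (t ^ (1 / 2 : ℝ)) ^ 2 * ((z ^ (-p)) ^ 2 * z ^ (m + 1)) := by ring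
      _ = B ^ 2 * t := by rw [a1, a2, mul_one]
  have hYm : Y ^ (m + 1) ≤ 1 := Real.rpow_le_one hY0.le hYlt.le (by linarith)
  -- combine
  have hzm : 0 < z ^ (m + 1) := Real.rpow_pos_of_pos hzpos _
  have e8 : v (R + z) t ^ (m - 1) * (p * (p + 1) * Y / z ^ 2)
      = p ^ (m + 1) * Y ^ (m + 1) / z ^ (m + 1) * ((p + 1) / (p * Y)) := by
    have : p * (p + 1) * Y / z ^ 2 = v (R + z) t ^ 2 * ((p + 1) / (p * Y)) := by
      rw [e1]; field_simp
    rw [← e6, ← e5, this]; ring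
  rw [e8] at e4
  have e9 : Y / (2 * t) * (2 * t * z ^ (m + 1) * Y) = B ^ 2 * t := by
    rw [← e7]; field_simp
  have e10 : p ^ (m + 1) * Y ^ (m + 1) / z ^ (m + 1) * ((p + 1) / (p * Y)) * (2 * t * z ^ (m + 1) * Y)
     = 2 * (p ^ (m + 1) * (p + 1) / p) * Y ^ (m + 1) * t := by
    field_simp
  have e11 := mul_le_mul_of_nonneg_right e4 (show 0 ≤ 2 * t * z ^ (m + 1) * Y by positivity)
  rw [e9, e10] at e11
  have e12 : B ^ 2 ≤ 2 * (p ^ (m + 1) * (p + 1) / p) * Y ^ (m + 1) := le_of_mul_le_mul_right e11 htpos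
  have e13 : 2 * (p ^ (m + 1) * (p + 1) / p) * Y ^ (m + 1) ≤ 2 * (p ^ (m + 1) * (p + 1) / p) * 1 :=
    mul_le_mul_of_nonneg_left hYm (by positivity)
  linarith

theorem lower_tail (S : FSol m Φ v vx vt) (hm : -1 < m) :
    ∃ X C : ℝ, 0 < X ∧ 0 < C ∧ ∀ t : ℝ, 1 ≤ t → Hh v (X + C * t ^ (1 / (m + 1))) t ≤ 1 / 4 := by
  obtain ⟨p, hp⟩ : ∃ p, p = (m + 1) / 2 := ⟨_, rfl⟩
  have hp0 : 0 < p := by rw [hp]; linarith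
  obtain ⟨D, hD⟩ : ∃ D, D = p ^ (m + 1) * (p + 1) / p := ⟨_, rfl⟩
  have hD0 : 0 < D := by rw [hD]; positivity
  obtain ⟨B, hBd⟩ : ∃ B, B = 1 + 2 * D := ⟨_, rfl⟩
  obtain ⟨R, hR⟩ := eventually_atTop.1 ((S.H_top one_pos).eventually (Iio_mem_nhds (show (0:ℝ) < 1 / 8 by norm_num)))
  have hB0 : 0 < B := by linarith
  refine ⟨max R 1, (8 * B) ^ (1 / p), lt_of_lt_of_le one_pos (le_max_right _ _), by positivity, fun t ht => ?_⟩
  have ht0 : 0 < t := by linarith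
  have := S.lower_barrier hm hp (B := B) (R := max R 1) (by linarith) (by rw [← hD]; nlinarith)
    (fun x hx => (hR x (le_trans (le_max_left _ _) hx)).le) ht (z0 := (8 * B) ^ (1 / p) * t ^ (1 / (m + 1))) (by positivity)
  have e : ((8 * B) ^ (1 / p) * t ^ (1 / (m + 1))) ^ (-p) = (8 * B)⁻¹ * (t ^ (1 / 2 : ℝ))⁻¹ := by
    rw [Real.mul_rpow (by positivity) (by positivity), ← Real.rpow_mul (by positivity), ← Real.rpow_mul (by positivity)]
    have h1 : 1 / p * -p = -1 := by field_simp
    have h2 : 1 / (m + 1) * -p = -(1 / 2) := by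
      have : m + 1 ≠ 0 := by linarith
      rw [hp]; field_simp
    rw [h1, h2, Real.rpow_neg_one, Real.rpow_neg ht0.le]
  rw [e] at this
  have h3 : B * t ^ (1 / 2 : ℝ) * ((8 * B)⁻¹ * (t ^ (1 / 2 : ℝ))⁻¹) = 1 / 8 := by
    have : t ^ (1 / 2 : ℝ) ≠ 0 := by positivity
    field_simp
  linarith

theorem reflect (S : FSol m Φ v vx vt) :
    FSol m Φ (fun x t => v (-x) t) (fun x t => - vx (-x) t) (fun x t => vt (-x) t) where
  pos x t ht := S.pos _ _ ht
  dPhi := S.dPhi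
  cv := S.cv.comp (f := fun p : ℝ × ℝ => (-p.1, p.2)) (by fun_prop) fun p hp => ⟨mem_univ _, hp.2⟩
  cx := (S.cx.comp (f := fun p : ℝ × ℝ => (-p.1, p.2)) (by fun_prop) fun p hp => ⟨mem_univ _, hp.2⟩).neg
  ct := S.ct.comp (f := fun p : ℝ × ℝ => (-p.1, p.2)) (by fun_prop) fun p hp => ⟨mem_univ _, hp.2⟩
  dx x t ht := by
    have := (S.dx (-x) t ht).comp x (hasDerivAt_neg x)
    exact this.congr_deriv (by ring)
  dt x t ht := S.dt _ _ ht
  dq x t ht := by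
    have := ((S.dq (-x) t ht).comp x (hasDerivAt_neg x)).neg
    refine (this.congr_deriv (by ring)).congr_of_eventuallyEq (Eventually.of_forall fun y => ?_)
    simp
  int t ht := (S.int t ht).comp_neg
  mass t ht := by rw [← S.mass t ht]; exact integral_neg_eq_self (fun x => v x t) volume

theorem lower (S : FSol m Φ v vx vt) (hm : -1 < m) :
    ∃ c : ℝ, 0 < c ∧ ∀ t : ℝ, 1 ≤ t → c * t ^ (-(1 / (m + 1))) ≤ ⨆ x : ℝ, v x t := by
  obtain ⟨X1, C1, hX1, hC1, h1⟩ := S.lower_tail hm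
  obtain ⟨X2, C2, hX2, hC2, h2⟩ := S.reflect.lower_tail hm
  obtain ⟨K, hK, hup⟩ := S.upper hm
  refine ⟨1 / (2 * (X1 + C1 + X2 + C2)), by positivity, fun t ht => ?_⟩
  have ht0 : 0 < t := by linarith
  have hm1 : 0 < m + 1 := by linarith
  obtain ⟨g, hg⟩ : ∃ g, g = t ^ (1 / (m + 1)) := ⟨_, rfl⟩
  have hg1 : 1 ≤ g := by rw [hg]; exact Real.one_le_rpow ht (by positivity)
  have h1 := h1 t ht
  have h2 := h2 t ht
  rw [Real.rpow_neg ht0.le]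
  rw [← hg] at h1 h2 ⊢
  set a := X1 + C1 * g with ha
  set b := X2 + C2 * g with hb
  have ha0 : 0 < a := by positivity
  have hb0 : 0 < b := by positivity
  have h3 : Hh (fun x t => v (-x) t) b t = ∫ x in Iic (-b), v x t := integral_comp_neg_Ioi b (fun x => v x t)
  rw [h3] at h2
  have h4 : (∫ x in Iic (-b), v x t) + Hh v (-b) t = 1 := by
    rw [← S.mass t ht0]
    exact intervalIntegral.integral_Iic_add_Ioi (S.int t ht0).integrableOn (S.int t ht0).integrableOn
  have h5 := S.H_sub ht0 (-b) a
  have hbdd : BddAbove (range fun x => v x t) := ⟨_, by rintro _ ⟨x, rfl⟩; exact hup t ht0 x⟩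
  set M := ⨆ x : ℝ, v x t with hM
  have h6 := intervalIntegral.integral_mono_on (a := -b) (b := a) (by linarith) (S.ii ht0 _ _)
    (intervalIntegrable_const (c := M)) (fun x _ => le_ciSup hbdd x)
  simp at h6
  have h7 : 1 / 2 ≤ (a + b) * M := by linarith
  have hM0 : 0 < M := lt_of_lt_of_le (S.pos 0 t ht0) (le_ciSup hbdd 0)
  have h8 : a + b ≤ (X1 + C1 + X2 + C2) * g := by nlinarith
  have h9 : 1 / 2 ≤ (X1 + C1 + X2 + C2) * g * M := h7.trans (mul_le_mul_of_nonneg_right h8 hM0.le)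
  rw [← div_eq_mul_inv, div_div, div_le_iff₀ (by positivity)]
  linarith

end FSol

theorem filtration_decay_rate
    (m : ℝ) (hm : -1 < m) (Φ : ℝ → ℝ)
    (hΦ : ∀ s : ℝ, Φ s = if m = 0 then Real.log s else s ^ m / m)
    (v : ℝ → ℝ → ℝ)
    (hnonneg : ∀ x t : ℝ, 0 ≤ v x t)
    (hpos : ∀ x t : ℝ, 0 < t → 0 < v x t)
    (hsmooth : ContDiffOn ℝ (⊤ : ℕ∞) (fun p : ℝ × ℝ => v p.1 p.2)
      ((Set.univ : Set ℝ) ×ˢ Set.Ioi 0))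
    (hpde : ∀ x t : ℝ, 0 < t →
      deriv (fun s => v x s) t = deriv (deriv (fun y => Φ (v y t))) x)
    (hmass : ∀ t : ℝ, 0 < t → ∫ x : ℝ, v x t = 1) :
    ∃ c₁ c₂ tstar : ℝ, 0 < c₁ ∧ c₁ ≤ c₂ ∧ 0 < tstar ∧
      ∀ t : ℝ, tstar ≤ t →
        (∀ x : ℝ, v x t ≤ c₂ * t ^ (-(1 / (m + 1)))) ∧
        c₁ * t ^ (-(1 / (m + 1))) ≤ ⨆ x : ℝ, v x t := by
  have hU : IsOpen ((Set.univ : Set ℝ) ×ˢ Set.Ioi (0:ℝ)) := isOpen_univ.prod isOpen_Ioi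
  set V : ℝ × ℝ → ℝ := fun p => v p.1 p.2 with hV
  have hdV := (contDiffOn_infty_iff_fderiv_of_isOpen hU).1 hsmooth
  have hVd : ∀ x t : ℝ, 0 < t → HasFDerivAt V (fderiv ℝ V (x, t)) (x, t) := fun x t ht =>
    (hdV.1.differentiableAt (hU.mem_nhds (show (x, t) ∈ _ from ⟨mem_univ _, ht⟩))).hasFDerivAt
  have hdx : ∀ x t : ℝ, 0 < t → HasDerivAt (fun y => v y t) (fderiv ℝ V (x, t) (1, 0)) x := by
    intro x t ht
    exact (hVd x t ht).comp_hasDerivAt x ((hasDerivAt_id x).prodMk (hasDerivAt_const x t))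
  have hdt : ∀ x t : ℝ, 0 < t → HasDerivAt (fun s => v x s) (fderiv ℝ V (x, t) (0, 1)) t := by
    intro x t ht
    exact (hVd x t ht).comp_hasDerivAt t ((hasDerivAt_const t x).prodMk (hasDerivAt_id t))
  have hdPhi : ∀ s : ℝ, 0 < s → HasDerivAt Φ (s ^ (m - 1)) s := by
    intro s hs
    by_cases h0 : m = 0
    · have : Φ = Real.log := by ext s; rw [hΦ, if_pos h0]
      rw [this, h0, zero_sub, Real.rpow_neg_one]
      exact Real.hasDerivAt_log hs.ne'
    · have : Φ = fun s => s ^ m / m := by ext s; rw [hΦ, if_neg h0]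
      rw [this]
      refine ((Real.hasDerivAt_rpow_const (p := m) (Or.inl hs.ne')).div_const m).congr_deriv ?_
      field_simp
  have hcxd : ContDiffOn ℝ (⊤ : ℕ∞) (fun p => fderiv ℝ V p (1, 0)) ((Set.univ : Set ℝ) ×ˢ Set.Ioi (0:ℝ)) :=
    hdV.2.clm_apply contDiffOn_const
  have hctd : ContDiffOn ℝ (⊤ : ℕ∞) (fun p => fderiv ℝ V p (0, 1)) ((Set.univ : Set ℝ) ×ˢ Set.Ioi (0:ℝ)) :=
    hdV.2.clm_apply contDiffOn_const
  have S : FSol m Φ v (fun x t => fderiv ℝ V (x, t) (1, 0)) (fun x t => fderiv ℝ V (x, t) (0, 1)) :=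
    { pos := hpos
      dPhi := hdPhi
      cv := hsmooth.continuousOn
      cx := hcxd.continuousOn
      ct := hctd.continuousOn
      dx := hdx
      dt := hdt
      dq := by
        intro x t ht
        have e : deriv (fun y => Φ (v y t)) = fun y => v y t ^ (m - 1) * fderiv ℝ V (y, t) (1, 0) := by
          ext y
          exact ((hdPhi _ (hpos y t ht)).comp y (hdx y t ht)).deriv
        have hp := hpde x t ht
        rw [(hdt x t ht).deriv, e] at hp
        rw [hp]
        apply DifferentiableAt.hasDerivAt
        apply DifferentiableAt.mul
        · exact (hdx x t ht).differentiableAt.rpow_const (Or.inl (hpos x t ht).ne')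
        · have h1 : DifferentiableAt ℝ (fun p => fderiv ℝ V p (1, 0)) (x, t) :=
            (hcxd.differentiableOn (by simp)).differentiableAt (hU.mem_nhds ⟨mem_univ _, ht⟩)
          exact DifferentiableAt.comp (g := fun p => fderiv ℝ V p (1, 0)) (f := fun y : ℝ => (y, t)) x h1 (by fun_prop)
      int := by
        intro t ht
        by_contra h
        have := hmass t ht
        rw [integral_undef h] at this
        norm_num at this
      mass := hmass }
  obtain ⟨K, hK, hup⟩ := S.upper hm
  obtain ⟨c, hc, hlow⟩ := S.lower hm
  refine ⟨c, max c K, 1, hc, le_max_left _ _, one_pos, fun t ht => ⟨fun x => ?_, hlow t ht⟩⟩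
  have ht0 : 0 < t := by linarith
  exact (hup t ht0 x).trans (mul_le_mul_of_nonneg_right (le_max_right _ _) (Real.rpow_nonneg ht0.le _))
end
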